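/- Let p, q : Fin n → EuclideanSpace ℝ (Fin d) be injective families whose values are exactly the extreme points of P := convexHull ℝ (Set.range p) and Q := convexHull ℝ (Set.range q) respectively, and assume P and Q are combinatorially equivalent with compatible labelling. If (1) 0 ∈ interior Q; (2) ‖q i − q j‖ ≤ ‖p i − p j‖ for every edge (i,j) of P; (3) ‖p i‖ ≤ ‖q i‖ for all i; then there exists a linear isometry equivalence T : EuclideanSpace ℝ (Fin d) ≃ₗᵢ EuclideanSpace ℝ (Fin d) with T (p i) = q i for all i. -/

import Mathlib

/-- For `i ≠ j`, the pair `(i,j)` is an edge of the polytope `convexHull ℝ (Set.range p)`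
if the closed segment between `p i` and `p j` is an extreme subset of it. -/
def IsEdge {n d : ℕ} (p : Fin n → EuclideanSpace ℝ (Fin d)) (i j : Fin n) : Prop :=
  i ≠ j ∧ IsExtreme ℝ (convexHull ℝ (Set.range p)) (segment ℝ (p i) (p j))

/-- Two polytopes with labelled vertices are combinatorially equivalent with compatible
labelling if for every `S ⊆ Fin n`, `convexHull ℝ (p '' S)` is an extreme subset of the
first polytope exactly when `convexHull ℝ (q '' S)` is an extreme subset of the second. -/
def CombEquiv {n d : ℕ} (p q : Fin n → EuclideanSpace ℝ (Fin d)) : Prop :=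
  ∀ S : Set (Fin n),
    IsExtreme ℝ (convexHull ℝ (Set.range p)) (convexHull ℝ (p '' S)) ↔
    IsExtreme ℝ (convexHull ℝ (Set.range q)) (convexHull ℝ (q '' S))

section ModulePL
open MeasureTheory Set
open scoped Pointwise

theorem bm_one_compact {A B C : Set ℝ} (hA : IsCompact A) (hB : IsCompact B)
    (hAn : A.Nonempty) (hBn : B.Nonempty)
    (h : ∀ a ∈ A, ∀ b ∈ B, (a + b) / 2 ∈ C) :
    volume A + volume B ≤ 2 * volume C := by
  set x := sSup A
  set y := sInf B
  have hx : x ∈ A := hA.sSup_mem hAn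
  have hy : y ∈ B := hB.sInf_mem hBn
  have hA' : volume ((fun a => (1/2:ℝ) • a + y/2) '' A) = volume A / 2 := by
    have : (fun a => (1/2:ℝ) • a + y/2) '' A = (fun a => a + y/2) '' ((1/2:ℝ) • A) := by
      rw [← Set.image_smul, Set.image_image]
    rw [this, Set.image_add_right, measure_preimage_add_right, Measure.addHaar_smul]
    simp [ENNReal.div_eq_inv_mul]
  have hB' : volume ((fun b => (1/2:ℝ) • b + x/2) '' B) = volume B / 2 := by
    have : (fun a => (1/2:ℝ) • a + x/2) '' B = (fun a => a + x/2) '' ((1/2:ℝ) • B) := by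
      rw [← Set.image_smul, Set.image_image]
    rw [this, Set.image_add_right, measure_preimage_add_right, Measure.addHaar_smul]
    simp [ENNReal.div_eq_inv_mul]
  have hd : AEDisjoint volume ((fun a => (1/2:ℝ) • a + y/2) '' A)
      ((fun b => (1/2:ℝ) • b + x/2) '' B) := by
    refine measure_mono_null (t := {(x+y)/2}) ?_ (by simp)
    rintro z ⟨⟨a, ha, rfl⟩, ⟨b, hb, hab⟩⟩
    have h1 : a ≤ x := le_csSup hA.bddAbove ha
    have h2 : y ≤ b := csInf_le hB.bddBelow hb
    simp only [smul_eq_mul] at hab ⊢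
    simp only [mem_singleton_iff]
    linarith
  have hm : MeasurableSet ((fun b => (1/2:ℝ) • b + x/2) '' B) :=
    (hB.image (by fun_prop)).measurableSet
  have hs : ((fun a => (1/2:ℝ) • a + y/2) '' A) ∪ ((fun b => (1/2:ℝ) • b + x/2) '' B) ⊆ C := by
    rintro z (⟨a, ha, rfl⟩ | ⟨b, hb, rfl⟩)
    · have := h a ha y hy
      convert this using 1
      simp; ring
    · have := h x hx b hb
      convert this using 1
      simp; ring
  have := measure_mono (μ := volume) hs
  rw [measure_union₀ hm.nullMeasurableSet hd, hA', hB'] at this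
  calc volume A + volume B = 2 * (volume A / 2 + volume B / 2) := by
        rw [mul_add, ENNReal.mul_div_cancel (by simp) (by simp), ENNReal.mul_div_cancel (by simp) (by simp)]
    _ ≤ _ := by gcongr

theorem bm_one {A B C : Set ℝ} (hA : MeasurableSet A) (hB : MeasurableSet B)
    (hAn : A.Nonempty) (hBn : B.Nonempty)
    (h : ∀ a ∈ A, ∀ b ∈ B, (a + b) / 2 ∈ C) :
    volume A + volume B ≤ 2 * volume C := by
  obtain ⟨a0, ha0⟩ := hAn
  obtain ⟨b0, hb0⟩ := hBn
  rw [hA.measure_eq_iSup_isCompact, hB.measure_eq_iSup_isCompact]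
  simp only [ENNReal.iSup_add, ENNReal.add_iSup]
  have key : ∀ K, K ⊆ A → IsCompact K → ∀ K', K' ⊆ B → IsCompact K' →
      volume K + volume K' ≤ 2 * volume C := by
    intro K hK hKc K' hK' hKc'
    have := bm_one_compact (A := insert a0 K) (B := insert b0 K') (C := C) (hKc.insert a0) (hKc'.insert b0)
      (by simp) (by simp) (fun a ha b hb => h a ?_ b ?_)
    · refine le_trans ?_ this
      gcongr <;> simp
    · rcases ha with rfl | ha
      exacts [ha0, hK ha]
    · rcases hb with rfl | hb
      exacts [hb0, hK' hb]
  have aux : ∀ (s : Set ℝ) (c d : ENNReal), True := by simp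
  by_cases hC : volume C = ⊤
  · simp [hC]
  have e1 : ∀ K, K ⊆ A → IsCompact K → volume K + (⨆ K', ⨆ (_ : K' ⊆ B), ⨆ (_ : IsCompact K'), volume K')
      ≤ 2 * volume C := by
    intro K h1 h2
    rw [← hB.measure_eq_iSup_isCompact]
    have hfin : volume K ≠ ⊤ := h2.measure_lt_top.ne
    have : volume B ≤ 2 * volume C - volume K := by
      rw [hB.measure_eq_iSup_isCompact]
      refine iSup_le fun K' => iSup_le fun h3 => iSup_le fun h4 => ?_
      refine ENNReal.le_sub_of_add_le_left hfin (key K h1 h2 K' h3 h4)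
    calc volume K + volume B ≤ volume K + (2 * volume C - volume K) := by gcongr
      _ = _ := add_tsub_cancel_of_le ((le_self_add).trans (key K h1 h2 ∅ (by simp) (by simp)))
  have hBfin : volume B ≠ ⊤ := by
    have := e1 ∅ (by simp) (by simp)
    rw [← hB.measure_eq_iSup_isCompact] at this
    simp at this
    exact ne_top_of_le_ne_top (ENNReal.mul_ne_top (by simp) hC) this
  have : volume A ≤ 2 * volume C - volume B := by
    rw [hA.measure_eq_iSup_isCompact]
    refine iSup_le fun K' => iSup_le fun h3 => iSup_le fun h4 => ?_
    refine ENNReal.le_sub_of_add_le_right hBfin ?_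
    have := e1 K' h3 h4
    rwa [← hB.measure_eq_iSup_isCompact] at this
  have h5 : volume A + volume B ≤ 2 * volume C := by
    calc volume A + volume B ≤ (2 * volume C - volume B) + volume B := by gcongr
      _ = _ := tsub_add_cancel_of_le (by
        have := e1 ∅ (by simp) (by simp)
        rw [← hB.measure_eq_iSup_isCompact] at this
        simpa using this)
  rw [hA.measure_eq_iSup_isCompact, hB.measure_eq_iSup_isCompact] at h5
  simpa only [ENNReal.iSup_add, ENNReal.add_iSup] using h5

theorem pl_one {f g m : ℝ → ℝ} (hf : Measurable f) (hg : Measurable g) (hm : Measurable m)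
    (hf0 : 0 ≤ f) (hg0 : 0 ≤ g) (hm0 : 0 ≤ m) (hfb : BddAbove (range f)) (hgb : BddAbove (range g))
    (hfi : Integrable f) (hgi : Integrable g) (hmi : Integrable m)
    (h : ∀ s t, f s * g t ≤ m ((s + t) / 2) ^ 2) :
    (∫ s, f s) * (∫ s, g s) ≤ (∫ s, m s) ^ 2 := by
  set A := sSup (range f)
  set B := sSup (range g)
  have hfA : ∀ s, f s ≤ A := fun s => le_csSup hfb ⟨s, rfl⟩
  have hgB : ∀ s, g s ≤ B := fun s => le_csSup hgb ⟨s, rfl⟩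
  have hA0 : 0 ≤ A := (hf0 0).trans (hfA 0)
  have hB0 : 0 ≤ B := (hg0 0).trans (hgB 0)
  rcases hA0.eq_or_lt with hA | hA
  · have : f = 0 := by
      ext s; exact le_antisymm ((hfA s).trans hA.symm.le) (hf0 s)
    simp [this]; positivity
  rcases hB0.eq_or_lt with hB | hB
  · have : g = 0 := by
      ext s; exact le_antisymm ((hgB s).trans hB.symm.le) (hg0 s)
    simp [this]; positivity
  set r := Real.sqrt (A * B)
  have hr : 0 < r := Real.sqrt_pos.mpr (by positivity)
  have hr2 : r ^ 2 = A * B := Real.sq_sqrt (by positivity)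
  have key : ∀ t : ℝ, 0 < t → volume {s | t < f s / A} + volume {s | t < g s / B} ≤
      2 * volume {s | t < m s / r} := by
    intro t ht
    by_cases ht1 : t < 1
    · apply bm_one
      · exact measurableSet_lt measurable_const (hf.div_const _)
      · exact measurableSet_lt measurable_const (hg.div_const _)
      · obtain ⟨_, ⟨s, rfl⟩, hs⟩ := exists_lt_of_lt_csSup (b := t * A) (range_nonempty f) (by
          change t * A < A; nlinarith)
        exact ⟨s, by simpa [lt_div_iff₀ hA] using hs⟩
      · obtain ⟨_, ⟨s, rfl⟩, hs⟩ := exists_lt_of_lt_csSup (b := t * B) (range_nonempty g) (by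
          change t * B < B; nlinarith)
        exact ⟨s, by simpa [lt_div_iff₀ hB] using hs⟩
      · intro a ha b hb
        simp only [mem_setOf_eq, lt_div_iff₀ hA, lt_div_iff₀ hB, lt_div_iff₀ hr] at ha hb ⊢
        refine lt_of_pow_lt_pow_left₀ 2 (hm0 _) (lt_of_lt_of_le ?_ (h a b))
        rw [mul_pow, hr2]
        calc t ^ 2 * (A * B) = (t * A) * (t * B) := by ring
          _ < f a * g b := by
            apply mul_lt_mul'' ha hb <;> positivity
    · have e1 : {s | t < f s / A} = ∅ := by
        ext s; simp only [mem_setOf_eq, mem_empty_iff_false, iff_false, not_lt]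
        exact (div_le_one_of_le₀ (hfA s) hA.le).trans (not_lt.mp ht1)
      have e2 : {s | t < g s / B} = ∅ := by
        ext s; simp only [mem_setOf_eq, mem_empty_iff_false, iff_false, not_lt]
        exact (div_le_one_of_le₀ (hgB s) hB.le).trans (not_lt.mp ht1)
      simp [e1, e2]
  have nn1 : 0 ≤ᵐ[volume] fun s => f s / A := Filter.Eventually.of_forall fun s => div_nonneg (hf0 s) hA.le
  have nn2 : 0 ≤ᵐ[volume] fun s => g s / B := Filter.Eventually.of_forall fun s => div_nonneg (hg0 s) hB.le
  have nn3 : 0 ≤ᵐ[volume] fun s => m s / r := Filter.Eventually.of_forall fun s => div_nonneg (hm0 s) hr.le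
  have L : ENNReal.ofReal (∫ s, f s / A) + ENNReal.ofReal (∫ s, g s / B) ≤ 2 * ENNReal.ofReal (∫ s, m s / r) := by
    rw [ofReal_integral_eq_lintegral_ofReal (hfi.div_const _) nn1,
      ofReal_integral_eq_lintegral_ofReal (hgi.div_const _) nn2,
      ofReal_integral_eq_lintegral_ofReal (hmi.div_const _) nn3,
      lintegral_eq_lintegral_meas_lt _ nn1 (hf.div_const _).aemeasurable,
      lintegral_eq_lintegral_meas_lt _ nn2 (hg.div_const _).aemeasurable,
      lintegral_eq_lintegral_meas_lt _ nn3 (hm.div_const _).aemeasurable,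
      ← lintegral_const_mul' _ _ (by simp)]
    rw [← lintegral_add_left]
    · exact setLIntegral_mono' measurableSet_Ioi fun t ht => key t ht
    · apply Antitone.measurable
      intro a b hab
      exact measure_mono fun s hs => lt_of_le_of_lt hab hs
  have i1 : 0 ≤ ∫ s, f s := integral_nonneg hf0
  have i2 : 0 ≤ ∫ s, g s := integral_nonneg hg0
  have i3 : 0 ≤ ∫ s, m s := integral_nonneg hm0
  simp only [integral_div] at L
  rw [← ENNReal.ofReal_add (by positivity) (by positivity),
    show (2 : ENNReal) = ENNReal.ofReal 2 by simp, ← ENNReal.ofReal_mul (by norm_num),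
    ENNReal.ofReal_le_ofReal_iff (by positivity)] at L
  set a := ∫ s, f s
  set b := ∫ s, g s
  set c := ∫ s, m s
  have h1 : (a / A) * (b / B) ≤ (c / r) ^ 2 := by
    have : 0 ≤ a / A := by positivity
    have : 0 ≤ b / B := by positivity
    nlinarith [sq_nonneg (a / A - b / B)]
  rw [div_pow, hr2, div_mul_div_comm, div_le_div_iff_of_pos_right (by positivity)] at h1
  exact h1

end ModulePL

section ModuleVol1
open MeasureTheory Set Filter Topology
open scoped Pointwise

universe u

section Slice
variable {X : Type u} [NormedAddCommGroup X] [NormedSpace ℝ X] [FiniteDimensional ℝ X]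
  [MeasurableSpace X] [BorelSpace X]

/-- The splitting of a space along a functional. -/
noncomputable def splitEquiv (f : X →L[ℝ] ℝ) (a : X) (ha : f a = 1) :
    (ℝ × LinearMap.ker f.toLinearMap) ≃ₗ[ℝ] X where
  toFun y := y.1 • a + (y.2 : X)
  map_add' x y := by simp [add_smul]; abel
  map_smul' c x := by simp [mul_smul]
  invFun x := (f x, ⟨x - f x • a, by simp [ha]⟩)
  left_inv y := by
    have : f (y.2 : X) = 0 := y.2.2
    ext <;> simp [ha, this]
  right_inv x := by simp

theorem exists_slice (μ : Measure X) [μ.IsAddHaarMeasure] (f : X →L[ℝ] ℝ) (a : X) (ha : f a = 1) :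
    ∃ ν : Measure (LinearMap.ker f.toLinearMap), ν.IsAddHaarMeasure ∧
      ∀ A, MeasurableSet A → μ A = ∫⁻ s : ℝ, ν {z | s • a + (z : X) ∈ A} := by
  set e := (splitEquiv f a ha).toContinuousLinearEquiv
  set ν0 : Measure (LinearMap.ker f.toLinearMap) := Measure.addHaar
  have : ((volume : Measure ℝ).prod ν0).IsAddHaarMeasure := inferInstance
  set μ' := ((volume : Measure ℝ).prod ν0).map e
  have hμ' : μ'.IsAddHaarMeasure := e.isAddHaarMeasure_map _
  set c := Measure.addHaarScalarFactor μ μ'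
  have hc : μ = c • μ' := Measure.isAddLeftInvariant_eq_smul _ _
  have hc0 : c ≠ 0 := (Measure.addHaarScalarFactor_pos_of_isAddHaarMeasure μ μ').ne'
  refine ⟨c • ν0, Measure.IsAddHaarMeasure.nnreal_smul _ hc0, ?_⟩
  intro A hA
  have hme : MeasurableSet (e ⁻¹' A) := e.continuous.measurable hA
  have h1 : μ A = c * μ' A := by
    conv_lhs => rw [hc]
    rw [Measure.smul_apply]; rfl
  rw [h1, Measure.map_apply e.continuous.measurable hA, Measure.prod_apply hme,
    ← lintegral_const_mul]
  · rfl
  · exact measurable_measure_prodMk_left hme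

theorem slice_real (μ : Measure X) [μ.IsAddHaarMeasure] (f : X →L[ℝ] ℝ) (a : X) (ha : f a = 1)
    (ν : Measure (LinearMap.ker f.toLinearMap)) [ν.IsAddHaarMeasure]
    (hν : ∀ A, MeasurableSet A → μ A = ∫⁻ s : ℝ, ν {z | s • a + (z : X) ∈ A})
    {A : Set X} (hA : MeasurableSet A) (hb : Bornology.IsBounded A) :
    Measurable (fun s : ℝ => ν.real {z | s • a + (z : X) ∈ A}) ∧
    Integrable (fun s : ℝ => ν.real {z | s • a + (z : X) ∈ A}) ∧
    BddAbove (range (fun s : ℝ => ν.real {z | s • a + (z : X) ∈ A})) ∧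
    μ.real A = ∫ s : ℝ, ν.real {z | s • a + (z : X) ∈ A} := by
  set e := (splitEquiv f a ha).toContinuousLinearEquiv
  have hme : MeasurableSet (e ⁻¹' A) := e.continuous.measurable hA
  have hm : Measurable (fun s : ℝ => ν {z | s • a + (z : X) ∈ A}) :=
    measurable_measure_prodMk_left hme
  obtain ⟨R, hR⟩ := hb.subset_closedBall 0
  have hsub : ∀ s : ℝ, {z : LinearMap.ker f.toLinearMap | s • a + (z : X) ∈ A} ⊆
      Metric.closedBall 0 (R + ‖f‖ * R * ‖a‖) := by
    intro s z hz
    have h1 : ‖s • a + (z : X)‖ ≤ R := by simpa using hR hz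
    have h2 : f (s • a + (z:X)) = s := by
      have : f (z : X) = 0 := z.2
      simp [ha, this]
    have h3 : |s| ≤ ‖f‖ * R := by
      have := f.le_opNorm (s • a + (z:X))
      rw [h2] at this
      exact this.trans (by gcongr)
    have h4 : ‖(z:X)‖ ≤ ‖s • a + (z:X)‖ + ‖s • a‖ := by
      have := norm_sub_le (s • a + (z:X)) (s • a)
      simpa using this
    have : ‖s • a‖ ≤ ‖f‖ * R * ‖a‖ := by
      rw [norm_smul]; gcongr; exact h3
    simp only [Metric.mem_closedBall, dist_zero_right]
    change ‖(z:X)‖ ≤ _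
    linarith
  have hlt : ∀ s : ℝ, ν {z | s • a + (z : X) ∈ A} < ⊤ := fun s =>
    (measure_mono (hsub s)).trans_lt measure_closedBall_lt_top
  have hAf : μ A < ⊤ := hb.measure_lt_top
  refine ⟨hm.ennreal_toReal, ?_, ?_, ?_⟩
  · refine integrable_toReal_of_lintegral_ne_top hm.aemeasurable ?_
    rw [← hν A hA]; exact hAf.ne
  · refine ⟨ν.real (Metric.closedBall 0 (R + ‖f‖ * R * ‖a‖)), ?_⟩
    rintro _ ⟨s, rfl⟩
    exact measureReal_mono (hsub s) measure_closedBall_lt_top.ne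
  · rw [measureReal_def, hν A hA]
    exact (integral_toReal hm.aemeasurable (ae_of_all _ hlt)).symm

end Slice

theorem exists_functional {X : Type u} [NormedAddCommGroup X] [NormedSpace ℝ X]
    [Nontrivial X] : ∃ (f : X →L[ℝ] ℝ) (a : X), f a = 1 := by
  obtain ⟨x, hx⟩ := exists_ne (0 : X)
  obtain ⟨f, hf⟩ := SeparatingDual.exists_eq_one (R := ℝ) hx
  exact ⟨f, x, hf⟩

theorem ker_finrank_lt {X : Type u} [NormedAddCommGroup X] [NormedSpace ℝ X]
    [FiniteDimensional ℝ X] (f : X →L[ℝ] ℝ) (a : X) (ha : f a = 1) :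
    Module.finrank ℝ (LinearMap.ker f.toLinearMap) < Module.finrank ℝ X := by
  apply Submodule.finrank_lt
  intro h
  have : a ∈ LinearMap.ker f.toLinearMap := h ▸ Submodule.mem_top
  have h2 : f a = 0 := this
  rw [ha] at h2; norm_num at h2

/-- multiplicative Brunn–Minkowski inequality for midpoints -/
theorem bm_mul (m : ℕ) : ∀ {X : Type u} [NormedAddCommGroup X] [NormedSpace ℝ X]
    [FiniteDimensional ℝ X] [MeasurableSpace X] [BorelSpace X]
    (μ : Measure X) [μ.IsAddHaarMeasure] (_ : Module.finrank ℝ X = m) {A B C : Set X}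
    (_ : MeasurableSet A) (_ : MeasurableSet B) (_ : MeasurableSet C)
    (_ : Bornology.IsBounded A) (_ : Bornology.IsBounded B) (_ : Bornology.IsBounded C)
    (_ : ∀ a ∈ A, ∀ b ∈ B, (1/2 : ℝ) • (a + b) ∈ C),
    μ.real A * μ.real B ≤ (μ.real C) ^ 2 := by
  induction m using Nat.strong_induction_on with
  | _ m ih =>
  intro X _ _ _ _ _ μ _ hm A B C hA hB hC hAb hBb hCb h
  rcases subsingleton_or_nontrivial X with hX | hX
  · rcases A.eq_empty_or_nonempty with rfl | ⟨a, ha⟩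
    · simp
    rcases B.eq_empty_or_nonempty with rfl | ⟨b, hb⟩
    · simp
    have hc := h a ha b hb
    have e : ∀ (S : Set X) x, x ∈ S → S = univ := fun S x hx => by
      ext y; simp [Subsingleton.elim y x, hx]
    rw [e A a ha, e B b hb, e C _ hc]; exact (sq _).ge
  · obtain ⟨f, a, ha⟩ := exists_functional (X := X)
    obtain ⟨ν, hνH, hν⟩ := exists_slice μ f a ha
    obtain ⟨a1, a2, a3, a4⟩ := slice_real μ f a ha ν hν hA hAb
    obtain ⟨b1, b2, b3, b4⟩ := slice_real μ f a ha ν hν hB hBb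
    obtain ⟨c1, c2, c3, c4⟩ := slice_real μ f a ha ν hν hC hCb
    rw [a4, b4, c4]
    have hcont : ∀ s : ℝ, Measurable (fun z : LinearMap.ker f.toLinearMap => s • a + (z : X)) := by
      intro s; fun_prop
    have hbd : ∀ (S : Set X) (s : ℝ), Bornology.IsBounded S →
        Bornology.IsBounded {z : LinearMap.ker f.toLinearMap | s • a + (z : X) ∈ S} := by
      intro S s hS
      obtain ⟨R, hR⟩ := hS.subset_closedBall 0
      refine (Metric.isBounded_closedBall (x := 0) (r := R + ‖s • a‖)).subset ?_
      intro z hz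
      have h1 : ‖s • a + (z : X)‖ ≤ R := by simpa using hR hz
      have h4 : ‖(z:X)‖ ≤ ‖s • a + (z:X)‖ + ‖s • a‖ := by
        have := norm_sub_le (s • a + (z:X)) (s • a)
        simpa using this
      simp only [Metric.mem_closedBall, dist_zero_right]
      change ‖(z:X)‖ ≤ _
      linarith
    refine pl_one a1 b1 c1 (fun _ => by positivity) (fun _ => by positivity)
      (fun _ => by positivity) a3 b3 a2 b2 c2 ?_
    intro s t
    refine ih _ (hm ▸ ker_finrank_lt f a ha) ν rfl (hcont s hA) (hcont t hB) (hcont _ hC)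
      (hbd _ _ hAb) (hbd _ _ hBb) (hbd _ _ hCb) ?_
    intro z hz w hw
    have := h _ hz _ hw
    simp only [Set.mem_ofPred_eq] 
    convert this using 1
    simp only [Submodule.coe_smul, Submodule.coe_add]
    module

end ModuleVol1

section ModuleVol2
open MeasureTheory Set Filter Topology

set_option linter.unusedSectionVars false

universe u v

section Defs
variable {X : Type u} [NormedAddCommGroup X] [NormedSpace ℝ X] {ι : Type v}

/-- The polyhedron cut out by the functionals `ℓ i`. -/
def poly (ℓ : ι → X →L[ℝ] ℝ) (h : ι → ℝ) : Set X := {x | ∀ i, ℓ i x ≤ h i}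

/-- The functionals positively span. -/
def PS (ℓ : ι → X →L[ℝ] ℝ) : Prop := ∀ x, (∀ i, ℓ i x ≤ 0) → x = 0

/-- a normalizing vector -/
noncomputable def av (f : X →L[ℝ] ℝ) : X := by
  classical exact if h : ∃ a, f a = 1 then h.choose else 0

theorem av_spec {f : X →L[ℝ] ℝ} (hf : f ≠ 0) : f (av f) = 1 := by
  have h : ∃ a, f a = 1 := by
    by_contra hc
    push Not at hc
    apply hf
    ext x
    by_contra hx
    have hx' : f x ≠ 0 := hx
    exact hc ((f x)⁻¹ • x) (by simp [hx'])
  rw [av, dif_pos h]; exact h.choose_spec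

/-- restriction to the hyperplane -/
noncomputable def res (ℓ : ι → X →L[ℝ] ℝ) (i : ι) :
    ι → (LinearMap.ker (ℓ i).toLinearMap) →L[ℝ] ℝ :=
  fun j => (ℓ j).comp (LinearMap.ker (ℓ i).toLinearMap).subtypeL

/-- right-hand side of the facet -/
noncomputable def Rh [DecidableEq ι] (ℓ : ι → X →L[ℝ] ℝ) (i : ι) (h : ι → ℝ) : ι → ℝ :=
  fun j => if j = i then 1 else h j - h i * ℓ j (av (ℓ i))

/-- first genericity condition -/
def G0 (ℓ : ι → X →L[ℝ] ℝ) (h : ι → ℝ) : Prop := ∀ i, ℓ i = 0 → h i ≠ 0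
/-- second genericity condition -/
def G1 [DecidableEq ι] (ℓ : ι → X →L[ℝ] ℝ) (h : ι → ℝ) : Prop :=
  G0 ℓ h ∧ ∀ i, ℓ i ≠ 0 → G0 (res ℓ i) (Rh ℓ i h)
/-- third genericity condition -/
def G2 [DecidableEq ι] (ℓ : ι → X →L[ℝ] ℝ) (h : ι → ℝ) : Prop :=
  G0 ℓ h ∧ ∀ i, ℓ i ≠ 0 → G1 (res ℓ i) (Rh ℓ i h)

theorem G2.g1 [DecidableEq ι] {ℓ : ι → X →L[ℝ] ℝ} {h : ι → ℝ} (H : G2 ℓ h) : G1 ℓ h :=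
  ⟨H.1, fun i hi => (H.2 i hi).1⟩

@[simp] theorem res_apply (ℓ : ι → X →L[ℝ] ℝ) (i j : ι) (z) : res ℓ i j z = ℓ j (z : X) := rfl

theorem res_self (ℓ : ι → X →L[ℝ] ℝ) (i : ι) : res ℓ i i = 0 := by
  ext z; exact z.2

theorem PS.res {ℓ : ι → X →L[ℝ] ℝ} (H : PS ℓ) (i : ι) : PS (res ℓ i) := by
  intro z hz
  exact Subtype.ext (H z hz)

theorem Rh_continuous [DecidableEq ι] (ℓ : ι → X →L[ℝ] ℝ) (i : ι) : Continuous (Rh ℓ i) := by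
  refine continuous_pi fun j => ?_
  unfold Rh
  split_ifs <;> fun_prop

theorem Rh_update [DecidableEq ι] (ℓ : ι → X →L[ℝ] ℝ) (i : ι) (h : ι → ℝ) (s : ℝ) :
    Rh ℓ i (Function.update h i s) = fun j => if j = i then 1 else h j - s * ℓ j (av (ℓ i)) := by
  ext j
  by_cases hj : j = i <;> simp [Rh, hj]

theorem G0.eventually [Finite ι] {ℓ : ι → X →L[ℝ] ℝ} {h : ι → ℝ} (H : G0 ℓ h) :
    ∀ᶠ h' in 𝓝 h, G0 ℓ h' := by
  refine eventually_all.2 fun i => ?_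
  by_cases hi : ℓ i = 0
  · have : ∀ᶠ h' : ι → ℝ in 𝓝 h, h' i ≠ 0 :=
      (continuous_apply i).continuousAt.eventually_ne (H i hi)
    filter_upwards [this] with h' hh _ using hh
  · filter_upwards with h' hh using absurd hh hi

theorem G1.eventually [DecidableEq ι] [Finite ι] {ℓ : ι → X →L[ℝ] ℝ} {h : ι → ℝ} (H : G1 ℓ h) :
    ∀ᶠ h' in 𝓝 h, G1 ℓ h' := by
  refine H.1.eventually.and (eventually_all.2 fun i => ?_)
  by_cases hi : ℓ i = 0
  · filter_upwards with h' hh using absurd hi hh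
  · filter_upwards [(Rh_continuous ℓ i).continuousAt.eventually (H.2 i hi).eventually] with h' hh _
      using hh

theorem G2.eventually [DecidableEq ι] [Finite ι] {ℓ : ι → X →L[ℝ] ℝ} {h : ι → ℝ} (H : G2 ℓ h) :
    ∀ᶠ h' in 𝓝 h, G2 ℓ h' := by
  refine H.1.eventually.and (eventually_all.2 fun i => ?_)
  by_cases hi : ℓ i = 0
  · filter_upwards with h' hh using absurd hi hh
  · filter_upwards [(Rh_continuous ℓ i).continuousAt.eventually (H.2 i hi).eventually] with h' hh _
      using hh

theorem poly_closed (ℓ : ι → X →L[ℝ] ℝ) (h : ι → ℝ) : IsClosed (poly ℓ h) := by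
  simp only [poly, Set.ofPred_forall]
  exact isClosed_iInter fun i => isClosed_le (by fun_prop) continuous_const

theorem poly_mono (ℓ : ι → X →L[ℝ] ℝ) {h h' : ι → ℝ} (H : h ≤ h') : poly ℓ h ⊆ poly ℓ h' :=
  fun _ hx i => (hx i).trans (H i)

variable [FiniteDimensional ℝ X]

theorem PS.bound [Fintype ι] {ℓ : ι → X →L[ℝ] ℝ} (H : PS ℓ) :
    ∃ c > 0, ∀ x, c * ‖x‖ ≤ ∑ i, max (ℓ i x) 0 := by
  have hcont : Continuous (fun x => ∑ i, max (ℓ i x) 0) := by fun_prop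
  rcases (Metric.sphere (0:X) 1).eq_empty_or_nonempty with he | hne
  · refine ⟨1, one_pos, fun x => ?_⟩
    have : x = 0 := by
      by_contra hx
      have : (‖x‖⁻¹ • x) ∈ Metric.sphere (0:X) 1 := by
        simp [norm_smul, hx]
      rw [he] at this; exact this
    simp [this]
  · obtain ⟨x0, hx0, hmin⟩ := (isCompact_sphere (0:X) 1).exists_isMinOn hne hcont.continuousOn
    have hx0n : ‖x0‖ = 1 := by simpa using hx0
    have hpos : 0 < ∑ i, max (ℓ i x0) 0 := by
      by_contra hc
      push Not at hc
      have h0 : ∑ i, max (ℓ i x0) 0 = 0 :=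
        le_antisymm hc (Finset.sum_nonneg fun i _ => le_max_right _ _)
      rw [Finset.sum_eq_zero_iff_of_nonneg (fun i _ => le_max_right _ _)] at h0
      have : x0 = 0 := H x0 fun i => by
        have := h0 i (Finset.mem_univ _)
        rw [← this]; exact le_max_left _ _
      rw [this] at hx0n; simp at hx0n
    refine ⟨_, hpos, fun x => ?_⟩
    by_cases hx : x = 0
    · simp [hx]
    have hxn : 0 < ‖x‖ := norm_pos_iff.2 hx
    have hmem : (‖x‖⁻¹ • x) ∈ Metric.sphere (0:X) 1 := by
      simp [norm_smul, hx]
    have := hmin hmem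
    simp only [Set.mem_ofPred_eq] at this
    have e : ∑ i, max (ℓ i (‖x‖⁻¹ • x)) 0 = ‖x‖⁻¹ * ∑ i, max (ℓ i x) 0 := by
      rw [Finset.mul_sum]
      refine Finset.sum_congr rfl fun i _ => ?_
      rw [map_smul, smul_eq_mul, mul_max_of_nonneg _ _ (by positivity), mul_zero]
    rw [e] at this
    calc _ ≤ (‖x‖⁻¹ * ∑ i, max (ℓ i x) 0) * ‖x‖ := by gcongr
      _ = _ := by field_simp

theorem PS.bounded [Fintype ι] {ℓ : ι → X →L[ℝ] ℝ} (H : PS ℓ) (h : ι → ℝ) :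
    Bornology.IsBounded (poly ℓ h) := by
  obtain ⟨c, hc, hb⟩ := H.bound
  refine (Metric.isBounded_closedBall (x := 0) (r := (∑ i, max (h i) 0) / c)).subset ?_
  intro x hx
  simp only [Metric.mem_closedBall, dist_zero_right]
  rw [le_div_iff₀ hc, mul_comm]
  refine (hb x).trans (Finset.sum_le_sum fun i _ => ?_)
  exact max_le_max (hx i) le_rfl

theorem PS.compact [Fintype ι] {ℓ : ι → X →L[ℝ] ℝ} (H : PS ℓ) (h : ι → ℝ) :
    IsCompact (poly ℓ h) :=
  Metric.isCompact_of_isClosed_isBounded (poly_closed ℓ h) (H.bounded h)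

variable [MeasurableSpace X] [BorelSpace X]

/-- volume of the polyhedron -/
noncomputable def Vol (μ : Measure X) (ℓ : ι → X →L[ℝ] ℝ) (h : ι → ℝ) : ℝ := μ.real (poly ℓ h)

/-- measure on the kernel -/
noncomputable def nu (μ : Measure X) [μ.IsAddHaarMeasure] (f : X →L[ℝ] ℝ) :
    Measure (LinearMap.ker f.toLinearMap) := by
  classical exact
  if h : f ≠ 0 then (exists_slice μ f (av f) (av_spec h)).choose else Measure.addHaar

instance nu_haar (μ : Measure X) [μ.IsAddHaarMeasure] (f : X →L[ℝ] ℝ) :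
    (nu μ f).IsAddHaarMeasure := by
  unfold nu
  split_ifs with h
  · exact (exists_slice μ f (av f) (av_spec h)).choose_spec.1
  · infer_instance

theorem nu_slice (μ : Measure X) [μ.IsAddHaarMeasure] {f : X →L[ℝ] ℝ} (hf : f ≠ 0)
    (A) (hA : MeasurableSet A) :
    μ A = ∫⁻ s : ℝ, nu μ f {z | s • av f + (z : X) ∈ A} := by
  unfold nu
  rw [dif_pos hf]
  exact (exists_slice μ f (av f) (av_spec hf)).choose_spec.2 A hA

open Classical in
/-- facet volumes -/
noncomputable def alpha [DecidableEq ι] (μ : Measure X) [μ.IsAddHaarMeasure] (ℓ : ι → X →L[ℝ] ℝ)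
    (i : ι) (h : ι → ℝ) : ℝ :=
  if ℓ i = 0 then 0 else Vol (nu μ (ℓ i)) (res ℓ i) (Rh ℓ i h)

variable (μ : Measure X) [μ.IsAddHaarMeasure]

theorem Vol_nonneg (ℓ : ι → X →L[ℝ] ℝ) (h : ι → ℝ) : 0 ≤ Vol μ ℓ h := measureReal_nonneg

theorem alpha_nonneg [DecidableEq ι] (ℓ : ι → X →L[ℝ] ℝ) (i : ι) (h : ι → ℝ) :
    0 ≤ alpha μ ℓ i h := by
  unfold alpha; split_ifs
  · exact le_rfl
  · exact Vol_nonneg _ _ _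

theorem poly_fin [Fintype ι] {ℓ : ι → X →L[ℝ] ℝ} (H : PS ℓ) (h : ι → ℝ) :
    μ (poly ℓ h) ≠ ⊤ := (H.bounded h).measure_lt_top.ne

theorem Vol_mono [Fintype ι] {ℓ : ι → X →L[ℝ] ℝ} (H : PS ℓ) {h h' : ι → ℝ} (hh : h ≤ h') :
    Vol μ ℓ h ≤ Vol μ ℓ h' := measureReal_mono (poly_mono ℓ hh) (poly_fin μ H h')

theorem hyp_null (f : X →L[ℝ] ℝ) (hf : f ≠ 0) (c : ℝ) : μ {x | f x = c} = 0 := by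
  by_cases hc : ∃ x0, f x0 = c
  · obtain ⟨x0, hx0⟩ := hc
    have : {x | f x = c} = (fun x => x + (- x0)) ⁻¹' (LinearMap.ker f.toLinearMap : Set X) := by
      ext x
      simp [hx0, ← sub_eq_add_neg, sub_eq_zero]
    rw [this, measure_preimage_add_right]
    apply Measure.addHaar_submodule
    intro h
    apply hf
    ext x
    have : x ∈ LinearMap.ker f.toLinearMap := h ▸ Submodule.mem_top
    exact this
  · have : {x | f x = c} = ∅ := by
      ext x; simp; exact fun h => hc ⟨x, h⟩
    rw [this]; simp

/-- general continuity of volumes, allowing the functionals to vary too -/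
theorem Vol_tendsto [Fintype ι] {κ : Type*} {l : Filter κ} [l.IsCountablyGenerated]
    {ℓ : ι → X →L[ℝ] ℝ} {h : ι → ℝ} (H0 : G0 ℓ h)
    (L : κ → ι → X →L[ℝ] ℝ) (hh : κ → ι → ℝ)
    (hL : ∀ i x, Tendsto (fun k => L k i x) l (𝓝 (ℓ i x))) (hhh : Tendsto hh l (𝓝 h))
    {B : Set X} (hB : Bornology.IsBounded B) (hBm : MeasurableSet B)
    (hsub : ∀ᶠ k in l, poly (L k) (hh k) ⊆ B) :
    Tendsto (fun k => Vol μ (L k) (hh k)) l (𝓝 (Vol μ ℓ h)) := by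
  have e : ∀ (ℓ : ι → X →L[ℝ] ℝ) h, Vol μ ℓ h = ∫ x, (poly ℓ h).indicator (fun _ => (1:ℝ)) x ∂μ := by
    intro ℓ h
    rw [integral_indicator (poly_closed ℓ h).measurableSet]
    simp [Vol]
  simp only [e]
  refine tendsto_integral_filter_of_dominated_convergence (B.indicator fun _ => (1:ℝ)) ?_ ?_ ?_ ?_
  · filter_upwards with k
    exact (measurable_const.indicator (poly_closed _ _).measurableSet).aestronglyMeasurable
  · filter_upwards [hsub] with k hk
    filter_upwards with x
    simp only [indicator]
    split_ifs with h1 h2 h2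
    · simp
    · exact absurd (hk h1) h2
    · simp
    · simp
  · rw [integrable_indicator_iff hBm]
    exact integrableOn_const hB.measure_lt_top.ne
  · have hnull : ∀ i, ∀ᵐ x ∂μ, ℓ i x ≠ h i := by
      intro i
      by_cases hi : ℓ i = 0
      · filter_upwards with x
        rw [hi]; exact (H0 i hi).symm
      · have := hyp_null μ (ℓ i) hi (h i)
        rw [ae_iff]; simpa using this
    filter_upwards [ae_all_iff.2 hnull] with x hx
    by_cases hxp : x ∈ poly ℓ h
    · have : ∀ᶠ k in l, x ∈ poly (L k) (hh k) := by
        refine eventually_all.2 fun i => ?_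
        have h1 : ℓ i x < h i := lt_of_le_of_ne (hxp i) (hx i)
        filter_upwards [(hL i x).eventually_lt ((continuous_apply i).continuousAt.tendsto.comp hhh) h1]
          with k hk using hk.le
      refine tendsto_const_nhds.congr' ?_
      filter_upwards [this] with k hk
      simp [hxp, hk]
    · obtain ⟨i, hi⟩ : ∃ i, h i < ℓ i x := by
        by_contra hc; push Not at hc; exact hxp hc
      have : ∀ᶠ k in l, x ∉ poly (L k) (hh k) := by
        filter_upwards [((continuous_apply i).continuousAt.tendsto.comp hhh).eventually_lt (hL i x) hi]
          with k hk hk2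
        exact absurd (hk2 i) (not_le.2 hk)
      refine tendsto_const_nhds.congr' ?_
      filter_upwards [this] with k hk
      simp [hxp, hk]

theorem Vol_continuousAt [Fintype ι] {ℓ : ι → X →L[ℝ] ℝ} (H : PS ℓ) {h : ι → ℝ} (H0 : G0 ℓ h) :
    ContinuousAt (Vol μ ℓ) h := by
  refine Vol_tendsto μ H0 (fun _ => ℓ) id (fun _ _ => tendsto_const_nhds) tendsto_id
    (H.bounded (fun i => h i + 1)) (poly_closed _ _).measurableSet ?_
  have : ∀ᶠ h' : ι → ℝ in 𝓝 h, ∀ i, h' i < h i + 1 := eventually_all.2 fun i =>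
    (continuous_apply i).continuousAt.eventually_lt continuousAt_const (by simp)
  filter_upwards [this] with h' hh
  exact poly_mono ℓ fun i => (hh i).le

theorem alpha_continuousAt [DecidableEq ι] [Fintype ι] {ℓ : ι → X →L[ℝ] ℝ} (H : PS ℓ) {h : ι → ℝ}
    (H1 : G1 ℓ h) (i : ι) : ContinuousAt (alpha μ ℓ i) h := by
  unfold alpha
  by_cases hi : ℓ i = 0
  · simp only [hi, if_true]; exact continuousAt_const
  · simp only [hi, if_false]
    exact ContinuousAt.comp (f := Rh ℓ i) (Vol_continuousAt _ (H.res i) (H1.2 i hi))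
      (Rh_continuous ℓ i).continuousAt

theorem slice_poly [DecidableEq ι] (ℓ : ι → X →L[ℝ] ℝ) (h : ι → ℝ) {i : ι} (hi : ℓ i ≠ 0) (τ s : ℝ) :
    {z : LinearMap.ker (ℓ i).toLinearMap | s • av (ℓ i) + (z:X) ∈ poly ℓ (Function.update h i τ)} =
    {z | s ≤ τ ∧ z ∈ poly (res ℓ i) (Rh ℓ i (Function.update h i s))} := by
  ext z
  have hz : ℓ i (z:X) = 0 := z.2
  simp only [Set.mem_ofPred_eq, poly, Rh_update]
  constructor
  · intro H
    refine ⟨by simpa [av_spec hi, hz] using H i, fun j => ?_⟩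
    by_cases hj : j = i
    · subst hj; simp [res_apply, hz]
    · have := H j
      simp only [hj, map_add, map_smul, smul_eq_mul, res_apply, if_false, ne_eq, not_false_eq_true,
        Function.update_of_ne] at this ⊢
      linarith
  · rintro ⟨h1, h2⟩ j
    by_cases hj : j = i
    · subst hj; simpa [av_spec hi, hz] using h1
    · have := h2 j
      simp only [hj, map_add, map_smul, smul_eq_mul, res_apply, if_false, ne_eq, not_false_eq_true,
        Function.update_of_ne] at this ⊢
      linarith

theorem Vol_update [DecidableEq ι] [Fintype ι] {ℓ : ι → X →L[ℝ] ℝ} (H : PS ℓ) (h : ι → ℝ) {i : ι}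
    (hi : ℓ i ≠ 0) (τ : ℝ) :
    IntegrableOn (fun s => alpha μ ℓ i (Function.update h i s)) (Iic τ) ∧
    Vol μ ℓ (Function.update h i τ) = ∫ s in Iic τ, alpha μ ℓ i (Function.update h i s) := by
  obtain ⟨-, h2, -, h4⟩ := slice_real μ (ℓ i) (av (ℓ i)) (av_spec hi) (nu μ (ℓ i)) (nu_slice μ hi)
    (poly_closed ℓ (Function.update h i τ)).measurableSet (H.bounded _)
  have e : (fun s : ℝ => (nu μ (ℓ i)).real {z : LinearMap.ker (ℓ i).toLinearMap |
      s • av (ℓ i) + (z:X) ∈ poly ℓ (Function.update h i τ)}) =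
      (Iic τ).indicator (fun s => alpha μ ℓ i (Function.update h i s)) := by
    ext s
    rw [slice_poly ℓ h hi]
    by_cases hs : s ≤ τ
    · simp [hs, alpha, hi, Vol, Set.ofPred_mem_eq]
    · simp [hs]
  rw [e] at h2 h4
  refine ⟨(integrable_indicator_iff measurableSet_Iic).1 h2, ?_⟩
  rw [Vol, h4, integral_indicator measurableSet_Iic]

theorem Vol_partial [DecidableEq ι] [Fintype ι] {ℓ : ι → X →L[ℝ] ℝ} (H : PS ℓ) {h : ι → ℝ}
    (H1 : G1 ℓ h) (i : ι) :
    HasDerivAt (fun t => Vol μ ℓ (Function.update h i t)) (alpha μ ℓ i h) (h i) := by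
  by_cases hi : ℓ i = 0
  · have hne := H1.1 i hi
    have ha : alpha μ ℓ i h = 0 := by simp [alpha, hi]
    rw [ha]
    refine (hasDerivAt_const (h i) (Vol μ ℓ h)).congr_of_eventuallyEq ?_
    have hsame : ∀ t : ℝ, (0 ≤ t ↔ 0 ≤ h i) → Vol μ ℓ (Function.update h i t) = Vol μ ℓ h := by
      intro t ht
      unfold Vol
      congr 1
      ext x
      simp only [poly, Set.mem_ofPred_eq]
      refine forall_congr' fun j => ?_
      by_cases hj : j = i
      · subst hj; simp [hi, ht]
      · simp [hj]
    rcases lt_or_gt_of_ne hne with hlt | hlt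
    · filter_upwards [gt_mem_nhds hlt] with t ht
      exact hsame t (by constructor <;> intro <;> linarith)
    · filter_upwards [lt_mem_nhds hlt] with t ht
      exact hsame t (by constructor <;> intro <;> linarith)
  · set γ := fun s => alpha μ ℓ i (Function.update h i s) with hγ
    have hInt : ∀ τ, IntegrableOn γ (Iic τ) := fun τ => (Vol_update μ H h hi τ).1
    have hc : ContinuousAt γ (h i) := by
      have : ContinuousAt (alpha μ ℓ i) (Function.update h i (h i)) := by
        rw [Function.update_eq_self]; exact alpha_continuousAt μ H H1 i
      exact ContinuousAt.comp (f := fun s => Function.update h i s) this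
        (by fun_prop)
    have e : (fun t => Vol μ ℓ (Function.update h i t)) =
        fun t => (∫ s in Iic (h i), γ s) + ∫ s in (h i)..t, γ s := by
      ext t
      rw [(Vol_update μ H h hi t).2, ← intervalIntegral.integral_Iic_sub_Iic (hInt _) (hInt _)]
      ring
    have hγi : γ (h i) = alpha μ ℓ i h := by simp [hγ]
    rw [e, ← hγi]
    refine HasDerivAt.const_add _ (intervalIntegral.integral_hasDerivAt_right ?_ ?_ hc)
    · simp
    · refine AEStronglyMeasurable.stronglyMeasurableAtFilter_of_mem
        (hInt (h i + 1)).aestronglyMeasurable (Iic_mem_nhds (by linarith))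

end Defs

end ModuleVol2

section ModuleVol3
open MeasureTheory Set Filter Topology Asymptotics
set_option linter.unusedSectionVars false

universe u v

theorem hasFDerivAt_of_partials {ι : Type v} [Fintype ι] [DecidableEq ι] (f : (ι → ℝ) → ℝ)
    (g : ι → (ι → ℝ) → ℝ) (h : ι → ℝ)
    (hd : ∀ᶠ h' in 𝓝 h, ∀ i, HasDerivAt (fun t => f (Function.update h' i t)) (g i h') (h' i))
    (hc : ∀ i, ContinuousAt (g i) h) :
    HasFDerivAt f (∑ i, g i h • (ContinuousLinearMap.proj i : (ι → ℝ) →L[ℝ] ℝ)) h := by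
  have key : ∀ s : Finset ι, (fun x : ι → ℝ => f (s.piecewise x h) - f h -
      ∑ i ∈ s, g i h * (x i - h i)) =o[𝓝 h] (fun x => x - h) := by
    intro s
    induction s using Finset.induction_on with
    | empty => simp
    | insert i s hi ih =>
      have hstep : (fun x : ι → ℝ => f ((insert i s).piecewise x h) - f (s.piecewise x h) -
          g i h * (x i - h i)) =o[𝓝 h] (fun x => x - h) := by
        rw [isLittleO_iff]
        intro ε hε
        have h1 : ∀ᶠ h' in 𝓝 h, HasDerivAt (fun t => f (Function.update h' i t)) (g i h') (h' i) ∧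
            ‖g i h' - g i h‖ ≤ ε := by
          have : ∀ᶠ h' in 𝓝 h, dist (g i h') (g i h) < ε := Metric.tendsto_nhds.1 (hc i) ε hε
          filter_upwards [hd, this] with h' a b
          exact ⟨a i, by rw [← dist_eq_norm]; exact b.le⟩
        obtain ⟨δ, hδ, hball⟩ := Metric.eventually_nhds_iff.1 h1
        filter_upwards [Metric.ball_mem_nhds h hδ] with x hx
        rw [Metric.mem_ball] at hx
        set y := s.piecewise x h with hy
        have hyi : y i = h i := by simp [hy, hi]
        have hins : (insert i s).piecewise x h = Function.update y i (x i) := by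
          rw [Finset.piecewise_insert]
        have hy0 : y = Function.update y i (h i) := by rw [← hyi]; simp
        have hdist : ∀ t ∈ uIcc (h i) (x i), dist (Function.update y i t) h < δ := by
          intro t ht
          refine lt_of_le_of_lt ((dist_pi_le_iff dist_nonneg).2 fun j => ?_) hx
          by_cases hj : j = i
          · subst hj
            rw [Function.update_self]
            calc dist t (h j) ≤ dist (x j) (h j) := by
                  rw [Real.dist_eq, Real.dist_eq]
                  exact abs_sub_left_of_mem_uIcc ht
              _ ≤ _ := dist_le_pi_dist x h j
          · rw [Function.update_of_ne hj, hy]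
            by_cases hjs : j ∈ s
            · simp only [hjs, Finset.piecewise_eq_of_mem]; exact dist_le_pi_dist x h j
            · simp [hjs]
        have hmv := Convex.norm_image_sub_le_of_norm_hasDerivWithin_le
          (f := fun t => f (Function.update y i t) - g i h * t)
          (f' := fun t => g i (Function.update y i t) - g i h) (s := uIcc (h i) (x i))
          (C := ε) (x := h i) (y := x i) ?_ ?_ (convex_uIcc _ _) left_mem_uIcc right_mem_uIcc
        · rw [hins]
          have e : f (Function.update y i (x i)) - f y - g i h * (x i - h i) =
              (f (Function.update y i (x i)) - g i h * x i) -
              (f (Function.update y i (h i)) - g i h * h i) := by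
            rw [← hy0]; ring
          rw [e]
          refine hmv.trans ?_
          gcongr
          exact norm_le_pi_norm (x - h) i
        · intro t ht
          obtain ⟨a, -⟩ := hball (hdist t ht)
          simp only [Function.update_idem, Function.update_self] at a
          have := (a.fun_sub ((hasDerivAt_id t).const_mul (g i h))).hasDerivWithinAt (s := uIcc (h i) (x i))
          simpa using this
        · intro t ht
          exact (hball (hdist t ht)).2
      refine (hstep.add ih).congr_left fun x => ?_
      rw [Finset.sum_insert hi]; ring
  rw [hasFDerivAt_iff_isLittleO]
  refine (key Finset.univ).congr_left fun x => ?_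
  simp

section
variable {X : Type u} [NormedAddCommGroup X] [NormedSpace ℝ X] {ι : Type v} [Fintype ι]
  [DecidableEq ι] [FiniteDimensional ℝ X] [MeasurableSpace X] [BorelSpace X]
  (μ : Measure X) [μ.IsAddHaarMeasure]

theorem Vol_hasFDerivAt {ℓ : ι → X →L[ℝ] ℝ} (H : PS ℓ) {h : ι → ℝ} (H1 : G1 ℓ h) :
    HasFDerivAt (Vol μ ℓ) (∑ i, alpha μ ℓ i h • (ContinuousLinearMap.proj i : (ι → ℝ) →L[ℝ] ℝ)) h :=
  hasFDerivAt_of_partials _ (alpha μ ℓ) h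
    (by filter_upwards [H1.eventually] with h' hh i using Vol_partial μ H hh i)
    (fun i => alpha_continuousAt μ H H1 i)

open Classical in
/-- codimension two face volumes -/
noncomputable def beta (ℓ : ι → X →L[ℝ] ℝ) (i j : ι) (h : ι → ℝ) : ℝ :=
  if ℓ i = 0 then 0 else alpha (nu μ (ℓ i)) (res ℓ i) j (Rh ℓ i h)

/-- The Hessian matrix -/
noncomputable def Mm (ℓ : ι → X →L[ℝ] ℝ) (i j : ι) (h : ι → ℝ) : ℝ :=
  if j = i then - ∑ l, beta μ ℓ i l h * ℓ l (av (ℓ i)) else beta μ ℓ i j h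

theorem beta_nonneg (ℓ : ι → X →L[ℝ] ℝ) (i j : ι) (h : ι → ℝ) : 0 ≤ beta μ ℓ i j h := by
  unfold beta; split_ifs
  · exact le_rfl
  · exact alpha_nonneg _ _ _ _

theorem beta_self (ℓ : ι → X →L[ℝ] ℝ) (i : ι) (h : ι → ℝ) : beta μ ℓ i i h = 0 := by
  unfold beta; split_ifs
  · rfl
  · simp [alpha, res_self]

theorem Mm_sum (ℓ : ι → X →L[ℝ] ℝ) (i : ι) (h k : ι → ℝ) :
    ∑ j, Mm μ ℓ i j h * k j = ∑ j, beta μ ℓ i j h * (k j - k i * ℓ j (av (ℓ i))) := by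
  have : ∀ j, Mm μ ℓ i j h * k j = beta μ ℓ i j h * k j +
      if j = i then (- ∑ l, beta μ ℓ i l h * ℓ l (av (ℓ i))) * k i else 0 := by
    intro j
    unfold Mm
    split_ifs with hj
    · subst hj; rw [beta_self]; ring
    · ring
  simp only [this, Finset.sum_add_distrib, Finset.sum_ite_eq', Finset.mem_univ, if_true, mul_sub,
    Finset.sum_sub_distrib]
  rw [neg_mul, ← sub_eq_add_neg, Finset.sum_mul]
  congr 1
  exact Finset.sum_congr rfl fun j _ => by ring

theorem Rh_hasFDerivAt (ℓ : ι → X →L[ℝ] ℝ) (i : ι) (h : ι → ℝ) :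
    HasFDerivAt (Rh ℓ i) (ContinuousLinearMap.pi fun j => if j = i then 0 else
      (ContinuousLinearMap.proj j - ℓ j (av (ℓ i)) • ContinuousLinearMap.proj i :
        (ι → ℝ) →L[ℝ] ℝ)) h := by
  rw [hasFDerivAt_pi']
  intro j
  rw [ContinuousLinearMap.proj_pi]
  unfold Rh
  split_ifs with hj
  · exact hasFDerivAt_const _ _
  · have h1 : HasFDerivAt (fun x : ι → ℝ => x j) (ContinuousLinearMap.proj j : (ι → ℝ) →L[ℝ] ℝ) h :=
      hasFDerivAt_apply j h
    have h2 : HasFDerivAt (fun x : ι → ℝ => x i) (ContinuousLinearMap.proj i : (ι → ℝ) →L[ℝ] ℝ) h :=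
      hasFDerivAt_apply i h
    exact h1.sub (h2.mul_const _)

theorem alpha_hasFDerivAt {ℓ : ι → X →L[ℝ] ℝ} (H : PS ℓ) {h : ι → ℝ} (H2 : G2 ℓ h) (i : ι) :
    HasFDerivAt (alpha μ ℓ i)
      (∑ j, Mm μ ℓ i j h • (ContinuousLinearMap.proj j : (ι → ℝ) →L[ℝ] ℝ)) h := by
  by_cases hi : ℓ i = 0
  · have e : alpha μ ℓ i = fun _ => 0 := by ext h; simp [alpha, hi]
    rw [e]
    convert hasFDerivAt_const (0:ℝ) h using 1
    refine Finset.sum_eq_zero fun j _ => ?_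
    have : Mm μ ℓ i j h = 0 := by simp [Mm, beta, hi]
    rw [this, zero_smul]
  · have e : alpha μ ℓ i = fun h => Vol (nu μ (ℓ i)) (res ℓ i) (Rh ℓ i h) := by
      ext h; simp [alpha, hi]
    have hV := Vol_hasFDerivAt (nu μ (ℓ i)) (H.res i) (H2.2 i hi)
    have := hV.comp h (Rh_hasFDerivAt ℓ i h)
    rw [e]
    refine this.congr_fderiv ?_
    ext1 k
    simp only [sum_apply, ContinuousLinearMap.comp_apply,
      smul_apply, ContinuousLinearMap.proj_apply, smul_eq_mul, 
      ContinuousLinearMap.pi_apply]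
    rw [Mm_sum]
    refine Finset.sum_congr rfl fun j _ => ?_
    by_cases hj : j = i
    · subst hj; simp [beta_self]
    · simp [beta, hi, hj]; left; ring

theorem Mm_symm {ℓ : ι → X →L[ℝ] ℝ} (H : PS ℓ) {h : ι → ℝ} (H2 : G2 ℓ h) (i j : ι) :
    Mm μ ℓ i j h = Mm μ ℓ j i h := by
  have h1 : ∀ᶠ y in 𝓝 h, HasFDerivAt (Vol μ ℓ)
      (∑ i, alpha μ ℓ i y • (ContinuousLinearMap.proj i : (ι → ℝ) →L[ℝ] ℝ)) y := by
    filter_upwards [H2.g1.eventually] with y hy using Vol_hasFDerivAt μ H hy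
  have h2 : HasFDerivAt (fun y => ∑ i, alpha μ ℓ i y • (ContinuousLinearMap.proj i : (ι → ℝ) →L[ℝ] ℝ))
      (∑ i, (∑ j, Mm μ ℓ i j h • (ContinuousLinearMap.proj j : (ι → ℝ) →L[ℝ] ℝ)).smulRight
        (ContinuousLinearMap.proj i : (ι → ℝ) →L[ℝ] ℝ)) h := by
    refine HasFDerivAt.fun_sum fun i _ => ?_
    exact HasFDerivAt.smul_const (alpha_hasFDerivAt μ H H2 i) (ContinuousLinearMap.proj i : (ι → ℝ) →L[ℝ] ℝ)
  have := second_derivative_symmetric_of_eventually h1 h2 (Pi.single j 1) (Pi.single i 1)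
  simpa [sum_apply, Pi.single_apply] using this

end

end ModuleVol3

section ModuleHess
open MeasureTheory Set Filter Topology
set_option linter.unusedSectionVars false

universe u v

theorem second_deriv_le {f f' : ℝ → ℝ} {c : ℝ} (hf : ∀ᶠ t in 𝓝 0, HasDerivAt f (f' t) t)
    (hf' : HasDerivAt f' c 0) (hm : ∀ᶠ t in 𝓝 0, f t * f (-t) ≤ f 0 ^ 2) :
    c * f 0 ≤ f' 0 ^ 2 := by
  set g := fun t => f t * f (-t) with hg
  have hneg : Tendsto (fun t : ℝ => -t) (𝓝 0) (𝓝 0) := by simpa using (continuous_neg.tendsto (0:ℝ))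
  have hg1 : ∀ᶠ t in 𝓝 0, HasDerivAt g (f' t * f (-t) + f t * (f' (-t) * (-1))) t := by
    filter_upwards [hf, hneg.eventually hf] with t h1 h2
    exact h1.mul (HasDerivAt.comp t h2 (hasDerivAt_neg t))
  have hf0 : HasDerivAt f (f' 0) 0 := hf.self_of_nhds
  have hfn : HasDerivAt (fun t => f (-t)) (f' 0 * (-1)) 0 := by
    have : HasDerivAt f (f' 0) (-0) := by simpa using hf0
    exact HasDerivAt.comp 0 this (hasDerivAt_neg 0)
  have hfn' : HasDerivAt (fun t => f' (-t)) (c * (-1)) 0 := by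
    have : HasDerivAt f' c (-0) := by simpa using hf'
    exact HasDerivAt.comp 0 this (hasDerivAt_neg 0)
  have hdg : deriv g =ᶠ[𝓝 0] fun t => f' t * f (-t) + f t * (f' (-t) * (-1)) := by
    filter_upwards [hg1] with t h using h.deriv
  have h2 : HasDerivAt (deriv g) (2 * (c * f 0 - f' 0 ^ 2)) 0 := by
    refine HasDerivAt.congr_of_eventuallyEq ?_ hdg
    refine ((hf'.fun_mul hfn).fun_add (hf0.fun_mul (hfn'.mul_const (-1)))).congr_deriv ?_
    simp only [neg_zero]; ring
  by_contra hc
  push Not at hc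
  have hpos : 0 < deriv (deriv g) 0 := by rw [h2.deriv]; linarith
  have hz : deriv g 0 = 0 := by rw [hdg.self_of_nhds]; simp; ring
  have hmin := isLocalMin_of_deriv_deriv_pos hpos hz hg1.self_of_nhds.continuousAt
  have hconst : g =ᶠ[𝓝 0] fun _ => g 0 := by
    filter_upwards [hmin, hm] with t h1 h2
    refine le_antisymm ?_ h1
    simp only [hg, neg_zero]; nlinarith [h2]
  have h3 : deriv (deriv g) 0 = 0 := by
    have : deriv g =ᶠ[𝓝 0] deriv (fun _ => g 0) := hconst.deriv
    rw [this.deriv_eq]; simp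
  linarith

section
variable {X : Type u} [NormedAddCommGroup X] [NormedSpace ℝ X] {ι : Type v} [Fintype ι]
  [DecidableEq ι] [FiniteDimensional ℝ X] [MeasurableSpace X] [BorelSpace X]
  (μ : Measure X) [μ.IsAddHaarMeasure]

theorem Vol_mid {ℓ : ι → X →L[ℝ] ℝ} (H : PS ℓ) (h h' : ι → ℝ) :
    Vol μ ℓ h * Vol μ ℓ h' ≤ Vol μ ℓ ((1/2:ℝ) • (h + h')) ^ 2 := by
  refine bm_mul _ μ rfl (poly_closed _ _).measurableSet (poly_closed _ _).measurableSet
    (poly_closed _ _).measurableSet (H.bounded _) (H.bounded _) (H.bounded _) ?_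
  intro a ha b hb i
  have h1 := ha i
  have h2 := hb i
  simp only [map_smul, map_add, smul_eq_mul, Pi.smul_apply, Pi.add_apply]
  linarith

theorem Vol_translate (ℓ : ι → X →L[ℝ] ℝ) (h : ι → ℝ) (z : X) :
    Vol μ ℓ (fun i => h i + ℓ i z) = Vol μ ℓ h := by
  have : poly ℓ (fun i => h i + ℓ i z) = (fun x => x + (-z)) ⁻¹' poly ℓ h := by
    ext x
    simp only [poly, mem_preimage, Set.mem_ofPred_eq]
    refine forall_congr' fun i => ?_
    simp only [map_add, map_neg]
    constructor <;> intro <;> linarith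
  unfold Vol
  rw [this, measureReal_def, measure_preimage_add_right]; rfl

open scoped Pointwise in
theorem Vol_scale (ℓ : ι → X →L[ℝ] ℝ) (h : ι → ℝ) {c : ℝ} (hc : 0 < c) :
    Vol μ ℓ (c • h) = c ^ (Module.finrank ℝ X) * Vol μ ℓ h := by
  have : poly ℓ (c • h) = c • poly ℓ h := by
    ext x
    rw [Set.mem_smul_set_iff_inv_smul_mem₀ hc.ne']
    simp only [poly, Set.mem_ofPred_eq]
    refine forall_congr' fun i => ?_
    simp only [map_smul, smul_eq_mul, Pi.smul_apply]
    rw [inv_mul_le_iff₀ hc]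
  unfold Vol
  rw [this, measureReal_def, Measure.addHaar_smul, ENNReal.toReal_mul,
    ENNReal.toReal_ofReal (abs_nonneg _), abs_of_pos (pow_pos hc _)]; rfl

theorem Vol_line {ℓ : ι → X →L[ℝ] ℝ} (H : PS ℓ) {h k : ι → ℝ} {t : ℝ} (H1 : G1 ℓ (h + t • k)) :
    HasDerivAt (fun t : ℝ => Vol μ ℓ (h + t • k)) (∑ i, alpha μ ℓ i (h + t • k) * k i) t := by
  have hl : HasDerivAt (fun t : ℝ => h + t • k) k t := by
    simpa using ((hasDerivAt_id t).smul_const k).const_add h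
  have := (Vol_hasFDerivAt μ H H1).comp_hasDerivAt t hl
  refine this.congr_deriv ?_
  simp

theorem alpha_line {ℓ : ι → X →L[ℝ] ℝ} (H : PS ℓ) {h k : ι → ℝ} {t : ℝ} (H2 : G2 ℓ (h + t • k))
    (i : ι) :
    HasDerivAt (fun t : ℝ => alpha μ ℓ i (h + t • k)) (∑ j, Mm μ ℓ i j (h + t • k) * k j) t := by
  have hl : HasDerivAt (fun t : ℝ => h + t • k) k t := by
    simpa using ((hasDerivAt_id t).smul_const k).const_add h
  have := (alpha_hasFDerivAt μ H H2 i).comp_hasDerivAt t hl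
  refine this.congr_deriv ?_
  simp

theorem line_tendsto (h k : ι → ℝ) : Tendsto (fun t : ℝ => h + t • k) (𝓝 0) (𝓝 h) := by
  have : Continuous (fun t : ℝ => h + t • k) := by fun_prop
  simpa using this.tendsto 0

theorem alpha_T {ℓ : ι → X →L[ℝ] ℝ} (H : PS ℓ) {h : ι → ℝ} (H1 : G1 ℓ h) (z : X) :
    ∑ i, alpha μ ℓ i h * ℓ i z = 0 := by
  have h1 := Vol_line μ H (h := h) (k := fun i => ℓ i z) (t := 0) (by simpa using H1)
  have e : (fun t : ℝ => Vol μ ℓ (h + t • fun i => ℓ i z)) = fun _ => Vol μ ℓ h := by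
    ext t
    rw [← Vol_translate μ ℓ h (t • z)]
    congr 1; ext i; simp
  rw [e] at h1
  simpa using h1.unique (hasDerivAt_const _ _)

theorem alpha_H {ℓ : ι → X →L[ℝ] ℝ} (H : PS ℓ) {h : ι → ℝ} (H1 : G1 ℓ h) :
    ∑ i, alpha μ ℓ i h * h i = Module.finrank ℝ X * Vol μ ℓ h := by
  have h1 := Vol_line μ H (h := h) (k := h) (t := 0) (by simpa using H1)
  have e : (fun t : ℝ => Vol μ ℓ (h + t • h)) =ᶠ[𝓝 0]
      fun t => (1 + t) ^ (Module.finrank ℝ X) * Vol μ ℓ h := by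
    filter_upwards [lt_mem_nhds (show (-1:ℝ) < 0 by norm_num)] with t ht
    rw [← Vol_scale μ ℓ h (by linarith : 0 < 1 + t)]
    congr 1; rw [add_smul, one_smul]
  have h2 : HasDerivAt (fun t : ℝ => (1 + t) ^ (Module.finrank ℝ X) * Vol μ ℓ h)
      (Module.finrank ℝ X * Vol μ ℓ h) 0 := by
    have := (((hasDerivAt_id (0:ℝ)).const_add 1).pow (Module.finrank ℝ X)).mul_const (Vol μ ℓ h)
    simpa using this
  simpa using h1.unique (h2.congr_of_eventuallyEq e)

theorem M_T {ℓ : ι → X →L[ℝ] ℝ} (H : PS ℓ) {h : ι → ℝ} (H2 : G2 ℓ h) (z : X) (i : ι) :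
    ∑ j, Mm μ ℓ i j h * ℓ j z = 0 := by
  have h1 : HasDerivAt (fun t : ℝ => ∑ j, alpha μ ℓ j (h + t • Pi.single i 1) * ℓ j z)
      (∑ j, (∑ l, Mm μ ℓ j l (h + (0:ℝ) • Pi.single i 1) * (Pi.single i 1 : ι → ℝ) l) * ℓ j z) 0 :=
    HasDerivAt.fun_sum fun j _ => (alpha_line μ H (by simpa using H2) j).mul_const _
  have e : (fun t : ℝ => ∑ j, alpha μ ℓ j (h + t • Pi.single i 1) * ℓ j z) =ᶠ[𝓝 0] fun _ => 0 := by
    filter_upwards [(line_tendsto h (Pi.single i 1)).eventually H2.g1.eventually] with t ht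
      using alpha_T μ H ht z
  have := h1.unique ((hasDerivAt_const _ _).congr_of_eventuallyEq e)
  rw [← this]
  refine Finset.sum_congr rfl fun j _ => ?_
  rw [Mm_symm μ H H2 i j]
  simp [Pi.single_apply]

theorem M_H {ℓ : ι → X →L[ℝ] ℝ} (H : PS ℓ) {h : ι → ℝ} (H2 : G2 ℓ h) (i : ι) :
    ∑ j, Mm μ ℓ i j h * h j = (Module.finrank ℝ X - 1) * alpha μ ℓ i h := by
  have hk : ∀ j, HasDerivAt (fun t : ℝ => (h + t • (Pi.single i 1 : ι → ℝ)) j)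
      ((Pi.single i 1 : ι → ℝ) j) 0 := by
    intro j
    simpa using ((hasDerivAt_id (0:ℝ)).mul_const ((Pi.single i 1 : ι → ℝ) j)).const_add (h j)
  have h1 : HasDerivAt (fun t : ℝ => ∑ j, alpha μ ℓ j (h + t • Pi.single i 1) *
      (h + t • (Pi.single i 1 : ι → ℝ)) j)
      (∑ j, ((∑ l, Mm μ ℓ j l (h + (0:ℝ) • Pi.single i 1) * (Pi.single i 1 : ι → ℝ) l) *
        (h + (0:ℝ) • (Pi.single i 1 : ι → ℝ)) j + 
        alpha μ ℓ j (h + (0:ℝ) • Pi.single i 1) * (Pi.single i 1 : ι → ℝ) j)) 0 :=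
    HasDerivAt.fun_sum fun j _ => (alpha_line μ H (by simpa using H2) j).mul (hk j)
  have e : (fun t : ℝ => ∑ j, alpha μ ℓ j (h + t • Pi.single i 1) *
      (h + t • (Pi.single i 1 : ι → ℝ)) j) =ᶠ[𝓝 0]
      fun t => Module.finrank ℝ X * Vol μ ℓ (h + t • Pi.single i 1) := by
    filter_upwards [(line_tendsto h (Pi.single i 1)).eventually H2.g1.eventually] with t ht
      using alpha_H μ H ht
  have h3 := (Vol_line μ H (h := h) (k := Pi.single i 1) (t := 0) (by simpa using H2.g1)).const_mul
    (Module.finrank ℝ X : ℝ)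
  have := h1.unique (h3.congr_of_eventuallyEq e)
  have e2 : ∑ j, Mm μ ℓ i j h * h j = ∑ j, Mm μ ℓ j i h * h j :=
    Finset.sum_congr rfl fun j _ => by rw [Mm_symm μ H H2 i j]
  rw [e2]
  simp [Pi.single_apply, Finset.sum_add_distrib] at this
  linarith

/-- second variation inequality -/
theorem M_le {ℓ : ι → X →L[ℝ] ℝ} (H : PS ℓ) {h : ι → ℝ} (H2 : G2 ℓ h) (k : ι → ℝ) :
    (∑ i, (∑ j, Mm μ ℓ i j h * k j) * k i) * Vol μ ℓ h ≤ (∑ i, alpha μ ℓ i h * k i) ^ 2 := by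
  have := second_deriv_le (f := fun t : ℝ => Vol μ ℓ (h + t • k))
    (f' := fun t => ∑ i, alpha μ ℓ i (h + t • k) * k i)
    (c := ∑ i, (∑ j, Mm μ ℓ i j h * k j) * k i) ?_ ?_ ?_
  · simpa using this
  · filter_upwards [(line_tendsto h k).eventually H2.g1.eventually] with t ht
      using Vol_line μ H ht
  · refine HasDerivAt.fun_sum fun i _ => ?_
    have := (alpha_line μ H (h := h) (k := k) (t := 0) (by simpa using H2) i).mul_const (k i)
    simpa using this
  · filter_upwards with t
    have := Vol_mid μ H (h + t • k) (h + (-t) • k)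
    have e : (1/2:ℝ) • (h + t • k + (h + (-t) • k)) = h := by module
    rw [e] at this
    simpa using this

theorem M_ker {ℓ : ι → X →L[ℝ] ℝ} (H : PS ℓ) {h : ι → ℝ} (H2 : G2 ℓ h) (hV : 0 < Vol μ ℓ h)
    (k : ι → ℝ) (hk : ∑ i, alpha μ ℓ i h * k i = 0)
    (hM : ∑ i, (∑ j, Mm μ ℓ i j h * k j) * k i = 0) (i : ι) :
    ∑ j, Mm μ ℓ i j h * k j = 0 := by
  set r := ∑ j, Mm μ ℓ i j h * k j with hr
  set e : ι → ℝ := Pi.single i 1 with he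
  set Q := ∑ i, (∑ j, Mm μ ℓ i j h * e j) * e i
  set A := ∑ i, alpha μ ℓ i h * e i
  have expand : ∀ ε : ℝ, (2 * ε * r + ε ^ 2 * Q) * Vol μ ℓ h ≤ ε ^ 2 * A ^ 2 := by
    intro ε
    have h1 := M_le μ H H2 (k + ε • e)
    have e1 : ∑ i, alpha μ ℓ i h * (k + ε • e) i = ε * A := by
      simp only [Pi.add_apply, Pi.smul_apply, smul_eq_mul, mul_add, Finset.sum_add_distrib, hk, A,
        Finset.mul_sum, zero_add]
      exact Finset.sum_congr rfl fun j _ => by ring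
    have c1 : ∑ i, (∑ j, Mm μ ℓ i j h * k j) * e i = r := by
      simp [he, Pi.single_apply, hr]
    have c2 : ∑ i, (∑ j, Mm μ ℓ i j h * e j) * k i = r := by
      rw [hr]
      refine Finset.sum_congr rfl fun j _ => ?_
      rw [Mm_symm μ H H2 i j]
      simp [he, Pi.single_apply]
    have e2 : ∑ i, (∑ j, Mm μ ℓ i j h * (k + ε • e) j) * (k + ε • e) i =
        (∑ i, (∑ j, Mm μ ℓ i j h * k j) * k i) + ε * (∑ i, (∑ j, Mm μ ℓ i j h * k j) * e i)
        + ε * (∑ i, (∑ j, Mm μ ℓ i j h * e j) * k i) + ε ^ 2 * Q := by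
      simp only [Q, Finset.mul_sum, ← Finset.sum_add_distrib]
      refine Finset.sum_congr rfl fun l _ => ?_
      have : ∑ j, Mm μ ℓ l j h * (k + ε • e) j =
          (∑ j, Mm μ ℓ l j h * k j) + ε * ∑ j, Mm μ ℓ l j h * e j := by
        rw [Finset.mul_sum, ← Finset.sum_add_distrib]
        refine Finset.sum_congr rfl fun j _ => ?_
        simp only [Pi.add_apply, Pi.smul_apply, smul_eq_mul]; ring
      rw [this]
      simp only [Pi.add_apply, Pi.smul_apply, smul_eq_mul]; ring
    rw [e1, e2, hM, c1, c2] at h1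
    linarith [h1, mul_pow ε A 2]
  by_contra hne
  set V := Vol μ ℓ h
  set B := |A ^ 2 - Q * V| + 1
  have hB : 0 < B := by positivity
  have hB2 : A ^ 2 - Q * V < B := by have := le_abs_self (A ^ 2 - Q * V); linarith
  have := expand (r * V / B)
  have h3 : 2 * (r * V / B) * r * V ≤ (r * V / B) ^ 2 * (A ^ 2 - Q * V) := by linarith
  have hp : 0 < (r * V) ^ 2 := by positivity
  have h4 : (r * V / B) ^ 2 * (A ^ 2 - Q * V) ≤ (r * V / B) ^ 2 * B := by gcongr
  have h5 : 2 * (r * V / B) * r * V = 2 * ((r * V) ^ 2 / B) := by ring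
  have h6 : (r * V / B) ^ 2 * B = (r * V) ^ 2 / B := by field_simp
  have h7 : 0 < (r * V) ^ 2 / B := by positivity
  linarith

/-- span lemma -/
theorem span_lemma {ℓ : ι → X →L[ℝ] ℝ} (H : PS ℓ) {h : ι → ℝ} (H1 : G1 ℓ h) (hV : 0 < Vol μ ℓ h)
    (z : X) (hz : ∀ j, 0 < alpha μ ℓ j h → ℓ j z = 0) : z = 0 := by
  classical
  set k : ι → ℝ := fun j => if 0 < alpha μ ℓ j h then 0 else 1 with hk
  have hk0 : 0 ≤ k := fun j => by simp only [hk]; split_ifs <;> simp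
  have hak : ∑ i, alpha μ ℓ i h * k i = 0 := by
    refine Finset.sum_eq_zero fun i _ => ?_
    simp only [hk]
    split_ifs with h1
    · simp
    · have := alpha_nonneg μ ℓ i h
      have : alpha μ ℓ i h = 0 := by linarith
      simp [this]
  set F := fun t : ℝ => Vol μ ℓ (h + t • k) with hF
  have hF0 : F 0 = Vol μ ℓ h := by simp [hF]
  have hFge : ∀ t, 0 ≤ t → F 0 ≤ F t := by
    intro t ht
    refine Vol_mono μ H ?_
    intro i
    have := mul_nonneg ht (hk0 i)
    simpa using this
  have hder : HasDerivAt F 0 0 := by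
    have := Vol_line μ H (h := h) (k := k) (t := 0) (by simpa using H1)
    simpa [hak] using this
  set U := fun t => Real.log (F t) - Real.log (F 0) with hU
  have hUder : HasDerivAt U 0 0 := by
    have := (hder.log (by rw [hF0]; exact hV.ne')).sub_const (Real.log (F 0))
    simpa [hU] using this
  have hstep : ∀ t, 0 ≤ t → U t ≤ 2 * U (t / 2) := by
    intro t ht
    have h1 := Vol_mid μ H (h + t • k) h
    have e : (1/2:ℝ) • (h + t • k + h) = h + (t/2) • k := by module
    rw [e] at h1
    have p0 : 0 < F 0 := hF0 ▸ hV
    have p1 : 0 < F t := p0.trans_le (hFge t ht)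
    have p2 : 0 < F (t/2) := p0.trans_le (hFge _ (by linarith))
    have h2 : F t * F 0 ≤ F (t/2) ^ 2 := by rw [hF0]; exact h1
    have h3 := Real.log_le_log (by positivity) h2
    rw [Real.log_mul p1.ne' p0.ne', Real.log_pow] at h3
    simp only [hU]
    push_cast at h3
    linarith
  have hiter : ∀ (n : ℕ) t, 0 ≤ t → U t ≤ 2 ^ n * U (t / 2 ^ n) := by
    intro n
    induction n with
    | zero => intro t _; simp
    | succ n ih =>
      intro t ht
      refine (ih t ht).trans ?_
      have := hstep (t / 2 ^ n) (by positivity)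
      calc _ ≤ 2 ^ n * (2 * U (t / 2 ^ n / 2)) := by gcongr
        _ = _ := by rw [div_div, pow_succ]; ring
  have hUle : ∀ t, 0 < t → U t ≤ 0 := by
    intro t ht
    have hU0 : U 0 = 0 := by simp [hU]
    have hlim : Tendsto (fun n : ℕ => t / 2 ^ n) atTop (𝓝[≠] 0) := by
      rw [tendsto_nhdsWithin_iff]
      constructor
      · have := (tendsto_pow_atTop_nhds_zero_of_lt_one (r := (1/2:ℝ)) (by norm_num)
          (by norm_num)).const_mul t
        simpa [div_eq_mul_inv] using this
      · filter_upwards with n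
        have : 0 < t / 2 ^ n := by positivity
        exact this.ne'
    have h1 := (hasDerivAt_iff_tendsto_slope.1 hUder).comp hlim
    have h2 : Tendsto (fun n : ℕ => t * slope U 0 (t / 2 ^ n)) atTop (𝓝 (t * 0)) :=
      h1.const_mul t
    rw [mul_zero] at h2
    refine ge_of_tendsto' h2 fun n => ?_
    refine (hiter n t ht.le).trans (le_of_eq ?_)
    rw [slope_def_field, hU0, sub_zero, sub_zero]
    field_simp
  have hFle : ∀ t, 0 < t → F t ≤ F 0 := by
    intro t ht
    have p0 : 0 < F 0 := hF0 ▸ hV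
    have p1 : 0 < F t := p0.trans_le (hFge t ht.le)
    have := hUle t ht
    simp only [hU] at this
    exact (Real.log_le_log_iff p1 p0).1 (by linarith)
  by_contra hz0
  obtain ⟨R, hR⟩ := (H.bounded h).subset_closedBall 0
  have hzn : 0 < ‖z‖ := norm_pos_iff.2 hz0
  set r := (2 * |R| + 1) / ‖z‖ with hr
  have hr0 : 0 < r := by positivity
  set t := r * (∑ j, |ℓ j z|) + 1 with ht
  have ht0 : 0 < t := by
    have : 0 ≤ ∑ j, |ℓ j z| := Finset.sum_nonneg fun _ _ => abs_nonneg _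
    positivity
  set A := poly ℓ h
  set B := (fun x => x + (-(r • z))) ⁻¹' poly ℓ h with hB
  have hAm : MeasurableSet A := (poly_closed _ _).measurableSet
  have hBm : MeasurableSet B := (measurable_add_const _) hAm
  have hBV : μ.real B = Vol μ ℓ h := by
    rw [hB, measureReal_def, measure_preimage_add_right]; rfl
  have hdisj : Disjoint A B := by
    rw [Set.disjoint_left]
    intro x hx hxB
    have h1 : ‖x‖ ≤ R := by simpa using hR hx
    have h2 : ‖x + (-(r • z))‖ ≤ R := by simpa using hR hxB
    have h3 : ‖r • z‖ = 2 * |R| + 1 := by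
      rw [norm_smul, Real.norm_eq_abs, abs_of_pos hr0, hr]; field_simp
    have h4 : ‖r • z‖ ≤ ‖x‖ + ‖x + (-(r • z))‖ := by
      have := norm_sub_le x (x + (-(r • z)))
      simpa using this
    have := le_abs_self R
    linarith
  have hsub : A ∪ B ⊆ poly ℓ (h + t • k) := by
    rintro x (hx | hx) i
    · have := hx i
      have h2 := mul_nonneg ht0.le (hk0 i)
      simp only [Pi.add_apply, Pi.smul_apply, smul_eq_mul]; linarith
    · have h1 : ℓ i (x + (-(r • z))) ≤ h i := hx i
      simp only [map_add, map_neg, map_smul, smul_eq_mul] at h1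
      simp only [Pi.add_apply, Pi.smul_apply, smul_eq_mul, hk]
      split_ifs with hi
      · rw [hz i hi] at h1; linarith
      · have h2 : ℓ i z ≤ ∑ j, |ℓ j z| := (le_abs_self _).trans
          (Finset.single_le_sum (f := fun j => |ℓ j z|) (fun _ _ => abs_nonneg _) (Finset.mem_univ i))
        have h3 : r * ℓ i z ≤ r * ∑ j, |ℓ j z| := by gcongr
        linarith
  have h1 : μ.real (A ∪ B) ≤ F t := measureReal_mono hsub (poly_fin μ H _)
  rw [measureReal_union hdisj hBm (poly_fin μ H _) ?_] at h1
  · have h2 := hFle t ht0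
    rw [hBV] at h1
    have h3 : μ.real A = Vol μ ℓ h := rfl
    rw [h3] at h1
    linarith
  · rw [hB, measure_preimage_add_right]; exact poly_fin μ H h

end

end ModuleHess

section ModuleKer1
open MeasureTheory Set Filter Topology
set_option linter.unusedSectionVars false

universe u v

/-- vertex condition -/
def EE {X : Type u} [NormedAddCommGroup X] [NormedSpace ℝ X] {ι : Type v}
    (ℓ : ι → X →L[ℝ] ℝ) : Prop := ∀ l, ∃ y, ℓ l y = 1 ∧ ∀ j, j ≠ l → ℓ j y < 1

/-- strict feasibility -/
def SF {X : Type u} [NormedAddCommGroup X] [NormedSpace ℝ X] {ι : Type v}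
    (ℓ : ι → X →L[ℝ] ℝ) (h : ι → ℝ) : Prop := ∃ x, ∀ j, ℓ j x < h j

section
variable {X : Type u} [NormedAddCommGroup X] [NormedSpace ℝ X] {ι : Type v} [Fintype ι]
  [DecidableEq ι] [FiniteDimensional ℝ X] [MeasurableSpace X] [BorelSpace X]
  (μ : Measure X) [μ.IsAddHaarMeasure]

theorem EE.ne_zero {ℓ : ι → X →L[ℝ] ℝ} (E : EE ℓ) (i : ι) : ℓ i ≠ 0 := by
  obtain ⟨y, hy, -⟩ := E i
  intro h; rw [h] at hy; simp at hy

theorem Vol_pos {ℓ : ι → X →L[ℝ] ℝ} (H : PS ℓ) {h : ι → ℝ} (S : SF ℓ h) : 0 < Vol μ ℓ h := by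
  have ho : IsOpen {x | ∀ j, ℓ j x < h j} := by
    simp only [Set.ofPred_forall]
    exact isOpen_iInter_of_finite fun i => isOpen_lt (by fun_prop) continuous_const
  have h1 : 0 < μ {x | ∀ j, ℓ j x < h j} := ho.measure_pos μ S
  have h2 : 0 < μ (poly ℓ h) := h1.trans_le (measure_mono fun x hx i => (hx i).le)
  exact ENNReal.toReal_pos h2.ne' (poly_fin μ H h)

theorem SF_of_Vol_pos {ℓ : ι → X →L[ℝ] ℝ} {h : ι → ℝ} (H0 : G0 ℓ h) (hV : 0 < Vol μ ℓ h) :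
    SF ℓ h := by
  by_contra hS
  have : poly ℓ h ⊆ ⋃ i, {x | ℓ i x = h i} := by
    intro x hx
    by_contra hc
    simp only [mem_iUnion, Set.mem_ofPred_eq, not_exists] at hc
    exact hS ⟨x, fun j => lt_of_le_of_ne (hx j) (hc j)⟩
  have h0 : μ (poly ℓ h) = 0 := by
    refine measure_mono_null this (measure_iUnion_null fun i => ?_)
    by_cases hi : ℓ i = 0
    · have : {x | ℓ i x = h i} = ∅ := by
        ext x; simp [hi, (H0 i hi).symm]
      rw [this]; simp
    · exact hyp_null μ (ℓ i) hi (h i)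
  simp [Vol, measureReal_def, h0] at hV

theorem SF_res_iff {ℓ : ι → X →L[ℝ] ℝ} {h : ι → ℝ} {i : ι} (hi : ℓ i ≠ 0) :
    SF (res ℓ i) (Rh ℓ i h) ↔ ∃ y, ℓ i y = h i ∧ ∀ j, j ≠ i → ℓ j y < h j := by
  constructor
  · rintro ⟨z, hz⟩
    have hz0 : ℓ i (z:X) = 0 := z.2
    refine ⟨h i • av (ℓ i) + (z:X), by simp [av_spec hi, hz0], fun j hj => ?_⟩
    have := hz j
    simp only [Rh, hj, if_false, res_apply] at this
    simp only [map_add, map_smul, smul_eq_mul]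
    linarith
  · rintro ⟨y, hy, hj⟩
    refine ⟨⟨y - h i • av (ℓ i), by simp [av_spec hi, hy]⟩, fun j => ?_⟩
    by_cases hji : j = i
    · subst hji
      simp [Rh, res_apply, av_spec hi, hy]
    · have := hj j hji
      simp only [Rh, hji, if_false, res_apply, map_sub, map_smul, smul_eq_mul]
      linarith

theorem alpha_pos {ℓ : ι → X →L[ℝ] ℝ} (H : PS ℓ) {h : ι → ℝ} {i : ι} (hi : ℓ i ≠ 0)
    (S : ∃ y, ℓ i y = h i ∧ ∀ j, j ≠ i → ℓ j y < h j) : 0 < alpha μ ℓ i h := by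
  simp only [alpha, hi, if_false]
  exact Vol_pos _ (H.res i) ((SF_res_iff hi).2 S)

theorem of_alpha_pos {ℓ : ι → X →L[ℝ] ℝ} {h : ι → ℝ} (H1 : G1 ℓ h) {i : ι}
    (S : 0 < alpha μ ℓ i h) : ℓ i ≠ 0 ∧ ∃ y, ℓ i y = h i ∧ ∀ j, j ≠ i → ℓ j y < h j := by
  by_cases hi : ℓ i = 0
  · simp [alpha, hi] at S
  simp only [alpha, hi, if_false] at S
  exact ⟨hi, (SF_res_iff hi).1 (SF_of_Vol_pos _ (H1.2 i hi) S)⟩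

theorem res_eq_zero {ℓ : ι → X →L[ℝ] ℝ} {i j : ι} (hi : ℓ i ≠ 0) (h : res ℓ i j = 0) :
    ℓ j = (ℓ j (av (ℓ i))) • ℓ i := by
  ext x
  have h1 : x - ℓ i x • av (ℓ i) ∈ LinearMap.ker (ℓ i).toLinearMap := by simp [av_spec hi]
  have h2 : res ℓ i j ⟨_, h1⟩ = 0 := by rw [h]; rfl
  simp only [res_apply, map_sub, map_smul, smul_eq_mul] at h2
  simp only [smul_apply, smul_eq_mul]
  linarith

theorem EE.parallel {ℓ : ι → X →L[ℝ] ℝ} (E : EE ℓ) {i j : ι} (hij : j ≠ i) {c : ℝ}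
    (h : ℓ j = c • ℓ i) : c < 0 := by
  obtain ⟨y, hy1, hy2⟩ := E j
  obtain ⟨w, hw1, hw2⟩ := E i
  by_contra hc
  push Not at hc
  have h1 : c * ℓ i y = 1 := by rw [← hy1, h]; simp
  have h2 := hy2 i hij.symm
  have h3 : c < 1 := by
    have := hw2 j hij
    rw [h] at this; simpa [hw1] using this
  nlinarith

theorem G1_of_EE {ℓ : ι → X →L[ℝ] ℝ} (E : EE ℓ) {h : ι → ℝ} (S : SF ℓ h) : G1 ℓ h := by
  refine ⟨fun i hi => absurd hi (E.ne_zero i), fun i hi j hj => ?_⟩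
  by_cases hji : j = i
  · simp [Rh, hji]
  · have h1 := res_eq_zero hi hj
    have hc := E.parallel hji h1
    simp only [Rh, hji, if_false]
    intro h0
    obtain ⟨x, hx⟩ := S
    have h2 := hx i
    have h3 := hx j
    rw [h1] at h3
    simp only [smul_apply, smul_eq_mul] at h3
    nlinarith

/-- affine families of right-hand sides -/
def AffFam (w : ℝ → ι → ℝ) : Prop := ∀ j, ∃ a b : ℝ, ∀ s, w s j = a + s * b

theorem AffFam.Rh {w : ℝ → ι → ℝ} (hw : AffFam w) (ℓ : ι → X →L[ℝ] ℝ) (i : ι) :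
    AffFam (fun s => Rh ℓ i (w s)) := by
  intro j
  obtain ⟨a, b, hab⟩ := hw j
  obtain ⟨a', b', hab'⟩ := hw i
  by_cases hj : j = i
  · exact ⟨1, 0, fun s => by simp [_root_.Rh, hj]⟩
  · exact ⟨a - a' * ℓ j (av (ℓ i)), b - b' * ℓ j (av (ℓ i)), fun s => by
      simp only [_root_.Rh, hj, if_false, hab, hab']; ring⟩

theorem AffFam.G0 {w : ℝ → ι → ℝ} (hw : AffFam w) (ℓ : ι → X →L[ℝ] ℝ) (h : G0 ℓ (w 1)) :
    {s | ¬ G0 ℓ (w s)}.Finite := by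
  have : {s | ¬ _root_.G0 ℓ (w s)} ⊆ ⋃ i, {s | w s i = 0 ∧ w 1 i ≠ 0} := by
    intro s hs
    simp only [_root_.G0, Set.mem_ofPred_eq, not_forall] at hs
    obtain ⟨i, hi, h0⟩ := hs
    exact mem_iUnion.2 ⟨i, not_not.1 h0, h i hi⟩
  refine (finite_iUnion fun i => Set.Subsingleton.finite ?_).subset this
  rintro s ⟨hs, h1⟩ t ⟨ht, -⟩
  obtain ⟨a, b, hab⟩ := hw i
  rw [hab] at hs ht h1
  have hb : b ≠ 0 := by
    rintro rfl; apply h1; linarith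
  have : (s - t) * b = 0 := by linarith
  rcases mul_eq_zero.1 this with h | h
  · linarith
  · exact absurd h hb

theorem AffFam.G1 {w : ℝ → ι → ℝ} (hw : AffFam w) (ℓ : ι → X →L[ℝ] ℝ) (h : G1 ℓ (w 1)) :
    {s | ¬ G1 ℓ (w s)}.Finite := by
  have : {s | ¬ _root_.G1 ℓ (w s)} ⊆ {s | ¬ _root_.G0 ℓ (w s)} ∪
      ⋃ i, {s | ℓ i ≠ 0 ∧ ¬ _root_.G0 (res ℓ i) (_root_.Rh ℓ i (w s))} := by
    intro s hs
    simp only [_root_.G1, Set.mem_ofPred_eq, not_and_or, not_forall] at hs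
    rcases hs with hs | ⟨i, hi, h0⟩
    · exact Or.inl hs
    · exact Or.inr (mem_iUnion.2 ⟨i, hi, h0⟩)
  refine ((hw.G0 ℓ h.1).union (finite_iUnion fun i => ?_)).subset this
  by_cases hi : ℓ i = 0
  · simp [hi]
  · exact ((hw.Rh ℓ i).G0 _ (h.2 i hi)).subset fun s hs => hs.2

theorem AffFam.G2 {w : ℝ → ι → ℝ} (hw : AffFam w) (ℓ : ι → X →L[ℝ] ℝ) (h : G2 ℓ (w 1)) :
    {s | ¬ G2 ℓ (w s)}.Finite := by
  have : {s | ¬ _root_.G2 ℓ (w s)} ⊆ {s | ¬ _root_.G0 ℓ (w s)} ∪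
      ⋃ i, {s | ℓ i ≠ 0 ∧ ¬ _root_.G1 (res ℓ i) (_root_.Rh ℓ i (w s))} := by
    intro s hs
    simp only [_root_.G2, Set.mem_ofPred_eq, not_and_or, not_forall] at hs
    rcases hs with hs | ⟨i, hi, h0⟩
    · exact Or.inl hs
    · exact Or.inr (mem_iUnion.2 ⟨i, hi, h0⟩)
  refine ((hw.G0 ℓ h.1).union (finite_iUnion fun i => ?_)).subset this
  by_cases hi : ℓ i = 0
  · simp [hi]
  · exact ((hw.Rh ℓ i).G1 _ (h.2 i hi)).subset fun s hs => hs.2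

theorem layer {ℓ : ι → X →L[ℝ] ℝ} (H : PS ℓ) (j : ι) (hj : ℓ j ≠ 0) :
    ∃ y : X, ℓ j y = alpha μ ℓ j 1 ∧ ∀ i, i ≠ j →
      IntegrableOn (fun s => alpha μ ℓ j (Function.update 1 i s)) (Iic 1) ∧
      ∫ s in Iic 1, alpha μ ℓ j (Function.update 1 i s) = alpha μ ℓ j 1 - ℓ i y := by
  set ν := nu μ (ℓ j)
  set a := av (ℓ j)
  have ha : ℓ j a = 1 := av_spec hj
  set F := poly (res ℓ j) (Rh ℓ j 1) with hF
  have hFm : MeasurableSet F := (poly_closed _ _).measurableSet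
  have hFc : IsCompact F := (H.res j).compact _
  have hαF : alpha μ ℓ j 1 = ν.real F := by simp only [alpha, hj, if_false]; rfl
  have hInt : IntegrableOn (fun z : LinearMap.ker (ℓ j).toLinearMap => a + (z:X)) F ν :=
    ContinuousOn.integrableOn_compact hFc (by fun_prop)
  set y := ∫ z in F, (a + (z:X)) ∂ν with hy
  have hly : ∀ i, ℓ i y = ∫ z in F, ℓ i (a + (z:X)) ∂ν := fun i =>
    ((ℓ i).integral_comp_comm hInt).symm
  have hFfin : ν F ≠ ⊤ := poly_fin ν (H.res j) _
  refine ⟨y, ?_, fun i hi => ?_⟩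
  · rw [hly, hαF]
    have : ∀ z : LinearMap.ker (ℓ j).toLinearMap, ℓ j (a + (z:X)) = 1 := fun z => by
      have : ℓ j (z:X) = 0 := z.2
      simp [ha, this]
    simp [this]
  set φ : LinearMap.ker (ℓ j).toLinearMap → ℝ := fun z => 1 - ℓ i (a + (z:X)) with hφ
  have hFle : ∀ z ∈ F, 0 ≤ φ z := by
    intro z hz
    have := hz i
    simp only [Rh, hi, if_false, res_apply, Pi.one_apply, one_mul] at this
    simp only [hφ, map_add]; linarith
  have hset : ∀ s ≤ (1:ℝ), poly (res ℓ j) (Rh ℓ j (Function.update 1 i s)) =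
      {z | 1 - s ≤ φ z} ∩ F := by
    intro s hs
    ext z
    simp only [poly, mem_inter_iff, Set.mem_ofPred_eq, hF]
    constructor
    · intro hz
      have h1 := hz i
      simp only [Rh, hi, if_false, res_apply, Function.update_self, Function.update_of_ne hi.symm,
        Pi.one_apply, one_mul] at h1
      refine ⟨by simp only [hφ, map_add]; linarith, fun l => ?_⟩
      have h2 := hz l
      by_cases hl : l = j
      · subst hl; simp [Rh]
      by_cases hli : l = i
      · subst hli
        simp only [Rh, hi, if_false, res_apply, Pi.one_apply, one_mul]; linarith
      · simpa [Rh, hl, hli, hi.symm] using h2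
    · rintro ⟨h1, hz⟩ l
      simp only [hφ, map_add] at h1
      have h2 := hz l
      by_cases hl : l = j
      · subst hl; simp [Rh]
      by_cases hli : l = i
      · subst hli
        simp only [Rh, hi, if_false, res_apply, Function.update_self, Function.update_of_ne hi.symm,
          Pi.one_apply, one_mul]
        linarith
      · simpa [Rh, hl, hli, hi.symm] using h2
  have hφm : Measurable φ := by fun_prop
  have hal : ∀ s ≤ (1:ℝ), alpha μ ℓ j (Function.update 1 i s) =
      (ν.restrict F).real {z | 1 - s ≤ φ z} := by
    intro s hs
    have : alpha μ ℓ j (Function.update 1 i s) =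
      Vol ν (res ℓ j) (Rh ℓ j (Function.update 1 i s)) := by simp only [alpha, hj, if_false]; rfl
    rw [this, Vol, hset s hs, measureReal_def, measureReal_def, Measure.restrict_apply]
    exact measurableSet_le measurable_const hφm
  have hφint : Integrable φ (ν.restrict F) := 
    ContinuousOn.integrableOn_compact hFc (by fun_prop)
  have hφnn : 0 ≤ᵐ[ν.restrict F] φ := by
    rw [EventuallyLE, ae_restrict_iff' hFm]
    exact ae_of_all _ hFle
  have hlc := hφint.integral_eq_integral_meas_le hφnn
  have hφval : ∫ z, φ z ∂(ν.restrict F) = alpha μ ℓ j 1 - ℓ i y := by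
    rw [hly, hαF]
    simp only [hφ]
    rw [integral_sub]
    · simp
    · exact integrableOn_const hFfin
    · exact ContinuousOn.integrableOn_compact hFc (by fun_prop)
  set ψ : ℝ → ℝ := fun s => (ν.restrict F).real {z | 1 - s ≤ φ z} with hψ
  have : IsFiniteMeasure (ν.restrict F) := ⟨by simpa using hFfin.lt_top⟩
  have hψmono : Monotone ψ := by
    intro s t hst
    refine measureReal_mono ?_
    intro z (hz : 1 - s ≤ φ z)
    show 1 - t ≤ φ z
    linarith
  obtain ⟨C, hC⟩ : ∃ C, ∀ z ∈ F, φ z ≤ C := by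
    obtain ⟨C, hC⟩ := (hFc.image (f := φ) (by fun_prop)).bddAbove
    exact ⟨C, fun z hz => hC ⟨z, hz, rfl⟩⟩
  have hψint : IntegrableOn ψ (Iic 1) := by
    have h1 : IntegrableOn ψ (Icc (-C) 1) := hψmono.locallyIntegrable.integrableOn_isCompact isCompact_Icc
    have h2 : ∀ s < -C, ψ s = 0 := by
      intro s hs
      simp only [hψ]
      rw [measureReal_def, Measure.restrict_apply (measurableSet_le measurable_const hφm)]
      have : {z | 1 - s ≤ φ z} ∩ F = ∅ := by
        ext z
        simp only [mem_inter_iff, Set.mem_ofPred_eq, mem_empty_iff_false, iff_false, not_and]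
        intro hz hzF
        have := hC z hzF
        linarith
      rw [this]; simp
    have h3 : IntegrableOn ψ (Iio (-C)) :=
      (integrableOn_zero (ε' := ℝ)).congr_fun (fun s hs => (h2 s hs).symm) measurableSet_Iio
    refine (h3.union h1).mono_set ?_
    intro s hs
    rcases lt_or_ge s (-C) with h | h
    · exact Or.inl h
    · exact Or.inr ⟨h, hs⟩
  have hcongr : EqOn ψ (fun s => alpha μ ℓ j (Function.update 1 i s)) (Iic 1) :=
    fun s hs => (hal s hs).symm
  refine ⟨hψint.congr_fun hcongr measurableSet_Iic, ?_⟩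
  rw [← setIntegral_congr_fun measurableSet_Iic hcongr, ← hφval, hlc, integral_Iic_eq_integral_Iio,
    ← integral_indicator measurableSet_Iio, ← integral_indicator measurableSet_Ioi,
    ← integral_sub_left_eq_self _ volume (1:ℝ)]
  congr 1
  ext t
  by_cases ht : 0 < t
  · simp only [indicator, hψ, mem_Iio, mem_Ioi, ht, if_true, sub_lt_self_iff]
    congr 1
    ext z
    simp only [Set.mem_ofPred_eq]
    constructor <;> intro <;> linarith
  · simp [indicator, ht]

end

end ModuleKer1

section ModuleKer2
open MeasureTheory Set Filter Topology
set_option linter.unusedSectionVars false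

universe u v
section
variable {X : Type u} [NormedAddCommGroup X] [NormedSpace ℝ X] {ι : Type v} [Fintype ι]
  [DecidableEq ι] [FiniteDimensional ℝ X] [MeasurableSpace X] [BorelSpace X]
  (μ : Measure X) [μ.IsAddHaarMeasure]

/-- cutting lemma: the second variation vanishes on the cut polytope as well -/
theorem cut_row {ℓ : ι → X →L[ℝ] ℝ} (H : PS ℓ) (E : EE ℓ) (H2 : G2 ℓ 1) (k : ι → ℝ)
    (hk : ∑ i, alpha μ ℓ i 1 * k i = 0)
    (hM : ∑ i, (∑ j, Mm μ ℓ i j 1 * k j) * k i = 0) (i : ι) {s σ : ℝ} (hs : s < 1)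
    (S : SF ℓ (Function.update 1 i s)) (H2s : G2 ℓ (Function.update 1 i s))
    (hσ : ∑ j, alpha μ ℓ j (Function.update 1 i s) * (Function.update k i σ) j = 0) :
    ∑ j, Mm μ ℓ i j (Function.update 1 i s) * (Function.update k i σ) j = 0 := by
  set h : ι → ℝ := Function.update 1 i s with hh
  set k' := Function.update k i σ with hk'
  have hVs : 0 < Vol μ ℓ h := Vol_pos μ H S
  refine M_ker μ H H2s hVs k' hσ (le_antisymm ?_ ?_) i
  · have := M_le μ H H2s k'
    rw [hσ] at this
    by_contra hc
    push Not at hc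
    have := mul_pos hc hVs
    linarith
  set A : ℝ → Set X := fun t => poly ℓ (1 + t • k) ∩ {x | s + t * σ < ℓ i x} with hA
  have hAm : ∀ t, MeasurableSet (A t) := fun t => (poly_closed _ _).measurableSet.inter
    (measurableSet_lt measurable_const (ℓ i).continuous.measurable)
  have hAb : ∀ t, Bornology.IsBounded (A t) := fun t => (H.bounded _).subset inter_subset_left
  set fU := fun t => μ.real (A t) with hfU
  set fW := fun t : ℝ => Vol μ ℓ (h + t • k')
  set fT := fun t : ℝ => Vol μ ℓ (1 + t • k)
  have hsum : ∀ᶠ t in 𝓝 (0:ℝ), fU t = fT t - fW t := by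
    have hev : ∀ᶠ t : ℝ in 𝓝 0, s + t * σ < 1 + t * k i := by
      have c1 : ContinuousAt (fun t : ℝ => s + t * σ) 0 := by fun_prop
      have c2 : ContinuousAt (fun t : ℝ => 1 + t * k i) 0 := by fun_prop
      exact c1.eventually_lt c2 (by simpa using hs)
    filter_upwards [hev] with t ht
    have hd : poly ℓ (1 + t • k) = A t ∪ poly ℓ (h + t • k') := by
      ext x
      constructor
      · intro hx
        by_cases hxi : s + t * σ < ℓ i x
        · exact Or.inl ⟨hx, hxi⟩
        · right
          intro j
          by_cases hj : j = i
          · subst hj; simpa [hh, hk'] using hxi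
          · simpa [hh, hk', hj] using hx j
      · rintro (hx | hx)
        · exact hx.1
        · intro j
          have := hx j
          by_cases hj : j = i
          · subst hj
            simp [hh, hk'] at this ⊢; linarith
          · simpa [hh, hk', hj] using this
    have hdis : Disjoint (A t) (poly ℓ (h + t • k')) := by
      rw [Set.disjoint_left]
      rintro x ⟨-, hx1⟩ hx2
      have := hx2 i
      simp [hh, hk'] at this hx1; linarith
    have : fT t = fU t + fW t := by
      simp only [fT, fU, fW, Vol]
      rw [hd, measureReal_union hdis (poly_closed _ _).measurableSet (hAb t).measure_lt_top.ne
        (poly_fin μ H _)]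
    linarith
  set gU := fun t : ℝ => (∑ i, alpha μ ℓ i (1 + t • k) * k i) - ∑ i, alpha μ ℓ i (h + t • k') * k' i
    with hgU
  have h1 := second_deriv_le (f := fU) (f' := gU)
    (c := (∑ i, (∑ j, Mm μ ℓ i j 1 * k j) * k i) - ∑ i, (∑ j, Mm μ ℓ i j h * k' j) * k' i) ?_ ?_ ?_
  · have hg0 : gU 0 = 0 := by simp [hgU, hk, hσ]
    rw [hM, hg0] at h1
    have hU0 : 0 < fU 0 := by
      obtain ⟨y, hy1, hy2⟩ := E i
      have hopen : IsOpen {x | (∀ j, ℓ j x < 1) ∧ s < ℓ i x} := by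
        simp only [Set.ofPred_and, Set.ofPred_forall]
        exact (isOpen_iInter_of_finite fun i => isOpen_lt (by fun_prop) continuous_const).inter
          (isOpen_lt continuous_const (by fun_prop))
      have hne : {x | (∀ j, ℓ j x < 1) ∧ s < ℓ i x}.Nonempty := by
        set c := max ((s + 1) / 2) (1/2) with hc
        have hc1 : c < 1 := max_lt (by linarith) (by norm_num)
        have hc0 : 0 < c := lt_of_lt_of_le (by norm_num) (le_max_right _ _)
        have hc2 : s < c := lt_of_lt_of_le (by linarith) (le_max_left _ _)
        refine ⟨c • y, fun j => ?_, by simpa [hy1] using hc2⟩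
        have : ℓ j y ≤ 1 := by
          by_cases hj : j = i
          · rw [hj, hy1]
          · exact (hy2 j hj).le
        simp only [map_smul, smul_eq_mul]
        nlinarith
      have hp := hopen.measure_pos μ hne
      refine ENNReal.toReal_pos (hp.trans_le (measure_mono ?_)).ne' (hAb 0).measure_lt_top.ne
      rintro x ⟨hx1, hx2⟩
      refine ⟨fun j => ?_, ?_⟩
      · simpa using (hx1 j).le
      · simpa using hx2
    by_contra hc
    push Not at hc
    nlinarith
  · have e1 : ∀ᶠ t in 𝓝 (0:ℝ), HasDerivAt fT (∑ i, alpha μ ℓ i (1 + t • k) * k i) t := by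
      filter_upwards [(line_tendsto 1 k).eventually H2.g1.eventually] with t ht
        using Vol_line μ H ht
    have e2 : ∀ᶠ t in 𝓝 (0:ℝ), HasDerivAt fW (∑ i, alpha μ ℓ i (h + t • k') * k' i) t := by
      filter_upwards [(line_tendsto h k').eventually H2s.g1.eventually] with t ht
        using Vol_line μ H ht
    filter_upwards [e1, e2, hsum.eventually_nhds] with t h1 h2 h3
    exact (h1.fun_sub h2).congr_of_eventuallyEq h3
  · refine HasDerivAt.fun_sub ?_ ?_
    · refine HasDerivAt.fun_sum fun i _ => ?_
      have := (alpha_line μ H (h := 1) (k := k) (t := 0) (by simpa using H2) i).mul_const (k i)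
      simpa using this
    · refine HasDerivAt.fun_sum fun i _ => ?_
      have := (alpha_line μ H (h := h) (k := k') (t := 0) (by simpa using H2s) i).mul_const (k' i)
      simpa using this
  · filter_upwards with t
    refine bm_mul _ μ rfl (hAm _) (hAm _) (hAm _) (hAb _) (hAb _) (hAb _) ?_
    rintro a ⟨ha1, ha2⟩ b ⟨hb1, hb2⟩
    refine ⟨fun j => ?_, ?_⟩
    · have h1 := ha1 j
      have h2 := hb1 j
      simp only [map_smul, map_add, smul_eq_mul, Pi.smul_apply, Pi.add_apply, Pi.one_apply] at h1 h2 ⊢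
      linarith
    · simp only [map_smul, map_add, smul_eq_mul, Set.mem_ofPred_eq] at ha2 hb2 ⊢
      linarith

theorem kernel_lemma {ℓ : ι → X →L[ℝ] ℝ} (H : PS ℓ) (E : EE ℓ) (H2 : G2 ℓ 1) (k : ι → ℝ)
    (hk : ∑ i, alpha μ ℓ i 1 * k i = 0)
    (hM : ∑ i, (∑ j, Mm μ ℓ i j 1 * k j) * k i = 0) : ∃ z, ∀ i, k i = ℓ i z := by
  have hV : 0 < Vol μ ℓ 1 := Vol_pos μ H ⟨0, by simp⟩
  choose y hyself hy using fun j => layer μ H j (E.ne_zero j)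
  -- main per-coordinate identity
  have main : ∀ i, ∀ᵐ s ∂(volume.restrict (Iic (1:ℝ))),
      ∑ j, k j * alpha μ ℓ j (Function.update 1 i s) = 0 := by
    intro i
    set hs : ℝ → ι → ℝ := fun s => Function.update 1 i s with hhs
    set U : Set ℝ := {s | SF ℓ (hs s)} with hU
    have hline : ∀ s, hs s = hs 0 + s • Pi.single i 1 := by
      intro s; ext j
      by_cases hj : j = i
      · subst hj; simp [hhs]
      · simp [hhs, hj]
    have hUup : ∀ s ∈ U, ∀ t, s ≤ t → t ∈ U := by
      rintro s ⟨x, hx⟩ t hst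
      refine ⟨x, fun j => (hx j).trans_le ?_⟩
      by_cases hj : j = i
      · subst hj; simpa [hhs] using hst
      · simp [hhs, hj]
    have h1U : (1:ℝ) ∈ U := ⟨0, fun j => by simp [hhs]⟩
    have hαpos : ∀ s ∈ U, s ≤ 1 → 0 < alpha μ ℓ i (hs s) := by
      rintro s ⟨x, hx⟩ hs1
      obtain ⟨w, hw1, hw2⟩ := E i
      have hxi : ℓ i x < s := by simpa [hhs] using hx i
      have hd : 0 < 1 - ℓ i x := by linarith
      set c := (s - ℓ i x) / (1 - ℓ i x) with hc
      have hc0 : 0 < c := div_pos (by linarith) hd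
      have hc1 : c ≤ 1 := (div_le_one hd).2 (by linarith)
      refine alpha_pos μ H (E.ne_zero i) ⟨x + c • (w - x), ?_, fun j hj => ?_⟩
      · simp only [hhs, map_add, map_smul, map_sub, hw1, smul_eq_mul, Function.update_self, hc]
        field_simp; ring
      · have a1 := hx j
        have a2 := hw2 j hj
        simp only [hhs, Function.update_of_ne hj, Pi.one_apply] at a1 ⊢
        simp only [map_add, map_smul, map_sub, smul_eq_mul]
        nlinarith
    set σ : ℝ → ℝ := fun s => k i - (∑ j, k j * alpha μ ℓ j (hs s)) / alpha μ ℓ i (hs s) with hσ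
    have hkα : ∀ s, alpha μ ℓ i (hs s) ≠ 0 →
        ∑ j, alpha μ ℓ j (hs s) * (Function.update k i (σ s)) j = 0 := by
      intro s h0
      have e : ∀ j, alpha μ ℓ j (hs s) * (Function.update k i (σ s)) j =
          k j * alpha μ ℓ j (hs s) + if j = i then (σ s - k i) * alpha μ ℓ i (hs s) else 0 := by
        intro j
        by_cases hj : j = i
        · subst hj; simp; ring
        · simp [hj]; ring
      rw [Finset.sum_congr rfl fun j _ => e j]
      simp only [Finset.sum_add_distrib, Finset.sum_ite_eq', Finset.mem_univ, if_true]
      have e2 : σ s - k i = - (∑ j, k j * alpha μ ℓ j (hs s)) / alpha μ ℓ i (hs s) := by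
        simp only [hσ]; ring
      rw [e2]
      field_simp; ring
    have hcontα : ∀ s ∈ U, ∀ j, ContinuousAt (fun s => alpha μ ℓ j (hs s)) s := by
      intro s hsU j
      have : Continuous hs := by simp only [hhs]; fun_prop
      exact ContinuousAt.comp (f := hs) (alpha_continuousAt μ H (G1_of_EE E hsU) j) this.continuousAt
    have hfin : {s | ¬ G2 ℓ (hs s)}.Finite := by
      refine AffFam.G2 (w := hs) ?_ ℓ ?_
      · intro j
        by_cases hj : j = i
        · subst hj; exact ⟨0, 1, fun s => by simp [hhs]⟩
        · exact ⟨1, 0, fun s => by simp [hhs, hj]⟩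
      · have : hs 1 = 1 := by simp [hhs]
        rw [this]; exact H2
    have hσconst : ∀ s ∈ U, s ≤ 1 → σ s = k i := by
      intro s hsU hs1
      have hcσ : ContinuousOn σ (Icc s 1) := by
        intro r hr
        refine ContinuousAt.continuousWithinAt ?_
        have hrU := hUup s hsU r hr.1
        refine ContinuousAt.sub continuousAt_const (ContinuousAt.div ?_ (hcontα r hrU i)
          (hαpos r hrU hr.2).ne')
        exact tendsto_finsetSum _ fun j _ => (hcontα r hrU j).const_mul _
      have hdσ : ∀ r ∈ Ioo s 1 \ {s | ¬ G2 ℓ (hs s)}, HasDerivAt σ 0 r := by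
        rintro r ⟨⟨hr1, hr2⟩, hr3⟩
        have hG : G2 ℓ (hs r) := not_not.1 hr3
        have hrU := hUup s hsU r hr1.le
        have hα0 := (hαpos r hrU hr2.le).ne'
        have hrow := cut_row μ H E H2 k hk hM i hr2 hrU hG (hkα r hα0)
        have hd : ∀ j, HasDerivAt (fun s => alpha μ ℓ j (hs s)) (Mm μ ℓ j i (hs r)) r := by
          intro j
          have := alpha_line μ H (h := hs 0) (k := Pi.single i 1) (t := r) (by rw [← hline]; exact hG) j
          simp only [← hline] at this
          simpa [Pi.single_apply] using this
        have hd2 := (((HasDerivAt.fun_sum (u := Finset.univ)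
          fun j _ => (hd j).const_mul (k j)).div (hd i) hα0).const_sub (k i))
        refine hd2.congr_deriv ?_
        have e1 : ∑ j, Mm μ ℓ i j (hs r) * (Function.update k i (σ r)) j =
            (∑ j, k j * Mm μ ℓ j i (hs r)) + (σ r - k i) * Mm μ ℓ i i (hs r) := by
          have e : ∀ j, Mm μ ℓ i j (hs r) * (Function.update k i (σ r)) j =
            k j * Mm μ ℓ j i (hs r) + if j = i then (σ r - k i) * Mm μ ℓ i i (hs r) else 0 := by
            intro j
            rw [Mm_symm μ H hG i j]
            by_cases hj : j = i
            · subst hj; simp; ring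
            · simp [hj]; ring
          simp only [e, Finset.sum_add_distrib, Finset.sum_ite_eq', Finset.mem_univ, if_true]
        rw [e1] at hrow
        have e2 : σ r - k i = - (∑ j, k j * alpha μ ℓ j (hs r)) / alpha μ ℓ i (hs r) := by
          simp only [hσ]; ring
        rw [e2] at hrow
        have e3 : ∑ j, k j * Mm μ ℓ j i (hs r) = 
          (∑ j, k j * alpha μ ℓ j (hs r)) / alpha μ ℓ i (hs r) * Mm μ ℓ i i (hs r) := by
          rw [neg_div, neg_mul] at hrow; linarith
        rw [e3]
        field_simp; ring
      have := MeasureTheory.integral_eq_of_hasDerivAt_off_countable_of_le σ (fun _ => 0) hs1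
        hfin.countable hcσ hdσ (by simp)
      have h1 : σ 1 = k i := by
        have e1 : hs 1 = 1 := by simp [hhs]
        have e2 : ∑ j, k j * alpha μ ℓ j (hs 1) = 0 := by
          rw [e1, ← hk]; exact Finset.sum_congr rfl fun j _ => mul_comm _ _
        simp only [hσ, e2]; simp
      simp at this
      linarith
    have hzero : ∀ s, s ∉ U → s ∉ closure U → ∀ j, alpha μ ℓ j (hs s) = 0 := by
      intro s _ hsU j
      by_contra hne
      have hαp : 0 < alpha μ ℓ j (hs s) := lt_of_le_of_ne (alpha_nonneg μ ℓ j _) (Ne.symm hne)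
      simp only [alpha, E.ne_zero j, if_false, Vol] at hαp
      have hne2 : (poly (res ℓ j) (Rh ℓ j (hs s))).Nonempty := by
        by_contra hc
        rw [not_nonempty_iff_eq_empty] at hc
        rw [hc] at hαp; simp at hαp
      obtain ⟨z, hz⟩ := hne2
      have hx : ∀ l, ℓ l (hs s j • av (ℓ j) + (z:X)) ≤ hs s l := by
        intro l
        by_cases hl : l = j
        · subst hl
          have : ℓ l (z:X) = 0 := z.2
          simp [av_spec (E.ne_zero l), this]
        · have := hz l
          simp only [Rh, hl, if_false, res_apply] at this
          simp only [map_add, map_smul, smul_eq_mul]; linarith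
      set x := hs s j • av (ℓ j) + (z:X)
      apply hsU
      -- points above s are in U
      have habove : ∀ ε > 0, s + ε ∈ U := by
        intro ε hε
        -- scale x slightly towards 0
        set c := 1 - ε / (2 * (|s| + ε + 1)) with hc
        have hD : 0 < 2 * (|s| + ε + 1) := by positivity
        have hq : 0 < ε / (2 * (|s| + ε + 1)) := by positivity
        have hq1 : ε / (2 * (|s| + ε + 1)) < 1 := by
          rw [div_lt_one hD]; have := abs_nonneg s; linarith
        have hqs : ε / (2 * (|s| + ε + 1)) * |s| < ε := by
          rw [div_mul_eq_mul_div, div_lt_iff₀ hD]; have := abs_nonneg s; nlinarith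
        refine ⟨c • x, fun l => ?_⟩
        have hxl := hx l
        simp only [map_smul, smul_eq_mul]
        have hc0 : 0 < c := by rw [hc]; linarith
        by_cases hl : l = i
        · subst hl
          simp only [hhs, Function.update_self] at hxl ⊢
          have a1 : c * ℓ l x ≤ c * s := by gcongr
          have a2 : c * s < s + ε := by
            have := neg_abs_le s
            rw [hc]; nlinarith
          linarith
        · simp only [hhs, Function.update_of_ne hl, Pi.one_apply] at hxl ⊢
          have a1 : c * ℓ l x ≤ c * 1 := by gcongr
          rw [hc] at a1 ⊢; linarith
      rw [Metric.mem_closure_iff]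
      intro ε hε
      refine ⟨s + ε / 2, habove _ (by linarith), ?_⟩
      rw [Real.dist_eq, show s - (s + ε / 2) = -(ε/2) by ring, abs_neg, abs_of_pos (by linarith)]
      linarith
    have hnull : volume (closure U \ U) = 0 := by
      refine (Set.Subsingleton.measure_zero ?_ _)
      have key : ∀ s t, s ∈ closure U \ U → t ∈ closure U \ U → ¬ s < t := by
        rintro s t ⟨hs1, hs2⟩ ⟨ht1, ht2⟩ hst
        rw [Metric.mem_closure_iff] at hs1
        obtain ⟨r, hr, hd⟩ := hs1 (t - s) (by linarith)
        apply ht2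
        refine hUup r hr t ?_
        rw [Real.dist_eq] at hd
        have := neg_abs_le (s - r); linarith
      intro s hs1 t ht1
      exact le_antisymm (not_lt.1 (key t s ht1 hs1)) (not_lt.1 (key s t hs1 ht1))
    rw [ae_restrict_iff' measurableSet_Iic]
    have hae : ∀ᵐ s ∂(volume : Measure ℝ), s ∉ closure U \ U := by
      exact measure_eq_zero_iff_ae_notMem.1 hnull
    filter_upwards [hae] with s hs1 (hs2 : s ≤ 1)
    by_cases hsU : s ∈ U
    · have h1 := hσconst s hsU hs2
      have h2 := hαpos s hsU hs2
      simp only [hσ] at h1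
      have h3 : (∑ j, k j * alpha μ ℓ j (hs s)) / alpha μ ℓ i (hs s) = 0 := by linarith
      rcases div_eq_zero_iff.1 h3 with h4 | h4
      · exact h4
      · exact absurd h4 h2.ne'
    · refine Finset.sum_eq_zero fun j _ => ?_
      rw [show alpha μ ℓ j (Function.update 1 i s) = 0 from
        hzero s hsU (fun hc => hs1 ⟨hc, hsU⟩) j, mul_zero]
  refine ⟨(Vol μ ℓ 1)⁻¹ • ∑ j, k j • y j, fun i => ?_⟩
  have hI : ∀ j, IntegrableOn (fun s => alpha μ ℓ j (Function.update 1 i s)) (Iic 1) ∧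
      ∫ s in Iic (1:ℝ), alpha μ ℓ j (Function.update 1 i s) =
        alpha μ ℓ j 1 - ℓ i (y j) + if j = i then Vol μ ℓ 1 else 0 := by
    intro j
    by_cases hj : j = i
    · subst hj
      obtain ⟨a1, a2⟩ := Vol_update μ H 1 (E.ne_zero j) 1
      refine ⟨a1, ?_⟩
      rw [← a2, hyself]
      simp
    · simpa [hj] using hy j i (Ne.symm hj)
  have h0 : ∫ s in Iic (1:ℝ), ∑ j, k j * alpha μ ℓ j (Function.update 1 i s) = 0 := by
    rw [integral_congr_ae (main i)]; simp
  rw [integral_finsetSum _ (fun j _ => ((hI j).1.const_mul (k j)))] at h0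
  simp only [integral_const_mul, (hI _).2] at h0
  have e : ∑ j, k j * (alpha μ ℓ j 1 - ℓ i (y j) + if j = i then Vol μ ℓ 1 else 0) =
      (∑ j, alpha μ ℓ j 1 * k j) - (∑ j, k j * ℓ i (y j)) + k i * Vol μ ℓ 1 := by
    simp only [mul_add, mul_sub, Finset.sum_add_distrib, Finset.sum_sub_distrib, mul_ite, mul_zero,
      Finset.sum_ite_eq', Finset.mem_univ, if_true]
    congr 2
    exact Finset.sum_congr rfl fun j _ => mul_comm _ _
  rw [e, hk] at h0
  simp only [map_smul, map_sum, smul_eq_mul]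
  field_simp
  linarith

end

end ModuleKer2

section ModuleBrouwer
open MeasureTheory Set Metric Filter Topology
universe u

/-- interpolation weights for the determinant polynomial -/
lemma det_interp (m : ℕ) (δ : ℝ) (hδ : 0 < δ) : ∃ (t c : Fin (m+1) → ℝ),
    (∀ k, 0 ≤ t k ∧ t k < δ) ∧ ∑ k, c k = 1 ∧
    ∀ {E : Type u} [NormedAddCommGroup E] [NormedSpace ℝ E] [FiniteDimensional ℝ E],
      Module.finrank ℝ E = m → ∀ A : E →L[ℝ] E,
      (ContinuousLinearMap.id ℝ E + A).det = ∑ k, c k * (ContinuousLinearMap.id ℝ E + t k • A).det := by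
  set t : Fin (m+1) → ℝ := fun k => δ * k / (m+1) with ht
  have hinj : Set.InjOn t (Finset.univ : Finset (Fin (m+1))) := by
    intro a _ b _ hab
    simp only [ht] at hab
    have h1 : (m:ℝ)+1 ≠ 0 := by positivity
    field_simp at hab
    exact Fin.ext (by exact_mod_cast hab)
  have key : ∀ P : Polynomial ℝ, P.natDegree ≤ m → P.eval 1 =
      ∑ k, (Lagrange.basis Finset.univ t k).eval 1 * P.eval (t k) := by
    intro P hP
    have := Lagrange.eq_interpolate (f := P) hinj (by
      refine lt_of_le_of_lt (Polynomial.degree_le_of_natDegree_le hP) ?_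
      simp; exact_mod_cast Nat.lt_succ_self m)
    conv_lhs => rw [this]
    rw [Lagrange.interpolate_apply, Polynomial.eval_finsetSum]
    refine Finset.sum_congr rfl fun k _ => ?_
    simp; ring
  refine ⟨t, fun k => (Lagrange.basis Finset.univ t k).eval 1, fun k => ⟨by positivity, ?_⟩, ?_, ?_⟩
  · simp only [ht]
    rw [div_lt_iff₀ (by positivity)]
    have : (k:ℝ) < m + 1 := by exact_mod_cast k.2
    nlinarith
  · have := key 1 (by simp)
    simpa using this.symm
  · intro E _ _ _ hE A
    let b := Module.finBasisOfFinrankEq ℝ E hE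
    set M := LinearMap.toMatrix b b (A : E →ₗ[ℝ] E) with hM
    set P : Polynomial ℝ := ((Polynomial.X : Polynomial ℝ) • (M.map Polynomial.C) + (1 : Matrix (Fin m) (Fin m) ℝ).map Polynomial.C).det with hP
    have hdeg : P.natDegree ≤ m := by
      have := Polynomial.natDegree_det_X_add_C_le M 1
      rw [Fintype.card_fin] at this
      exact this
    have hev : ∀ s : ℝ, P.eval s = (ContinuousLinearMap.id ℝ E + s • A).det := by
      intro s
      rw [ContinuousLinearMap.det, ← LinearMap.det_toMatrix b, hP, ← Polynomial.coe_evalRingHom, RingHom.map_det]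
      congr 1
      ext i j
      simp [hM, LinearMap.toMatrix_apply, Matrix.one_apply, add_comm, Finsupp.single_apply, eq_comm]
      split_ifs <;> simp [mul_comm]
    have := key P hdeg
    simp only [hev, one_smul] at this
    exact this

lemma no_retraction {E : Type u} [NormedAddCommGroup E] [InnerProductSpace ℝ E]
    [FiniteDimensional ℝ E] (r : E → E) (hr : ContDiff ℝ 1 r) {R : ℝ} (hR : 0 < R)
    (hn : ∀ x, ‖r x‖ = R) (hs : ∀ x, ‖x‖ = R → r x = x) : False := by
  borelize E
  let μ : Measure E := Measure.addHaar
  set u : E → E := fun x => if ‖x‖ ≤ R then r x - x else 0 with hu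
  have hcd : ContDiff ℝ 1 (fun x => r x - x) := hr.sub contDiff_id
  -- Lipschitz on the closed ball
  obtain ⟨K, hK⟩ : ∃ K : NNReal, LipschitzOnWith K (fun x => r x - x) (closedBall 0 R) :=
    hcd.contDiffOn.exists_lipschitzOnWith (by simp) (convex_closedBall 0 R) (isCompact_closedBall 0 R)
  have huin : ∀ x, ‖x‖ ≤ R → u x = r x - x := fun x hx => by simp [hu, hx]
  have huout : ∀ x, R ≤ ‖x‖ → u x = 0 := by
    intro x hx
    simp only [hu]
    split_ifs with h
    · rw [hs x (le_antisymm h hx), sub_self]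
    · rfl
  have hcross : ∀ x y : E, ‖x‖ ≤ R → R ≤ ‖y‖ → dist (u x) (u y) ≤ K * dist x y := by
    intro x y hx hy
    -- point on sphere
    have hcont : ContinuousOn (fun s : ℝ => ‖x + s • (y - x)‖) (Icc 0 1) := by fun_prop
    have := intermediate_value_Icc (zero_le_one) hcont (show R ∈ Icc _ _ by simp [hx, hy])
    obtain ⟨s, hs1, hs2⟩ := this
    set z := x + s • (y - x) with hz
    simp only at hs2
    have h1 : u y = u z := by rw [huout y hy, huout z hs2.ge]
    rw [h1, huin x hx, huin z hs2.le]
    refine (hK.dist_le_mul x (by simpa using hx) z (by simpa using hs2.le)).trans ?_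
    gcongr
    rw [hz, dist_eq_norm, dist_eq_norm, show x - (x + s • (y - x)) = s • (x - y) by module, norm_smul,
      Real.norm_of_nonneg hs1.1]
    exact mul_le_of_le_one_left (norm_nonneg _) hs1.2
  have hLip : ∀ x y, dist (u x) (u y) ≤ K * dist x y := by
    intro x y
    rcases le_total ‖x‖ R with hx | hx <;> rcases le_total ‖y‖ R with hy | hy
    · rw [huin x hx, huin y hy]
      exact hK.dist_le_mul x (by simpa using hx) y (by simpa using hy)
    · exact hcross x y hx hy
    · rw [dist_comm, dist_comm x]; exact hcross y x hy hx
    · rw [huout x hx, huout y hy, dist_self]; positivity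
  set B : Set E := ball 0 R with hB
  let D : E → (E →L[ℝ] E) := fun x => fderiv ℝ (fun x => r x - x) x
  have hD : Continuous D := hcd.continuous_fderiv (by simp)
  have hDn : ∀ x ∈ B, ‖D x‖ ≤ K := by
    intro x hx
    exact norm_fderiv_le_of_lipschitzOn ℝ (isOpen_ball.mem_nhds hx) (hK.mono ball_subset_closedBall)
  have hDu : ∀ x ∈ B, HasFDerivAt u (D x) x := by
    intro x hx
    refine ((hcd.differentiable (by simp)).differentiableAt.hasFDerivAt).congr_of_eventuallyEq ?_
    filter_upwards [isOpen_ball.mem_nhds hx] with y hy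
    exact huin y (by simpa using (mem_ball_zero_iff.1 hy).le)
  obtain ⟨t, c, htc, hcs, hdet⟩ := det_interp (Module.finrank ℝ E) (1 / (K + 1)) (by positivity)
  have hInt : ∀ s : ℝ, IntegrableOn (fun x => (ContinuousLinearMap.id ℝ E + s • D x).det) B μ := by
    intro s
    have : Continuous (fun x => (ContinuousLinearMap.id ℝ E + s • D x).det) :=
      ContinuousLinearMap.continuous_det.comp (by fun_prop)
    exact (this.continuousOn.integrableOn_compact (isCompact_closedBall 0 R)).mono_set ball_subset_closedBall
  have hvol : ∀ s : ℝ, 0 ≤ s → s < 1 / (K+1) →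
      ∫ x in B, (ContinuousLinearMap.id ℝ E + s • D x).det ∂μ = μ.real B := by
    intro s hs0 hs1
    have hsK : s * K < 1 := by
      rw [lt_div_iff₀ (by positivity)] at hs1
      nlinarith [K.2]
    set F : E → E := fun x => x + s • u x with hF
    have hinj : Function.Injective F := by
      intro x y hxy
      by_contra hne
      have h1 : x - y = s • (u y - u x) := by
        simp only [hF] at hxy
        rw [smul_sub, sub_eq_sub_iff_add_eq_add, hxy, add_comm]
      have h2 : ‖x - y‖ ≤ s * (K * ‖x - y‖) := by
        conv_lhs => rw [h1, norm_smul, Real.norm_of_nonneg hs0]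
        gcongr
        have := hLip y x
        rwa [dist_eq_norm, dist_comm, dist_eq_norm] at this
      have h3 : 0 < ‖x - y‖ := norm_pos_iff.2 (sub_ne_zero.2 hne)
      nlinarith
    have hsurj : Function.Surjective F := by
      intro y
      have hc : ContractingWith (Real.toNNReal (s * K)) (fun x => y - s • u x) := by
        refine ⟨by rw [← NNReal.coe_lt_coe, Real.coe_toNNReal _ (by positivity)]; exact hsK, ?_⟩
        refine LipschitzWith.of_dist_le_mul fun a b => ?_
        rw [Real.coe_toNNReal _ (by positivity), dist_sub_left, dist_smul₀, Real.norm_of_nonneg hs0, mul_assoc]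
        gcongr
        exact hLip a b
      have := hc.fixedPoint_isFixedPt
      refine ⟨hc.fixedPoint, ?_⟩
      · have h := this.eq
        simp only [hF]
        nth_rw 1 [← h]
        simp
    have himg : F '' B = B := by
      have hFout : ∀ x, x ∉ B → F x = x := by
        intro x hx
        have : R ≤ ‖x‖ := by simpa [hB] using hx
        simp [hF, huout x this]
      ext y
      constructor
      · rintro ⟨x, hx, rfl⟩
        by_contra hc
        have := hinj (hFout _ hc)
        rw [this] at hc; exact hc hx
      · intro hy
        obtain ⟨x, rfl⟩ := hsurj y
        refine ⟨x, ?_, rfl⟩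
        by_contra hc
        rw [hFout x hc] at hy; exact hc hy
    have hFd : ∀ x ∈ B, HasFDerivWithinAt F (ContinuousLinearMap.id ℝ E + s • D x) B x := by
      intro x hx
      exact ((hasFDerivAt_id x).add ((hDu x hx).const_smul s)).hasFDerivWithinAt
    have hcv := integral_image_eq_integral_abs_det_fderiv_smul μ measurableSet_ball hFd hinj.injOn (fun _ => (1:ℝ))
    rw [himg] at hcv
    simp only [smul_eq_mul, mul_one, integral_const, MeasurableSet.univ, measureReal_restrict_apply, univ_inter] at hcv
    rw [hcv]
    refine setIntegral_congr_fun measurableSet_ball fun x hx => ?_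
    -- positivity of the determinant
    have hpos : 0 < (ContinuousLinearMap.id ℝ E + s • D x).det := by
      by_contra hle
      push Not at hle
      have hcont : ContinuousOn (fun s : ℝ => (ContinuousLinearMap.id ℝ E + s • D x).det) (Icc 0 s) :=
        (ContinuousLinearMap.continuous_det.comp (by fun_prop)).continuousOn
      obtain ⟨a, ha, ha0⟩ := intermediate_value_Icc' hs0 hcont (show (0:ℝ) ∈ Icc _ _ by
        refine ⟨hle, ?_⟩
        simp [ContinuousLinearMap.det])
      simp only at ha0
      have hker : LinearMap.ker ((ContinuousLinearMap.id ℝ E + a • D x : E →L[ℝ] E) : E →ₗ[ℝ] E) = ⊥ := by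
        rw [LinearMap.ker_eq_bot']
        intro v hv
        by_contra hv0
        have h1 : v = - (a • D x v) := by
          have : v + a • D x v = 0 := by simpa using hv
          exact eq_neg_of_add_eq_zero_left this
        have h2 : ‖v‖ ≤ a * (K * ‖v‖) := by
          conv_lhs => rw [h1, norm_neg, norm_smul, Real.norm_of_nonneg ha.1]
          gcongr
          · exact ha.1
          · exact (D x).le_of_opNorm_le (hDn x hx) v
        have h3 : 0 < ‖v‖ := norm_pos_iff.2 hv0
        have h4 : a * K ≤ s * K := by gcongr; exact ha.2
        nlinarith
      have hu := LinearMap.isUnit_iff_ker_eq_bot _ |>.2 hker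
      have := (LinearMap.isUnit_iff_isUnit_det _).1 hu
      exact this.ne_zero ha0
    simp only [abs_of_pos hpos]
  have hzero : ∀ x, (ContinuousLinearMap.id ℝ E + D x).det = 0 := by
    intro x
    have hDr : HasFDerivAt r (ContinuousLinearMap.id ℝ E + D x) x := by
      have h1 := (hcd.differentiable (by simp) x).hasFDerivAt
      have := (hasFDerivAt_id x).add h1
      refine this.congr_of_eventuallyEq (Eventually.of_forall fun y => by simp)
    have h2 : ∀ v, inner ℝ (r x) ((ContinuousLinearMap.id ℝ E + D x) v) = 0 := by
      intro v
      have h3 := hDr.norm_sq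
      have h4 : HasFDerivAt (fun y => ‖r y‖^2) (0 : E →L[ℝ] ℝ) x := by
        simp only [hn]; exact hasFDerivAt_const _ _
      have := congrArg (fun f : E →L[ℝ] ℝ => f v) (h3.unique h4)
      have h5 : 2 * inner ℝ (r x) v + 2 * inner ℝ (r x) ((D x) v) = 0 := by simpa using this
      simp only [add_apply, ContinuousLinearMap.id_apply, inner_add_right]
      linarith
    by_contra hne
    have hu := (LinearMap.isUnit_iff_isUnit_det ((ContinuousLinearMap.id ℝ E + D x : E →L[ℝ] E) : E →ₗ[ℝ] E)).2
      (isUnit_iff_ne_zero.2 hne)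
    have hsj := LinearMap.range_eq_top.1 ((LinearMap.isUnit_iff_range_eq_top _).1 hu)
    obtain ⟨v, hv⟩ := hsj (r x)
    have := h2 v
    have hv' : (ContinuousLinearMap.id ℝ E + D x) v = r x := hv
    rw [hv', real_inner_self_eq_norm_sq, hn] at this
    exact absurd this (by positivity)
  have hfin : ∫ x in B, (ContinuousLinearMap.id ℝ E + D x).det ∂μ = μ.real B := by
    have e : ∀ x, (ContinuousLinearMap.id ℝ E + D x).det = _ := fun x => hdet rfl (D x)
    simp only [e]
    rw [integral_finsetSum _ fun k _ => (hInt (t k)).const_mul (c k)]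
    simp only [integral_const_mul]
    rw [Finset.sum_congr rfl fun k _ => by rw [hvol (t k) (htc k).1 (htc k).2], ← Finset.sum_mul, hcs, one_mul]
  simp only [hzero, integral_zero] at hfin
  have : 0 < μ.real B := ENNReal.toReal_pos (measure_ball_pos μ 0 hR).ne' measure_ball_lt_top.ne
  linarith

/-- A continuous self-map which is the identity outside a ball has a zero. -/
theorem exists_zero {E : Type u} [NormedAddCommGroup E] [InnerProductSpace ℝ E]
    [FiniteDimensional ℝ E] (g : E → E) (hg : Continuous g) {R : ℝ} (hR : 0 < R)
    (hid : ∀ x, R ≤ ‖x‖ → g x = x) : ∃ x, g x = 0 := by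
  by_contra hcon
  push Not at hcon
  obtain ⟨v, hv1, hv2⟩ := (isCompact_closedBall (0:E) R).exists_isMinOn ⟨0, by simp [hR.le]⟩ hg.norm.continuousOn
  set c := min ‖g v‖ R with hc
  have hc0 : 0 < c := lt_min (norm_pos_iff.2 (hcon v)) hR
  have hgc : ∀ x, c ≤ ‖g x‖ := by
    intro x
    rcases le_total ‖x‖ R with h | h
    · exact (min_le_left _ _).trans (hv2 (by simpa using h))
    · rw [hid x h]; exact (min_le_right _ _).trans h
  obtain ⟨w, hw1, hw2, hw3⟩ := Continuous.exists_contDiff_approx 1 (f := fun x => g x - x)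
    (hg.sub continuous_id) (ε := fun _ => c) continuous_const (fun _ => hc0)
  have hwo : ∀ x, R ≤ ‖x‖ → w x = 0 := by
    intro x hx
    by_contra hne
    have := hw3 hne
    simp [hid x hx] at this
  set g' : E → E := fun x => x + w x with hg'
  have hg'0 : ∀ x, g' x ≠ 0 := by
    intro x h0
    have h1 := hw2 x
    rw [dist_eq_norm] at h1
    have : w x - (g x - x) = g' x - g x := by simp only [hg']; abel
    rw [this, h0, zero_sub, norm_neg] at h1
    exact absurd (hgc x) (not_le.2 h1)
  have hg'c : ContDiff ℝ 1 g' := contDiff_id.add hw1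
  refine no_retraction (fun x => (R * ‖g' x‖⁻¹) • g' x) ?_ hR ?_ ?_
  · exact (contDiff_const.mul ((hg'c.norm ℝ hg'0).inv fun x => norm_ne_zero_iff.2 (hg'0 x))).smul hg'c
  · intro x
    have := norm_ne_zero_iff.2 (hg'0 x)
    rw [norm_smul, norm_mul, norm_inv, norm_norm, Real.norm_of_nonneg hR.le]
    field_simp
  · intro x hx
    have : g' x = x := by simp [hg', hwo x hx.ge]
    simp only [this, hx]
    rw [mul_inv_cancel₀ hR.ne', one_smul]

end ModuleBrouwer

section ModulePoly
open MeasureTheory Set Filter Topology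
set_option linter.unusedSectionVars false
universe u v
section
variable {X : Type u} [NormedAddCommGroup X] [NormedSpace ℝ X] {ι : Type v} [Fintype ι]
  [DecidableEq ι] [FiniteDimensional ℝ X] [MeasurableSpace X] [BorelSpace X]
  (μ : Measure X) [μ.IsAddHaarMeasure]

theorem EE.not_collinear {ℓ : ι → X →L[ℝ] ℝ} (E : EE ℓ) {i j l : ι} (hij : i ≠ j) (hil : i ≠ l)
    (hjl : j ≠ l) {c : ℝ} (h : ∀ y, ℓ l y = c * ℓ j y + (1 - c) * ℓ i y) : False := by
  rcases lt_or_ge c 0 with h0 | h0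
  · obtain ⟨y, hy1, hy2⟩ := E i
    have a := hy2 j hij.symm
    have b := hy2 l hil.symm
    have := h y
    rw [hy1] at this
    nlinarith
  · rcases le_or_gt c 1 with h1 | h1
    · obtain ⟨y, hy1, hy2⟩ := E l
      have a := hy2 j hjl
      have b := hy2 i hil
      have := h y
      rw [hy1] at this
      rcases h0.eq_or_lt with h2 | h2
      · subst h2; linarith
      · have h3 : c * ℓ j y < c * 1 := by gcongr
        have h4 : (1 - c) * ℓ i y ≤ (1 - c) * 1 := mul_le_mul_of_nonneg_left b.le (by linarith)
        linarith
    · obtain ⟨y, hy1, hy2⟩ := E j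
      have a := hy2 i hij
      have b := hy2 l hjl.symm
      have := h y
      rw [hy1] at this
      nlinarith

theorem G2_of_EE {ℓ : ι → X →L[ℝ] ℝ} (E : EE ℓ) : G2 ℓ 1 := by
  have hG1 : G1 ℓ 1 := G1_of_EE E ⟨0, fun j => by simp⟩
  refine ⟨hG1.1, fun i hi => ⟨hG1.2 i hi, fun j hj l hl => ?_⟩⟩
  by_cases hlj : l = j
  · simp [Rh, hlj]
  have h1 := res_eq_zero hj hl
  have hji : j ≠ i := by
    rintro rfl
    exact hj (res_self ℓ j)
  set c := res ℓ i l (av (res ℓ i j)) with hc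
  have hval : Rh (res ℓ i) j (Rh ℓ i 1) l = Rh ℓ i 1 l - Rh ℓ i 1 j * c := by
    simp [Rh, hlj, hc]
  rw [hval]
  by_cases hli : l = i
  · have : c = 0 := by
      rw [hc, hli, res_self]; simp
    simp [this, Rh, hli]
  · simp only [Rh, hli, hji, if_false, Pi.one_apply, one_mul]
    intro h0
    refine E.not_collinear hji.symm (Ne.symm hli) (Ne.symm hlj) (c := c) (i := i) (j := j) (l := l) fun y => ?_
    have hk : y - ℓ i y • av (ℓ i) ∈ LinearMap.ker (ℓ i).toLinearMap := by simp [av_spec hi]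
    have h2 : res ℓ i l ⟨_, hk⟩ = (c • res ℓ i j) ⟨_, hk⟩ := by rw [← h1]
    simp only [res_apply, smul_apply, map_sub, map_smul, smul_eq_mul] at h2
    linear_combination h2 - ℓ i y * h0

theorem beta_pos_exists {ℓ : ι → X →L[ℝ] ℝ} (E : EE ℓ) {i j : ι} (hb : 0 < beta μ ℓ i j 1) :
    i ≠ j ∧ ∃ y, ℓ i y = 1 ∧ ℓ j y = 1 ∧ ∀ l, l ≠ i → l ≠ j → ℓ l y < 1 := by
  have hi := E.ne_zero i
  have hij : i ≠ j := by
    rintro rfl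
    rw [beta_self] at hb
    exact lt_irrefl _ hb
  refine ⟨hij, ?_⟩
  simp only [beta, hi, if_false] at hb
  obtain ⟨hj, z, hz1, hz2⟩ := of_alpha_pos _ ((G2_of_EE E).2 i hi) hb
  have hzi : ℓ i (z : X) = 0 := z.2
  refine ⟨av (ℓ i) + z, by simp [hzi, av_spec hi], ?_, fun l hli hlj => ?_⟩
  · simp only [res_apply, Rh, hij.symm, if_false, Pi.one_apply, one_mul] at hz1
    rw [map_add, hz1]; ring
  · have := hz2 l hlj
    simp only [res_apply, Rh, hli, if_false, Pi.one_apply, one_mul] at this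
    rw [map_add]; linarith
end

section
variable {E : Type u} [NormedAddCommGroup E] [InnerProductSpace ℝ E]
  {ι : Type v} [Fintype ι]

theorem mem_hull_iff (p : ι → E) (S : Set ι) (v : E) : v ∈ convexHull ℝ (p '' S) ↔
    ∃ w : ι → ℝ, (∀ j, 0 ≤ w j) ∧ (∀ j, j ∉ S → w j = 0) ∧ ∑ j, w j = 1 ∧ ∑ j, w j • p j = v := by
  classical
  constructor
  · intro hv
    have : p '' S ⊆ {v | ∃ w : ι → ℝ, (∀ j, 0 ≤ w j) ∧ (∀ j, j ∉ S → w j = 0) ∧ ∑ j, w j = 1 ∧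
        ∑ j, w j • p j = v} := by
      rintro _ ⟨i, hi, rfl⟩
      refine ⟨Pi.single i 1, fun j => ?_, fun j hj => ?_, ?_, ?_⟩
      · rw [Pi.single_apply]; split_ifs <;> simp
      · rw [Pi.single_apply, if_neg]; rintro rfl; exact hj hi
      · simp
      · simp [Pi.single_apply]
    refine convexHull_min this ?_ hv
    rintro x ⟨w, h1, h2, h3, rfl⟩ y ⟨w', h1', h2', h3', rfl⟩ a b ha hb hab
    refine ⟨a • w + b • w', fun j => ?_, fun j hj => ?_, ?_, ?_⟩
    · have := h1 j; have := h1' j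
      simp only [Pi.add_apply, Pi.smul_apply, smul_eq_mul]; positivity
    · simp [h2 j hj, h2' j hj]
    · simp only [Pi.add_apply, Pi.smul_apply, smul_eq_mul, Finset.sum_add_distrib, ← Finset.mul_sum, h3, h3']
      linarith
    · simp only [Pi.add_apply, Pi.smul_apply, smul_eq_mul, add_smul, Finset.sum_add_distrib, Finset.smul_sum, mul_smul]
  · rintro ⟨w, h1, h2, h3, rfl⟩
    have e : ∑ j, w j • p j = ∑ j with j ∈ S, w j • p j := by
      rw [Finset.sum_filter]
      refine Finset.sum_congr rfl fun j _ => ?_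
      split_ifs with h
      · rfl
      · simp [h2 j h]
    have e2 : ∑ j with j ∈ S, w j = 1 := by
      rw [← h3, Finset.sum_filter]
      refine Finset.sum_congr rfl fun j _ => ?_
      split_ifs with h
      · rfl
      · simp [h2 j h]
    rw [e]
    exact (convex_convexHull ℝ _).sum_mem (fun j _ => h1 j) e2 fun j hj =>
      subset_convexHull ℝ _ ⟨j, (Finset.mem_filter.1 hj).2, rfl⟩

theorem mem_hull_range_iff (p : ι → E) (v : E) : v ∈ convexHull ℝ (range p) ↔
    ∃ w : ι → ℝ, (∀ j, 0 ≤ w j) ∧ ∑ j, w j = 1 ∧ ∑ j, w j • p j = v := by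
  rw [← image_univ, mem_hull_iff]
  simp

theorem hull_le {p : ι → E} {a : E →L[ℝ] ℝ} {c : ℝ} (h : ∀ j, a (p j) ≤ c) {v : E}
    (hv : v ∈ convexHull ℝ (range p)) : a v ≤ c := by
  have : convexHull ℝ (range p) ⊆ {v | a v ≤ c} :=
    convexHull_min (by rintro _ ⟨j, rfl⟩; exact h j) (convex_halfSpace_le a.toLinearMap.isLinear c)
  exact this hv

/-- the face cut out by a supporting functional -/
theorem face_eq {p : ι → E} {a : E →L[ℝ] ℝ} {c : ℝ} (h : ∀ j, a (p j) ≤ c) :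
    convexHull ℝ (p '' {j | a (p j) = c}) = {v ∈ convexHull ℝ (range p) | a v = c} := by
  ext v
  constructor
  · intro hv
    refine ⟨convexHull_mono (image_subset_range _ _) hv, ?_⟩
    have : convexHull ℝ (p '' {j | a (p j) = c}) ⊆ {v | a v = c} :=
      convexHull_min (by rintro _ ⟨j, hj, rfl⟩; exact hj) (convex_hyperplane a.toLinearMap.isLinear c)
    exact this hv
  · rintro ⟨hv, hc⟩
    obtain ⟨w, h1, h2, h3⟩ := (mem_hull_range_iff p v).1 hv
    refine (mem_hull_iff _ _ _).2 ⟨w, h1, fun j hj => ?_, h2, h3⟩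
    have h4 : ∑ j, w j * (c - a (p j)) = 0 := by
      have : a v = ∑ j, w j * a (p j) := by rw [← h3]; simp
      simp only [mul_sub, Finset.sum_sub_distrib, ← Finset.sum_mul, h2, ← this, hc]; ring
    have h5 := (Finset.sum_eq_zero_iff_of_nonneg fun j _ => mul_nonneg (h1 j) (sub_nonneg.2 (h j))).1 h4 j
      (Finset.mem_univ _)
    rcases mul_eq_zero.1 h5 with h6 | h6
    · exact h6
    · exact absurd (by linarith : a (p j) = c) hj

theorem face_extreme {p : ι → E} {a : E →L[ℝ] ℝ} {c : ℝ} (h : ∀ j, a (p j) ≤ c) :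
    IsExtreme ℝ (convexHull ℝ (range p)) (convexHull ℝ (p '' {j | a (p j) = c})) := by
  rw [face_eq h]
  refine ⟨fun v hv => hv.1, ?_⟩
  rintro x hx y hy z ⟨hz, hzc⟩ ⟨s, t, hs, ht, hst, rfl⟩
  refine ⟨hx, le_antisymm (hull_le h hx) ?_⟩
  have := hull_le h hy
  simp only [map_add, map_smul, smul_eq_mul] at hzc
  have h6 : t * a y ≤ t * c := by gcongr
  have h7 : s * c ≤ s * a x := by
    have : c = s * c + t * c := by rw [← add_mul, hst, one_mul]
    linarith
  exact le_of_mul_le_mul_left h7 hs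

theorem interior_lt {C : Set E} {x : E} (hx : x ∈ interior C) {a : E →L[ℝ] ℝ} {c : ℝ}
    (h : ∀ v ∈ C, a v ≤ c) (ha : a ≠ 0) : a x < c := by
  obtain ⟨w, hw⟩ : ∃ w, a w ≠ 0 := by
    by_contra hc; push Not at hc; exact ha (ContinuousLinearMap.ext hc)
  obtain ⟨w, hw⟩ : ∃ w, 0 < a w := by
    rcases lt_or_gt_of_ne hw with h | h
    · exact ⟨-w, by simpa using h⟩
    · exact ⟨w, h⟩
  have hc : Tendsto (fun t : ℝ => x + t • w) (𝓝[>] 0) (𝓝 x) := by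
    have : Continuous (fun t : ℝ => x + t • w) := by fun_prop
    simpa using (this.tendsto 0).mono_left nhdsWithin_le_nhds
  have h1 := hc.eventually (mem_interior_iff_mem_nhds.1 hx)
  obtain ⟨t, ht, ht0⟩ := (h1.and self_mem_nhdsWithin).exists
  have := h _ ht
  simp only [map_add, map_smul, smul_eq_mul] at this
  have : 0 < t * a w := mul_pos ht0 hw
  linarith

/-- the functionals of the polar -/
noncomputable def Lf (p : ι → E) (x : E) (j : ι) : E →L[ℝ] ℝ := innerSL ℝ (p j - x)

@[simp] theorem Lf_apply (p : ι → E) (x y : E) (j : ι) : Lf p x j y = inner ℝ (p j - x) y := rfl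

theorem Lf_PS {p : ι → E} {x : E} (hx : x ∈ interior (convexHull ℝ (range p))) : PS (Lf p x) := by
  intro y hy
  by_contra hne
  have h1 : ∀ j, innerSL ℝ y (p j) ≤ innerSL ℝ y x := by
    intro j
    have := hy j
    simp only [Lf_apply, inner_sub_left] at this
    simp only [innerSL_apply_apply]
    rw [real_inner_comm, real_inner_comm x y]; linarith
  refine lt_irrefl _ (interior_lt hx (fun v hv => hull_le h1 hv) ?_)
  intro h0
  have : innerSL ℝ y y = 0 := by rw [h0]; rfl
  rw [innerSL_apply_apply, inner_self_eq_zero] at this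
  exact hne this

theorem Lf_EE [FiniteDimensional ℝ E] [Nontrivial E] {p : ι → E} (hV : ∀ l, p l ∉ convexHull ℝ (p '' {l}ᶜ)) {x : E}
    (hx : x ∈ interior (convexHull ℝ (range p))) : EE (Lf p x) := by
  intro l
  obtain ⟨f, c, hf1, hf2⟩ := geometric_hahn_banach_closed_point (convex_convexHull ℝ (p '' {l}ᶜ))
    (((toFinite _).image p).isCompact_convexHull (𝕜 := ℝ)).isClosed (hV l)
  have hfj : ∀ j, j ≠ l → f (p j) < c := fun j hj => hf1 _ (subset_convexHull ℝ _ ⟨j, hj, rfl⟩)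
  have hf0 : f ≠ 0 := by
    rintro rfl
    have hall : ∀ j, j = l := by
      intro j
      by_contra hj
      have := hfj j hj
      simp at this hf2; linarith
    have : range p = {p l} := by
      ext v; constructor
      · rintro ⟨j, rfl⟩; rw [hall j]; rfl
      · rintro rfl; exact ⟨l, rfl⟩
    rw [this, convexHull_singleton, interior_singleton] at hx
    exact hx
  have hle : ∀ j, f (p j) ≤ f (p l) := by
    intro j
    by_cases hj : j = l
    · rw [hj]
    · exact ((hfj j hj).trans hf2).le
  have hlt : f x < f (p l) := interior_lt hx (fun v hv => hull_le hle hv) hf0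
  set a := (InnerProductSpace.toDual ℝ E).symm f with ha
  have hfa : ∀ v, inner ℝ v a = f v := fun v => by
    rw [real_inner_comm, ha, InnerProductSpace.toDual_symm_apply]
  have hd : 0 < f (p l) - f x := by linarith
  refine ⟨(f (p l) - f x)⁻¹ • a, ?_, fun j hj => ?_⟩
  · simp only [Lf_apply, inner_smul_right, hfa, map_sub]
    exact inv_mul_cancel₀ hd.ne'
  · simp only [Lf_apply, inner_smul_right, hfa, map_sub]
    rw [inv_mul_lt_iff₀ hd]
    linarith [hfj j hj]

theorem vert_notMem {p : ι → E} (hinj : Function.Injective p)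
    (hvert : range p = extremePoints ℝ (convexHull ℝ (range p))) (l : ι) :
    p l ∉ convexHull ℝ (p '' {l}ᶜ) := by
  have h1 : p l ∈ extremePoints ℝ (convexHull ℝ (range p)) := by rw [← hvert]; exact ⟨l, rfl⟩
  have h2 := ((convex_convexHull ℝ (range p)).mem_extremePoints_iff_convex_sdiff.1 h1).2
  intro h3
  have : convexHull ℝ (p '' {l}ᶜ) ⊆ convexHull ℝ (range p) \ {p l} := by
    refine convexHull_min ?_ h2
    rintro _ ⟨j, hj, rfl⟩
    exact ⟨subset_convexHull ℝ _ ⟨j, rfl⟩, fun h => hj (hinj h)⟩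
  exact (this h3).2 rfl

theorem edge_extreme {p : ι → E} {x y : E} {i j : ι} (hi : Lf p x i y = 1) (hj : Lf p x j y = 1)
    (hl : ∀ l, l ≠ i → l ≠ j → Lf p x l y < 1) :
    IsExtreme ℝ (convexHull ℝ (range p)) (segment ℝ (p i) (p j)) := by
  have key : ∀ l, innerSL ℝ y (p l) = Lf p x l y + innerSL ℝ y x := by
    intro l
    simp only [Lf_apply, innerSL_apply_apply]
    rw [real_inner_comm, real_inner_comm x y, ← inner_add_left]; simp
  have := face_extreme (p := p) (a := innerSL ℝ y) (c := 1 + innerSL ℝ y x) (fun l => by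
    rw [key]
    by_cases h1 : l = i
    · rw [h1, hi]
    · by_cases h2 : l = j
      · rw [h2, hj]
      · linarith [hl l h1 h2])
  have e : {l | innerSL ℝ y (p l) = 1 + innerSL ℝ y x} = {i, j} := by
    ext l
    simp only [Set.mem_ofPred_eq, key, add_left_inj, mem_insert_iff, mem_singleton_iff]
    constructor
    · intro h
      by_contra hc
      push Not at hc
      exact absurd h (hl l hc.1 hc.2).ne
    · rintro (rfl | rfl)
      · exact hi
      · exact hj
  rw [e, image_pair, convexHull_pair] at this
  exact this
end

end ModulePoly

section ModuleCont
open MeasureTheory Set Filter Topology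
set_option linter.unusedSectionVars false

universe u v

section ContA
variable {X : Type u} [NormedAddCommGroup X] [NormedSpace ℝ X] {ι : Type v} [Fintype ι]
  [DecidableEq ι] [FiniteDimensional ℝ X] [MeasurableSpace X] [BorelSpace X]
  (μ : Measure X) [μ.IsAddHaarMeasure]

noncomputable def alphaAux (f : X →L[ℝ] ℝ) (ℓ : ι → X →L[ℝ] ℝ) (R : ι → ℝ) : ℝ :=
  open Classical in
  if f = 0 then 0 else
    Vol (nu μ f) (fun j => (ℓ j).comp (LinearMap.ker (f : X →ₗ[ℝ] ℝ)).subtypeL) R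

theorem alpha_eq_aux (ℓ : ι → X →L[ℝ] ℝ) (i : ι) (h : ι → ℝ) :
    alpha μ ℓ i h = alphaAux μ (ℓ i) ℓ (Rh ℓ i h) := by
  unfold alpha alphaAux
  split_ifs <;> rfl

theorem alpha_congr {ℓ ℓ' : ι → X →L[ℝ] ℝ} {i : ι} {h h' : ι → ℝ} (hi : ℓ' i = ℓ i)
    (hres : ∀ j z, ℓ i z = 0 → ℓ' j z = ℓ j z) (hR : Rh ℓ' i h' = Rh ℓ i h) :
    alpha μ ℓ' i h' = alpha μ ℓ i h := by
  rw [alpha_eq_aux, alpha_eq_aux, hi, hR]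
  unfold alphaAux
  split_ifs
  · rfl
  · congr 1
    ext j z
    exact hres j z z.2

def coneF (ℓ : ι → X →L[ℝ] ℝ) (i j : ι) : X →L[ℝ] ℝ := if j = i then ℓ i else ℓ j - ℓ i
def coneH (i j : ι) : ℝ := if j = i then 1 else 0

theorem coneF_self (ℓ : ι → X →L[ℝ] ℝ) (i : ι) : coneF ℓ i i = ℓ i := if_pos rfl
theorem coneF_ne (ℓ : ι → X →L[ℝ] ℝ) {i j : ι} (h : j ≠ i) : coneF ℓ i j = ℓ j - ℓ i := if_neg h
theorem coneH_self (i : ι) : coneH i i = 1 := if_pos rfl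
theorem coneH_ne {i j : ι} (h : j ≠ i) : coneH i j = 0 := if_neg h

theorem cone_sub (ℓ : ι → X →L[ℝ] ℝ) (i : ι) : poly (coneF ℓ i) (coneH i) ⊆ poly ℓ 1 := by
  intro x hx j
  have h1 := hx i
  rw [coneF_self, coneH_self] at h1
  by_cases hj : j = i
  · subst hj; simpa using h1
  · have h2 := hx j
    rw [coneF_ne _ hj, coneH_ne hj] at h2
    simp only [sub_apply] at h2
    simp only [Pi.one_apply]; linarith

theorem cone_PS {ℓ : ι → X →L[ℝ] ℝ} (H : PS ℓ) (i : ι) : PS (coneF ℓ i) := by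
  intro x hx
  apply H
  intro j
  have h1 := hx i
  rw [coneF_self] at h1
  by_cases hj : j = i
  · subst hj; simpa using h1
  · have h2 := hx j
    rw [coneF_ne _ hj] at h2
    simp only [sub_apply] at h2
    linarith

theorem cone_ne_zero {ℓ : ι → X →L[ℝ] ℝ} (E : EE ℓ) (i j : ι) : coneF ℓ i j ≠ 0 := by
  by_cases hj : j = i
  · subst hj; rw [coneF_self]; exact E.ne_zero _
  · rw [coneF_ne _ hj]
    intro h
    have := E.parallel hj (c := 1) (by rw [one_smul]; exact sub_eq_zero.1 h)
    linarith

theorem cone_G1 {ℓ : ι → X →L[ℝ] ℝ} (E : EE ℓ) (i : ι) : G1 (coneF ℓ i) (coneH i) := by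
  refine ⟨fun j hj => absurd hj (cone_ne_zero E i j), fun k hk j hj => ?_⟩
  unfold Rh
  by_cases hjk : j = k
  · rw [if_pos hjk]; norm_num
  rw [if_neg hjk]
  have hc := res_eq_zero hk hj
  by_cases hki : k = i
  · subst hki
    rw [coneH_ne hjk, coneH_self, zero_sub, one_mul]
    intro h0
    rw [neg_eq_zero] at h0
    rw [h0, zero_smul] at hc
    exact cone_ne_zero E _ _ hc
  · rw [coneH_ne hki]
    by_cases hji : j = i
    · subst hji; rw [coneH_self]; norm_num
    · exfalso
      set c := coneF ℓ i j (av (coneF ℓ i k))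
      rw [coneF_ne _ hji, coneF_ne _ hki] at hc
      refine E.not_collinear (i := i) (j := k) (l := j) (Ne.symm hki) (Ne.symm hji) (Ne.symm hjk) (c := c) ?_
      intro y
      have := congrArg (fun f : X →L[ℝ] ℝ => f y) hc
      simp only [sub_apply, smul_apply, smul_eq_mul] at this
      linarith

theorem alpha_eq_cone {ℓ : ι → X →L[ℝ] ℝ} (H : PS ℓ) (E : EE ℓ) (i : ι) :
    alpha μ ℓ i 1 = Module.finrank ℝ X * Vol μ (coneF ℓ i) (coneH i) := by
  rw [← alpha_H μ (cone_PS H i) (cone_G1 E i), Finset.sum_eq_single i, coneH_self, mul_one]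
  · symm
    apply alpha_congr
    · exact coneF_self _ _
    · intro j z hz
      by_cases hj : j = i
      · subst hj; rw [coneF_self]
      · rw [coneF_ne _ hj, sub_apply, hz, sub_zero]
    · funext j
      unfold Rh
      by_cases hj : j = i
      · rw [if_pos hj, if_pos hj]
      · rw [if_neg hj, if_neg hj, coneF_self, coneF_ne _ hj, coneH_self, coneH_ne hj,
          sub_apply]
        have : ℓ i (av (ℓ i)) = 1 := av_spec (E.ne_zero i)
        rw [this]; simp only [Pi.one_apply]; ring
  · intro j _ hj
    rw [coneH_ne hj, mul_zero]
  · intro h; exact absurd (Finset.mem_univ _) h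
end ContA

section ContB
variable {E : Type u} [NormedAddCommGroup E] [InnerProductSpace ℝ E] {ι : Type v} [Fintype ι]
  [DecidableEq ι] [FiniteDimensional ℝ E] [MeasurableSpace E] [BorelSpace E] [Nontrivial E]
  (μ : Measure E) [μ.IsAddHaarMeasure]

theorem poly_bdd {p : ι → E} {x0 x : E} {r : ℝ} (hr : 0 < r)
    (hb : Metric.closedBall x0 (2 * r) ⊆ convexHull ℝ (range p)) (hx : dist x x0 ≤ r) :
    poly (Lf p x) 1 ⊆ Metric.closedBall 0 (1 / r) := by
  intro y hy
  rw [mem_closedBall_zero_iff, le_div_iff₀ hr]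
  by_cases h0 : y = 0
  · subst h0; simp
  have hn : 0 < ‖y‖ := norm_pos_iff.2 h0
  have hv : x + (r / ‖y‖) • y ∈ convexHull ℝ (range p) := by
    apply hb
    rw [Metric.mem_closedBall]
    calc dist (x + (r / ‖y‖) • y) x0 ≤ dist (x + (r / ‖y‖) • y) x + dist x x0 := dist_triangle _ _ _
      _ ≤ r + r := by
        gcongr
        rw [dist_eq_norm, add_sub_cancel_left, norm_smul, Real.norm_of_nonneg (by positivity)]
        rw [div_mul_cancel₀ _ hn.ne']
      _ = 2 * r := by ring
  have := hull_le (p := p) (a := innerSL ℝ y) (c := 1 + inner ℝ x y) (fun j => by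
    have := hy j
    simp only [Lf_apply, Pi.one_apply, inner_sub_left] at this
    rw [innerSL_apply_apply, real_inner_comm]; linarith) hv
  rw [innerSL_apply_apply, inner_add_right, real_inner_smul_right, real_inner_self_eq_norm_sq,
    real_inner_comm] at this
  have h3 : r / ‖y‖ * ‖y‖ ^ 2 = ‖y‖ * r := by field_simp
  linarith

theorem alpha_cont {p : ι → E} (hV : ∀ l, p l ∉ convexHull ℝ (p '' {l}ᶜ)) (i : ι) :
    ContinuousOn (fun x => alpha μ (Lf p x) i 1) (interior (convexHull ℝ (range p))) := by
  intro x0 hx0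
  apply ContinuousAt.continuousWithinAt
  have hnh := isOpen_interior.mem_nhds hx0
  obtain ⟨r, hr, hb⟩ : ∃ r > 0, Metric.closedBall x0 (2 * r) ⊆ convexHull ℝ (range p) := by
    obtain ⟨s, hs, hs'⟩ := Metric.nhds_basis_closedBall.mem_iff.1 (mem_interior_iff_mem_nhds.1 hx0)
    exact ⟨s / 2, by positivity, by convert hs' using 2; ring⟩
  have key : Tendsto (fun x => Module.finrank ℝ E * Vol μ (coneF (Lf p x) i) (coneH i)) (𝓝 x0)
      (𝓝 (Module.finrank ℝ E * Vol μ (coneF (Lf p x0) i) (coneH i))) := by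
    apply Tendsto.const_mul
    refine Vol_tendsto μ (cone_G1 (Lf_EE hV hx0) i).1 (fun x => coneF (Lf p x) i) (fun _ => coneH i)
      ?_ tendsto_const_nhds (B := Metric.closedBall 0 (1 / r)) Metric.isBounded_closedBall
      Metric.isClosed_closedBall.measurableSet ?_
    · intro j y
      have hc : ∀ j, Continuous fun x => Lf p x j y := by
        intro j; simp only [Lf_apply]; fun_prop
      by_cases hj : j = i
      · subst hj
        simp only [coneF_self]
        exact (hc _).tendsto _
      · simp only [coneF_ne _ hj, sub_apply]
        exact ((hc j).sub (hc i)).tendsto _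
    · filter_upwards [Metric.closedBall_mem_nhds x0 hr] with x hx
      exact (cone_sub _ _).trans (poly_bdd hr hb hx)
  unfold ContinuousAt
  beta_reduce
  rw [alpha_eq_cone μ (Lf_PS hx0) (Lf_EE hV hx0)]
  refine key.congr' ?_
  filter_upwards [hnh] with x hx
  rw [alpha_eq_cone μ (Lf_PS hx) (Lf_EE hV hx)]

/-- normalized weights -/
noncomputable def Wt (p : ι → E) (x : E) (i : ι) : ℝ :=
  alpha μ (Lf p x) i 1 / ∑ j, alpha μ (Lf p x) j 1

theorem alpha_pos' {p : ι → E} (hV : ∀ l, p l ∉ convexHull ℝ (p '' {l}ᶜ)) {x : E}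
    (hx : x ∈ interior (convexHull ℝ (range p))) (i : ι) : 0 < alpha μ (Lf p x) i 1 :=
  alpha_pos μ (Lf_PS hx) ((Lf_EE hV hx).ne_zero i) (Lf_EE hV hx i)

theorem sum_alpha_pos {p : ι → E} (hV : ∀ l, p l ∉ convexHull ℝ (p '' {l}ᶜ)) {x : E}
    (hx : x ∈ interior (convexHull ℝ (range p))) : 0 < ∑ i, alpha μ (Lf p x) i 1 := by
  apply Finset.sum_pos (fun i _ => alpha_pos' μ hV hx i)
  have : (convexHull ℝ (range p)).Nonempty := ⟨x, interior_subset hx⟩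
  rw [convexHull_nonempty_iff, range_nonempty_iff_nonempty] at this
  exact Finset.univ_nonempty_iff.2 this

theorem alpha_sub {p : ι → E} (hV : ∀ l, p l ∉ convexHull ℝ (p '' {l}ᶜ)) {x : E}
    (hx : x ∈ interior (convexHull ℝ (range p))) :
    ∑ i, alpha μ (Lf p x) i 1 • p i = (∑ i, alpha μ (Lf p x) i 1) • x := by
  rw [← sub_eq_zero]
  rw [Finset.sum_smul, ← Finset.sum_sub_distrib]
  have := alpha_T μ (Lf_PS hx) (G2_of_EE (Lf_EE hV hx)).g1 (∑ i, (alpha μ (Lf p x) i 1 • p i - alpha μ (Lf p x) i 1 • x))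
  rw [← inner_self_eq_zero (𝕜 := ℝ)]
  nth_rewrite 1 [sum_inner]
  rw [← this]
  refine Finset.sum_congr rfl fun i _ => ?_
  rw [← smul_sub, real_inner_smul_left, Lf_apply]

theorem Wt_spec {p : ι → E} (hV : ∀ l, p l ∉ convexHull ℝ (p '' {l}ᶜ)) :
    (∀ i, ContinuousOn (fun x => Wt μ p x i) (interior (convexHull ℝ (range p)))) ∧
    (∀ x ∈ interior (convexHull ℝ (range p)), ∀ i, 0 ≤ Wt μ p x i) ∧
    (∀ x ∈ interior (convexHull ℝ (range p)), ∑ i, Wt μ p x i = 1) ∧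
    (∀ x ∈ interior (convexHull ℝ (range p)), ∑ i, Wt μ p x i • p i = x) := by
  refine ⟨fun i => ?_, fun x hx i => ?_, fun x hx => ?_, fun x hx => ?_⟩
  · exact (alpha_cont μ hV i).div (continuousOn_finsetSum _ fun j _ => alpha_cont μ hV j)
      fun x hx => (sum_alpha_pos μ hV hx).ne'
  · exact div_nonneg (alpha_pos' μ hV hx i).le (sum_alpha_pos μ hV hx).le
  · unfold Wt
    rw [← Finset.sum_div, div_self (sum_alpha_pos μ hV hx).ne']
  · unfold Wt
    have := sum_alpha_pos μ hV hx
    simp_rw [div_eq_inv_mul, mul_smul]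
    rw [← Finset.smul_sum, alpha_sub μ hV hx, smul_smul, inv_mul_cancel₀ this.ne', one_smul]

theorem Wt_zero {p q : ι → E} (hV : ∀ l, p l ∉ convexHull ℝ (p '' {l}ᶜ)) {x : E}
    (hx : x ∈ interior (convexHull ℝ (range p))) (h : ∑ i, Wt μ p x i • q i = 0) :
    ∑ i, alpha μ (Lf p x) i 1 • q i = 0 := by
  unfold Wt at h
  simp_rw [div_eq_inv_mul, mul_smul] at h
  rw [← Finset.smul_sum, smul_eq_zero] at h
  rcases h with h | h
  · exact absurd h (inv_ne_zero (sum_alpha_pos μ hV hx).ne')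
  · exact h
end ContB

end ModuleCont

section ModuleTopo1
open Set Filter Topology
set_option linter.unusedSectionVars false

universe u v

section Topo1
variable {E : Type u} [NormedAddCommGroup E] [InnerProductSpace ℝ E]
  {ι : Type v} [Fintype ι]

theorem sub_of_vert_mem {q : ι → E} (hV : ∀ i, q i ∉ convexHull ℝ (q '' {i}ᶜ)) {T : Set ι} {i : ι}
    (h : q i ∈ convexHull ℝ (q '' T)) : i ∈ T := by
  by_contra hi
  apply hV i
  refine convexHull_mono (image_mono ?_) h
  intro j hj
  rw [mem_compl_singleton_iff]
  rintro rfl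
  exact hi hj

/-- an extreme set containing a convex combination contains the vertices involved -/
theorem face_supp {q : ι → E} (hV : ∀ i, q i ∉ convexHull ℝ (q '' {i}ᶜ)) {T : Set ι}
    (hT : IsExtreme ℝ (convexHull ℝ (range q)) (convexHull ℝ (q '' T))) {w : ι → ℝ}
    (hw : ∀ i, 0 ≤ w i) (hw1 : ∑ i, w i = 1) (hm : ∑ i, w i • q i ∈ convexHull ℝ (q '' T)) {i : ι}
    (hi : 0 < w i) : i ∈ T := by
  classical
  apply sub_of_vert_mem hV
  have hs : w i + ∑ j ∈ Finset.univ.erase i, w j = 1 := by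
    rw [Finset.add_sum_erase _ _ (Finset.mem_univ i), hw1]
  have hs2 : w i • q i + ∑ j ∈ Finset.univ.erase i, w j • q j = ∑ j, w j • q j :=
    Finset.add_sum_erase _ (fun j => w j • q j) (Finset.mem_univ i)
  have hs0 : 0 ≤ ∑ j ∈ Finset.univ.erase i, w j := Finset.sum_nonneg fun j _ => hw j
  rcases hs0.eq_or_lt with h0 | h0
  · have hz : ∀ j ∈ Finset.univ.erase i, w j = 0 :=
      (Finset.sum_eq_zero_iff_of_nonneg fun j _ => hw j).1 h0.symm
    have : ∑ j ∈ Finset.univ.erase i, w j • q j = 0 :=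
      Finset.sum_eq_zero fun j hj => by rw [hz j hj, zero_smul]
    rw [← h0, add_zero] at hs
    rw [this, add_zero, hs, one_smul] at hs2
    rwa [hs2]
  · set c := ∑ j ∈ Finset.univ.erase i, w j with hc
    set v := c⁻¹ • ∑ j ∈ Finset.univ.erase i, w j • q j with hv
    have hvm : v ∈ convexHull ℝ (range q) := by
      have := Finset.centerMass_mem_convexHull (R := ℝ) (Finset.univ.erase i) (w := w) (z := q) (s := range q)
        (fun j _ => hw j) h0 (fun j _ => mem_range_self j)
      exact this
    refine hT.left_mem_of_mem_openSegment (subset_convexHull _ _ (mem_range_self i)) hvm hm ?_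
    refine ⟨w i, c, hi, h0, hs, ?_⟩
    rw [hv, smul_smul, mul_inv_cancel₀ h0.ne', one_smul, hs2]

theorem extreme_eq {K C : Set E} (h : IsExtreme ℝ K C) {x : E} (hx : x ∈ interior K)
    (hxC : x ∈ C) : K ⊆ C := by
  intro y hy
  have hc : Tendsto (fun t : ℝ => x + t • (x - y)) (𝓝[>] 0) (𝓝 x) := by
    have : Continuous (fun t : ℝ => x + t • (x - y)) := by fun_prop
    have := this.tendsto 0
    simp only [zero_smul, add_zero] at this
    exact this.mono_left nhdsWithin_le_nhds
  have h1 : ∀ᶠ t : ℝ in 𝓝[>] 0, x + t • (x - y) ∈ K :=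
    hc.eventually (mem_interior_iff_mem_nhds.1 hx)
  obtain ⟨t, ht, ht0⟩ := (h1.and self_mem_nhdsWithin).exists
  refine h.left_mem_of_mem_openSegment hy ht hxC ⟨t / (1 + t), 1 / (1 + t), by positivity, by positivity,
    by field_simp; ring, ?_⟩
  have hne : 1 + t ≠ 0 := by positivity
  rw [smul_add, smul_smul, smul_sub, ← sub_eq_zero]
  have e1 : 1 / (1 + t) * t = t / (1 + t) := by ring
  have e2 : (1 / (1 + t)) + t / (1 + t) = 1 := by field_simp
  rw [e1]
  calc _ = ((1 / (1 + t)) + t / (1 + t) - 1) • x := by module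
    _ = 0 := by rw [e2, sub_self, zero_smul]

theorem hull_eq_const {p : ι → E} {a : E →L[ℝ] ℝ} {c : ℝ} (h : ∀ j, a (p j) = c) {v : E}
    (hv : v ∈ convexHull ℝ (range p)) : a v = c := by
  apply le_antisymm (hull_le (fun j => (h j).le) hv)
  have := hull_le (p := p) (a := -a) (c := -c) (fun j => by simp [h j]) hv
  simp at this
  exact this

theorem face_proper {p q : ι → E} (hp0 : (0 : E) ∈ convexHull ℝ (range p))
    (hV : ∀ i, q i ∉ convexHull ℝ (q '' {i}ᶜ))
    {a : E →L[ℝ] ℝ}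
    (hT : IsExtreme ℝ (convexHull ℝ (range q)) (convexHull ℝ (q '' {j | a (p j) = 1})))
    {v : E} (hv : v ∈ convexHull ℝ (q '' {j | a (p j) = 1})) :
    v ∉ interior (convexHull ℝ (range q)) := by
  intro hi
  have hs := extreme_eq hT hi hv
  have : ∀ j, a (p j) = 1 := fun j =>
    sub_of_vert_mem hV (T := {j | a (p j) = 1}) (hs (subset_convexHull _ _ (mem_range_self j)))
  have := hull_eq_const this hp0
  simp at this

theorem support_fun {K : Set E} (hK : Convex ℝ K) (h0 : (0 : E) ∈ interior K) {x : E}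
    (hx : x ∉ interior K) : ∃ a : E →L[ℝ] ℝ, a x = 1 ∧ ∀ v ∈ K, a v ≤ 1 := by
  obtain ⟨f, hf⟩ := geometric_hahn_banach_open_point hK.interior isOpen_interior hx
  have hpos : 0 < f x := by simpa using hf 0 h0
  refine ⟨(f x)⁻¹ • f, ?_, fun v hv => ?_⟩
  · simp [hpos.ne']
  · have h1 : v ∈ closure (interior K) := by
      rw [hK.closure_interior_eq_closure_of_nonempty_interior ⟨0, h0⟩]
      exact subset_closure hv
    have h2 : closure (interior K) ⊆ {v | f v ≤ f x} :=
      closure_minimal (fun a ha => (hf a ha).le) (isClosed_le f.continuous continuous_const)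
    have h3 : f v ≤ f x := h2 h1
    simp only [smul_apply, smul_eq_mul]
    rw [inv_mul_le_iff₀ hpos, mul_one]; exact h3

variable [FiniteDimensional ℝ E]

theorem hull_compact (q : ι → E) (S : Set ι) : IsCompact (convexHull ℝ (q '' S)) :=
  (toFinite _).isCompact_convexHull ℝ

theorem hull_compact' (q : ι → E) : IsCompact (convexHull ℝ (range q)) :=
  (finite_range q).isCompact_convexHull ℝ

theorem gauge_hull_pos {q : ι → E} (hq0 : (0 : E) ∈ interior (convexHull ℝ (range q))) {v : E}
    (hv : v ≠ 0) : 0 < gauge (convexHull ℝ (range q)) v :=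
  (gauge_pos (absorbent_nhds_zero (mem_interior_iff_mem_nhds.1 hq0))
    ((NormedSpace.isVonNBounded_iff ℝ).2 (hull_compact' q).isBounded)).2 hv

theorem gauge_scaled {q : ι → E} (hq0 : (0 : E) ∈ interior (convexHull ℝ (range q))) {v : E}
    (hv : v ≠ 0) : gauge (convexHull ℝ (range q)) ((gauge (convexHull ℝ (range q)) v)⁻¹ • v) = 1 := by
  have := gauge_hull_pos hq0 hv
  rw [gauge_smul_of_nonneg (by positivity), smul_eq_mul, inv_mul_cancel₀ this.ne']

theorem mem_of_gauge_le {q : ι → E} (hq0 : (0 : E) ∈ interior (convexHull ℝ (range q))) {v : E}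
    (hv : gauge (convexHull ℝ (range q)) v ≤ 1) : v ∈ convexHull ℝ (range q) := by
  rw [gauge_le_one_iff_mem_closure (convex_convexHull ℝ _) (mem_interior_iff_mem_nhds.1 hq0),
    (hull_compact' q).isClosed.closure_eq] at hv
  exact hv

theorem exists_eta {p q : ι → E} 
    (hq0 : (0 : E) ∈ interior (convexHull ℝ (range q)))
    (hVq : ∀ i, q i ∉ convexHull ℝ (q '' {i}ᶜ))
    (H1 : ∀ a : E →L[ℝ] ℝ, (∀ j, a (p j) ≤ 1) →
      IsExtreme ℝ (convexHull ℝ (range q)) (convexHull ℝ (q '' {j | a (p j) = 1})))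
    (H2 : ∀ b : E →L[ℝ] ℝ, (∀ j, b (q j) ≤ 1) →
      ∃ a : E →L[ℝ] ℝ, (∀ j, a (p j) ≤ 1) ∧ ∀ j, b (q j) = 1 → a (p j) = 1) :
    ∃ η : C({v : E // v ≠ 0}, E), (∀ v, η v ≠ 0) ∧
      ∀ v : {v : E // v ≠ 0}, ∀ a : E →L[ℝ] ℝ, (∀ j, a (p j) ≤ 1) →
      (gauge (convexHull ℝ (range q)) v.1)⁻¹ • v.1 ∈ convexHull ℝ (q '' {j | a (p j) = 1}) →
      0 < a (η v) := by
  set Q := convexHull ℝ (range q) with hQ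
  have hQc : Convex ℝ Q := convex_convexHull ℝ _
  have hQn : Q ∈ 𝓝 (0 : E) := mem_interior_iff_mem_nhds.1 hq0
  let uu : {v : E // v ≠ 0} → E := fun v => (gauge Q v.1)⁻¹ • v.1
  have huc : Continuous uu := by
    refine Continuous.smul (Continuous.inv₀ ((continuous_gauge hQc hQn).comp continuous_subtype_val) ?_)
      continuous_subtype_val
    intro v; exact (gauge_hull_pos hq0 v.2).ne'
  have hug : ∀ v, gauge Q (uu v) = 1 := fun v => gauge_scaled hq0 v.2
  have hum : ∀ v, uu v ∈ Q := fun v => mem_of_gauge_le hq0 (hug v).le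
  have hun : ∀ v, uu v ∉ interior Q := fun v h =>
    ((gauge_lt_one_iff_mem_interior hQc hQn).2 h).ne (hug v)
  let C : {v : E // v ≠ 0} → Set E := fun v =>
    {w | ∀ a : E →L[ℝ] ℝ, (∀ j, a (p j) ≤ 1) → uu v ∈ convexHull ℝ (q '' {j | a (p j) = 1}) → 0 < a w}
  have hCc : ∀ v, Convex ℝ (C v) := by
    intro v x hx y hy s t hs ht hst a ha hm
    have h1 := hx a ha hm
    have h2 := hy a ha hm
    rw [map_add, map_smul, map_smul, smul_eq_mul, smul_eq_mul]
    rcases hs.eq_or_lt with h | h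
    · have : t = 1 := by linarith
      rw [← h, this]; simpa using h2
    · have := mul_pos h h1
      have := mul_nonneg ht h2.le
      linarith
  have hloc : ∀ v, ∃ c, ∀ᶠ v' in 𝓝 v, c ∈ C v' := by
    intro v
    obtain ⟨w, hw, hw1, hwv⟩ := (mem_hull_range_iff q (uu v)).1 (hum v)
    refine ⟨∑ i, w i • p i, ?_⟩
    have hev : ∀ᶠ v' in 𝓝 v, ∀ S : Set ι, uu v' ∈ convexHull ℝ (q '' S) → uu v ∈ convexHull ℝ (q '' S) := by
      rw [eventually_all]
      intro S
      by_cases hS : uu v ∈ convexHull ℝ (q '' S)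
      · exact Eventually.of_forall fun _ _ => hS
      · have := huc.continuousAt.eventually ((hull_compact q S).isClosed.isOpen_compl.mem_nhds hS)
        filter_upwards [this] with v' hv' h
        exact absurd h hv'
    filter_upwards [hev] with v' hv' a ha hm
    have hm' := hv' _ hm
    have hsup : ∀ i, 0 < w i → a (p i) = 1 := fun i hi =>
      face_supp hVq (H1 a ha) hw hw1 (by rw [hwv]; exact hm') hi
    have : a (∑ i, w i • p i) = 1 := by
      rw [map_sum, ← hw1]
      refine Finset.sum_congr rfl fun i _ => ?_
      rw [map_smul, smul_eq_mul]
      rcases (hw i).eq_or_lt with h | h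
      · rw [← h, zero_mul]
      · rw [hsup i h, mul_one]
    rw [this]; norm_num
  obtain ⟨η, hη⟩ := exists_continuous_forall_mem_convex_of_local_const hCc hloc
  refine ⟨η, fun v h0 => ?_, fun v a ha hm => hη v a ha hm⟩
  obtain ⟨b, hb1, hb⟩ := support_fun hQc hq0 (hun v)
  have hbq : ∀ j, b (q j) ≤ 1 := fun j => hb _ (subset_convexHull _ _ (mem_range_self j))
  obtain ⟨a, ha, hab⟩ := H2 b hbq
  have hm : uu v ∈ convexHull ℝ (q '' {j | a (p j) = 1}) := by
    have : uu v ∈ convexHull ℝ (q '' {j | b (q j) = 1}) := by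
      rw [face_eq hbq]; exact ⟨hum v, hb1⟩
    exact convexHull_mono (image_mono fun j hj => hab j hj) this
  have := hη v a ha hm
  rw [h0, map_zero] at this
  exact lt_irrefl _ this
end Topo1

end ModuleTopo1

section ModuleTopo2
open Set Filter Topology
set_option linter.unusedSectionVars false

universe u v

section Topo2
variable {E : Type u} [NormedAddCommGroup E] [InnerProductSpace ℝ E]
  {ι : Type v} [Fintype ι] [FiniteDimensional ℝ E]

/-- Brouwer step: at each level `t < 1` there is a point where the field points inwards -/
theorem level_point {p : ι → E} (hp0 : (0 : E) ∈ interior (convexHull ℝ (range p)))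
    (F : E → E) (hF : ContinuousOn F (interior (convexHull ℝ (range p))))
    (hne : ∀ x ∈ interior (convexHull ℝ (range p)), F x ≠ 0) {t : ℝ} (ht0 : 0 < t) (ht1 : t < 1) :
    ∃ (y : E) (s : ℝ), gauge (convexHull ℝ (range p)) y = t ∧ 0 ≤ s ∧ F y = -(s • y) := by
  set P := convexHull ℝ (range p) with hP
  have hPc : Convex ℝ P := convex_convexHull ℝ _
  have hPn : P ∈ 𝓝 (0 : E) := mem_interior_iff_mem_nhds.1 hp0
  have hg := continuous_gauge hPc hPn
  set m : E → ℝ := fun x => max 1 (gauge P x / t) with hm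
  have hmc : Continuous m := by fun_prop
  have hm1 : ∀ x, 1 ≤ m x := fun x => le_max_left _ _
  have hm0 : ∀ x, m x ≠ 0 := fun x => (zero_lt_one.trans_le (hm1 x)).ne'
  set ρ : E → E := fun x => (m x)⁻¹ • x with hρ
  have hρc : Continuous ρ := (hmc.inv₀ hm0).smul continuous_id
  have hρi : ∀ x, ρ x ∈ interior P := by
    intro x
    rw [← gauge_lt_one_iff_mem_interior hPc hPn]
    have : gauge P (ρ x) = (m x)⁻¹ * gauge P x := by
      rw [hρ]; simp only
      rw [gauge_smul_of_nonneg (inv_nonneg.2 (zero_le_one.trans (hm1 x))), smul_eq_mul]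
    rw [this, inv_mul_lt_iff₀ (zero_lt_one.trans_le (hm1 x)), mul_one]
    have h1 : gauge P x / t ≤ m x := le_max_right _ _
    rw [div_le_iff₀ ht0] at h1
    have h2 : m x * t < m x := by nlinarith [hm1 x]
    linarith
  set c : E → ℝ := fun x => max 0 (min 1 (2 - gauge P x / t)) with hc
  have hcc : Continuous c := by fun_prop
  set g : E → E := fun x => c x • F (ρ x) + (1 - c x) • x with hgdef
  have hFρ : Continuous fun x => F (ρ x) := hF.comp_continuous hρc hρi
  have hgc : Continuous g := (hcc.smul hFρ).add ((continuous_const.sub hcc).smul continuous_id)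
  obtain ⟨M, hM⟩ := (hull_compact' p).isBounded.subset_closedBall (0 : E)
  set M' := max M 1 with hM'
  have hM'pos : 0 < M' := lt_max_of_lt_right one_pos
  have hsub : P ⊆ Metric.closedBall 0 M' := hM.trans (Metric.closedBall_subset_closedBall (le_max_left _ _))
  obtain ⟨x, hx⟩ := exists_zero g hgc (R := 2 * M') (by positivity) (by
    intro x hx
    have h1 := le_gauge_of_subset_closedBall (x := x) (absorbent_nhds_zero hPn) hM'pos.le hsub
    have h2 : 2 ≤ ‖x‖ / M' := by rw [le_div_iff₀ hM'pos]; exact hx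
    have h3 : 2 ≤ gauge P x / t := by
      rw [le_div_iff₀ ht0]; nlinarith
    have : c x = 0 := by
      rw [hc]; simp only
      apply max_eq_left
      exact (min_le_right _ _).trans (by linarith)
    rw [hgdef]; simp only
    rw [this]; simp)
  have hx' : c x • F (ρ x) + (1 - c x) • x = 0 := hx
  have hc1 : c x ≤ 1 := max_le zero_le_one (min_le_left _ _)
  have hc0 : 0 ≤ c x := le_max_left _ _
  by_cases hct : c x = 1
  · rw [hct] at hx'
    simp at hx'
    exact absurd hx' (hne _ (hρi x))
  have hγ : t < gauge P x := by
    by_contra h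
    push Not at h
    apply hct
    have : gauge P x / t ≤ 1 := by rw [div_le_one ht0]; exact h
    rw [hc]; simp only
    rw [min_eq_left (by linarith)]; norm_num
  have hmx : m x = gauge P x / t := by
    apply max_eq_right
    rw [one_le_div ht0]; exact hγ.le
  by_cases hcz : c x = 0
  · rw [hcz] at hx'
    simp at hx'
    rw [hx', gauge_zero] at hγ
    linarith
  have hcp : 0 < c x := lt_of_le_of_ne hc0 (Ne.symm hcz)
  refine ⟨ρ x, (1 - c x) / c x * m x, ?_, ?_, ?_⟩
  · rw [hρ]; simp only
    rw [gauge_smul_of_nonneg (inv_nonneg.2 (zero_le_one.trans (hm1 x))), smul_eq_mul, hmx]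
    have : gauge P x ≠ 0 := by linarith
    field_simp
  · have := hm1 x
    apply mul_nonneg (div_nonneg (by linarith) hc0) (by linarith)
  · have h1 : ((1 - c x) / c x * m x) • ρ x = ((1 - c x) / c x) • x := by
      rw [hρ]; simp only
      rw [smul_smul, mul_assoc, mul_inv_cancel₀ (hm0 x), mul_one]
    rw [h1, eq_neg_iff_add_eq_zero]
    have h2 : c x • (F (ρ x) + ((1 - c x) / c x) • x) = 0 := by
      rw [smul_add, smul_smul, mul_div_cancel₀ _ hcz, hx']
    exact (smul_eq_zero.1 h2).resolve_left hcz

theorem topo {p q : ι → E} (hp0 : (0 : E) ∈ interior (convexHull ℝ (range p)))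
    (hq0 : (0 : E) ∈ interior (convexHull ℝ (range q)))
    (hVq : ∀ i, q i ∉ convexHull ℝ (q '' {i}ᶜ))
    (H1 : ∀ a : E →L[ℝ] ℝ, (∀ j, a (p j) ≤ 1) →
      IsExtreme ℝ (convexHull ℝ (range q)) (convexHull ℝ (q '' {j | a (p j) = 1})))
    (H2 : ∀ b : E →L[ℝ] ℝ, (∀ j, b (q j) ≤ 1) →
      ∃ a : E →L[ℝ] ℝ, (∀ j, a (p j) ≤ 1) ∧ ∀ j, b (q j) = 1 → a (p j) = 1)
    (W : E → ι → ℝ) (hWc : ∀ i, ContinuousOn (fun x => W x i) (interior (convexHull ℝ (range p))))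
    (hW0 : ∀ x ∈ interior (convexHull ℝ (range p)), ∀ i, 0 ≤ W x i)
    (hW1 : ∀ x ∈ interior (convexHull ℝ (range p)), ∑ i, W x i = 1)
    (hWx : ∀ x ∈ interior (convexHull ℝ (range p)), ∑ i, W x i • p i = x) :
    ∃ x ∈ interior (convexHull ℝ (range p)), ∑ i, W x i • q i = 0 := by
  classical
  by_contra hcon
  push Not at hcon
  obtain ⟨η, hη0, hη⟩ := exists_eta hq0 hVq H1 H2
  set P := convexHull ℝ (range p) with hP
  have hPc : Convex ℝ P := convex_convexHull ℝ _
  have hPn : P ∈ 𝓝 (0 : E) := mem_interior_iff_mem_nhds.1 hp0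
  have hg := continuous_gauge hPc hPn
  set φ : E → E := fun x => ∑ i, W x i • q i with hφ
  have hφc : ContinuousOn φ (interior P) :=
    continuousOn_finsetSum _ fun i _ => (hWc i).smul continuousOn_const
  set F : E → E := fun x => if h : φ x ≠ 0 then η ⟨φ x, h⟩ else 0 with hFdef
  have hFeq : ∀ x (h : φ x ≠ 0), F x = η ⟨φ x, h⟩ := fun x h => dif_pos h
  have hFc : ContinuousOn F (interior P) := by
    rw [continuousOn_iff_continuous_domRestrict]
    have h1 : Continuous fun x : interior P => (⟨φ x, hcon x x.2⟩ : {v : E // v ≠ 0}) :=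
      (continuousOn_iff_continuous_domRestrict.1 hφc).subtype_mk _
    convert η.continuous.comp h1 using 1
    funext x
    exact hFeq x (hcon x x.2)
  have hFne : ∀ x ∈ interior P, F x ≠ 0 := fun x hx => by
    rw [hFeq x (hcon x hx)]; exact hη0 _
  have hlev : ∀ k : ℕ, ∃ (y : E) (s : ℝ), gauge P y = 1 - 1 / ((k : ℝ) + 2) ∧ 0 ≤ s ∧ F y = -(s • y) := by
    intro k
    have hk : (0 : ℝ) < (k : ℝ) + 2 := by positivity
    apply level_point hp0 F hFc hFne
    · rw [sub_pos, div_lt_one hk]; linarith [(Nat.cast_nonneg k : (0:ℝ) ≤ k)]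
    · have : 0 < 1 / ((k : ℝ) + 2) := by positivity
      linarith
  choose y s hy hs hFy using hlev
  have hyi : ∀ k, y k ∈ interior P := by
    intro k
    rw [← gauge_lt_one_iff_mem_interior hPc hPn, hy]
    have : 0 < 1 / ((k : ℝ) + 2) := by positivity
    linarith
  have hcomp : IsCompact (P ×ˢ stdSimplex ℝ ι) := (hull_compact' p).prod (isCompact_stdSimplex ℝ ι)
  obtain ⟨⟨x, w⟩, -, σ, hσ, hlim⟩ := hcomp.tendsto_subseq (x := fun k => (y k, W (y k)))
    (fun k => ⟨interior_subset (hyi k), hW0 _ (hyi k), hW1 _ (hyi k)⟩)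
  have hyl : Tendsto (fun k => y (σ k)) atTop (𝓝 x) := (continuous_fst.tendsto _).comp hlim
  have hwl : Tendsto (fun k => W (y (σ k))) atTop (𝓝 w) := (continuous_snd.tendsto _).comp hlim
  have hwi : ∀ i, Tendsto (fun k => W (y (σ k)) i) atTop (𝓝 (w i)) := fun i =>
    ((continuous_apply i).tendsto _).comp hwl
  have hw0 : ∀ i, 0 ≤ w i := fun i => ge_of_tendsto' (hwi i) fun k => hW0 _ (hyi _) i
  have hw1 : ∑ i, w i = 1 := by
    refine tendsto_nhds_unique (tendsto_finsetSum _ fun i _ => hwi i) ?_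
    simp_rw [hW1 _ (hyi _)]
    exact tendsto_const_nhds
  have hwx : ∑ i, w i • p i = x := by
    refine tendsto_nhds_unique (tendsto_finsetSum _ fun i _ => (hwi i).smul_const (p i)) ?_
    simp_rw [hWx _ (hyi _)]
    exact hyl
  have hφl : Tendsto (fun k => φ (y (σ k))) atTop (𝓝 (∑ i, w i • q i)) :=
    tendsto_finsetSum _ fun i _ => (hwi i).smul_const (q i)
  have hγx : gauge P x = 1 := by
    refine tendsto_nhds_unique ((hg.tendsto x).comp hyl) ?_
    have h1 : Tendsto (fun k : ℕ => 1 - 1 / ((k : ℝ) + 2)) atTop (𝓝 (1 - 0)) := by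
      apply Tendsto.sub tendsto_const_nhds
      apply Tendsto.div_atTop tendsto_const_nhds
      exact tendsto_atTop_add_const_right _ _ tendsto_natCast_atTop_atTop
    rw [sub_zero] at h1
    refine (h1.comp hσ.tendsto_atTop).congr fun k => ?_
    simp [hy]
  have hxi : x ∉ interior P := fun h => ((gauge_lt_one_iff_mem_interior hPc hPn).2 h).ne hγx
  obtain ⟨a, hax, haP⟩ := support_fun hPc hp0 hxi
  have hap : ∀ j, a (p j) ≤ 1 := fun j => haP _ (subset_convexHull _ _ (mem_range_self j))
  have hwS : ∀ i, a (p i) ≠ 1 → w i = 0 := by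
    have h1 : ∑ i, w i * (1 - a (p i)) = 0 := by
      have : a x = ∑ i, w i * a (p i) := by
        rw [← hwx, map_sum]; exact Finset.sum_congr rfl fun i _ => by rw [map_smul, smul_eq_mul]
      simp_rw [mul_sub, mul_one]
      rw [Finset.sum_sub_distrib, hw1, ← this, hax, sub_self]
    have h2 := (Finset.sum_eq_zero_iff_of_nonneg
      (fun i _ => mul_nonneg (hw0 i) (sub_nonneg.2 (hap i)))).1 h1
    intro i hi
    rcases mul_eq_zero.1 (h2 i (Finset.mem_univ i)) with h | h
    · exact h
    · exact absurd (by linarith) hi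
  set v := ∑ i, w i • q i with hv
  have hvm : v ∈ convexHull ℝ (q '' {j | a (p j) = 1}) :=
    (mem_hull_iff _ _ _).2 ⟨w, hw0, fun j hj => hwS j hj, hw1, rfl⟩
  have hvi := face_proper (interior_subset hp0) hVq (H1 a hap) hvm
  have hv0 : v ≠ 0 := by
    intro h; rw [h] at hvi; exact hvi hq0
  have hvQ : v ∈ convexHull ℝ (range q) := (H1 a hap).subset hvm
  have hγv : gauge (convexHull ℝ (range q)) v = 1 := by
    apply le_antisymm (gauge_le_one_of_mem hvQ)
    by_contra h
    push Not at h
    exact hvi ((gauge_lt_one_iff_mem_interior (convex_convexHull ℝ _)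
      (mem_interior_iff_mem_nhds.1 hq0)).1 h)
  have hpos : 0 < a (η ⟨v, hv0⟩) := hη ⟨v, hv0⟩ a hap (by simp only [hγv, inv_one, one_smul]; exact hvm)
  have hFl : Tendsto (fun k => a (F (y (σ k)))) atTop (𝓝 (a (η ⟨v, hv0⟩))) := by
    have h1 : Tendsto (fun k => (⟨φ (y (σ k)), hcon _ (hyi _)⟩ : {v : E // v ≠ 0})) atTop
        (𝓝 ⟨v, hv0⟩) := by
      rw [tendsto_subtype_rng]; exact hφl
    have h2 := ((a.continuous.comp η.continuous).tendsto _).comp h1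
    refine h2.congr fun k => ?_
    simp only [Function.comp]
    rw [hFeq _ (hcon _ (hyi _))]
  have hay : Tendsto (fun k => a (y (σ k))) atTop (𝓝 1) := by
    rw [← hax]; exact (a.continuous.tendsto _).comp hyl
  have hle : a (η ⟨v, hv0⟩) ≤ 0 := by
    refine le_of_tendsto hFl ?_
    filter_upwards [hay.eventually (lt_mem_nhds zero_lt_one)] with k hk
    rw [hFy, map_neg, map_smul, smul_eq_mul]
    have := mul_nonneg (hs (σ k)) hk.le
    linarith
  linarith
end Topo2

end ModuleTopo2

section ModuleDim
open Set Filter Topology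
set_option linter.unusedSectionVars false

universe u v

section Dim
variable {E : Type u} [NormedAddCommGroup E] [InnerProductSpace ℝ E]
  {ι : Type v} [Fintype ι] [FiniteDimensional ℝ E]

theorem extreme_aff {K C : Set E} (h : IsExtreme ℝ K C) (hC : Convex ℝ C) (hn : C.Nonempty) {y : E}
    (hyK : y ∈ K) (hy : y ∈ affineSpan ℝ C) : y ∈ C := by
  obtain ⟨x, hx⟩ := hn.intrinsicInterior hC
  obtain ⟨x', hx', rfl⟩ := mem_intrinsicInterior.1 hx
  have hxC : (x' : E) ∈ C := intrinsicInterior_subset hx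
  let γ : ℝ → affineSpan ℝ C := fun t =>
    ⟨AffineMap.lineMap (x' : E) y (-t), AffineMap.lineMap_mem _ x'.2 hy⟩
  have hγ : Continuous γ := by
    apply Continuous.subtype_mk
    simp only [AffineMap.lineMap_apply]
    fun_prop
  have hγ0 : γ 0 = x' := by
    apply Subtype.ext
    simp [γ]
  have h1 : ∀ᶠ t in 𝓝 (0 : ℝ), γ t ∈ interior ((↑) ⁻¹' C : Set (affineSpan ℝ C)) :=
    hγ.continuousAt.eventually (by rw [hγ0]; exact isOpen_interior.mem_nhds hx')
  have h2 : ∀ᶠ t in 𝓝[>] (0 : ℝ), γ t ∈ interior ((↑) ⁻¹' C : Set (affineSpan ℝ C)) :=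
    h1.filter_mono nhdsWithin_le_nhds
  obtain ⟨t, ht, ht0⟩ := (h2.and self_mem_nhdsWithin).exists
  have htC : AffineMap.lineMap (x' : E) y (-t) ∈ C := (interior_subset ht : _)
  have ht0 : 0 < t := ht0
  refine h.left_mem_of_mem_openSegment hyK (h.subset htC) hxC
    ⟨t / (1 + t), 1 / (1 + t), by positivity, by positivity, by field_simp; ring, ?_⟩
  have hne : 1 + t ≠ 0 := by positivity
  have e2 : (1 / (1 + t)) + t / (1 + t) = 1 := by field_simp
  have e1 : 1 / (1 + t) * t = t / (1 + t) := by ring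
  rw [AffineMap.lineMap_apply, vsub_eq_sub, vadd_eq_add]
  calc _ = ((1 / (1 + t)) + 1 / (1 + t) * t) • (x' : E) + (t / (1 + t) - 1 / (1 + t) * t) • y := by module
    _ = x' := by rw [e1, e2, sub_self, one_smul, zero_smul, add_zero]

theorem face_extreme_on (q : ι → E) (T : Set ι) (a : E →L[ℝ] ℝ) (c : ℝ) (h : ∀ j ∈ T, a (q j) ≤ c) :
    IsExtreme ℝ (convexHull ℝ (q '' T)) (convexHull ℝ (q '' {j | j ∈ T ∧ a (q j) = c})) := by
  classical
  have := face_extreme (p := fun i : T => q i) (a := a) (c := c) (fun j => h j j.2)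
  have e1 : range (fun i : T => q i) = q '' T := by ext; simp
  have e2 : (fun i : T => q i) '' {j | a (q j) = c} = q '' {j | j ∈ T ∧ a (q j) = c} := by
    ext x; simp only [mem_image, Subtype.exists]
    constructor
    · rintro ⟨i, hi, h1, h2⟩; exact ⟨i, ⟨hi, h1⟩, h2⟩
    · rintro ⟨i, ⟨hi, h1⟩, h2⟩; exact ⟨i, hi, h1, h2⟩
  rwa [e1, e2] at this

/-- existence of a facet -/
theorem exists_facet (q : ι → E) (hq : Function.Injective q) (T : Set ι) (hT : T.Nontrivial) :
    ∃ S, S ⊆ T ∧ S ≠ T ∧ S.Nonempty ∧ IsExtreme ℝ (convexHull ℝ (q '' T)) (convexHull ℝ (q '' S)) ∧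
      Module.finrank ℝ (vectorSpan ℝ (q '' T)) ≤ Module.finrank ℝ (vectorSpan ℝ (q '' S)) + 1 := by
  classical
  let good : Set ι → Prop := fun S => S.Nonempty ∧ S ≠ T ∧ ∃ (a : E →L[ℝ] ℝ) (c : ℝ), (∀ j ∈ T, a (q j) ≤ c) ∧
    S = {j | j ∈ T ∧ a (q j) = c}
  have hex : ∃ S, good S := by
    obtain ⟨i, hi, j, hj, hij⟩ := hT
    obtain ⟨m, hm, hmax⟩ := T.toFinite.exists_maximalFor (fun l => innerSL ℝ (q i - q j) (q l)) T ⟨i, hi⟩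
    have hmax' : ∀ l ∈ T, innerSL ℝ (q i - q j) (q l) ≤ innerSL ℝ (q i - q j) (q m) := fun l hl => by
      rcases le_total (innerSL ℝ (q i - q j) (q l)) (innerSL ℝ (q i - q j) (q m)) with h | h
      · exact h
      · exact hmax hl h
    refine ⟨{l | l ∈ T ∧ innerSL ℝ (q i - q j) (q l) = innerSL ℝ (q i - q j) (q m)}, ⟨m, hm, rfl⟩, ?_,
      innerSL ℝ (q i - q j), innerSL ℝ (q i - q j) (q m), hmax', rfl⟩
    intro h
    have h1 : i ∈ {l | l ∈ T ∧ innerSL ℝ (q i - q j) (q l) = innerSL ℝ (q i - q j) (q m)} := by rw [h]; exact hi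
    have h2 : j ∈ {l | l ∈ T ∧ innerSL ℝ (q i - q j) (q l) = innerSL ℝ (q i - q j) (q m)} := by rw [h]; exact hj
    have h3 := h1.2.trans h2.2.symm
    rw [← sub_eq_zero, ← map_sub, innerSL_apply_apply, inner_self_eq_zero, sub_eq_zero] at h3
    exact hij (hq h3)
  obtain ⟨S, hS, hmax⟩ := (toFinite {S | good S}).exists_maximal hex
  obtain ⟨hSn, hST, a, c, hac, hSeq⟩ := hS
  have hsub : S ⊆ T := by rw [hSeq]; exact fun j hj => hj.1
  refine ⟨S, hsub, hST, hSn, by rw [hSeq]; exact face_extreme_on q T a c hac, ?_⟩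
  by_contra hlt
  push Not at hlt
  set U := vectorSpan ℝ (q '' S) with hU
  set V := vectorSpan ℝ (q '' T) with hV
  -- a vector in V ∩ ker a not in U
  obtain ⟨v, hvV, hav, hvU⟩ : ∃ v ∈ V, a v = 0 ∧ v ∉ U := by
    by_contra hno
    push Not at hno
    have h1 : LinearMap.ker ((a : E →ₗ[ℝ] ℝ).domRestrict V) ≤ U.comap V.subtype := by
      intro w hw
      exact hno w w.2 hw
    have h2 := LinearMap.finrank_range_add_finrank_ker ((a : E →ₗ[ℝ] ℝ).domRestrict V)
    have h3 : Module.finrank ℝ (LinearMap.range ((a : E →ₗ[ℝ] ℝ).domRestrict V)) ≤ 1 := by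
      simpa using Submodule.finrank_le (LinearMap.range ((a : E →ₗ[ℝ] ℝ).domRestrict V))
    have h4 := Submodule.finrank_mono h1
    have h5 : Module.finrank ℝ (U.comap V.subtype) ≤ Module.finrank ℝ U := by
      have : Module.finrank ℝ (U.comap V.subtype) = Module.finrank ℝ ((U.comap V.subtype).map V.subtype) :=
        (Submodule.equivMapOfInjective V.subtype V.injective_subtype _).finrank_eq
      rw [this]
      exact Submodule.finrank_mono (Submodule.map_comap_le _ _)
    omega
  obtain ⟨b, hbv, hbU⟩ : ∃ b : E →L[ℝ] ℝ, b v ≠ 0 ∧ ∀ w ∈ U, b w = 0 := by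
    obtain ⟨f, hf, hfU⟩ := Submodule.exists_le_ker_of_notMem hvU
    exact ⟨LinearMap.toContinuousLinearMap f, hf, fun w hw => hfU hw⟩
  obtain ⟨i0, hi0⟩ := hSn
  have hbS : ∀ i ∈ S, b (q i) = b (q i0) := by
    intro i hi
    have := hbU _ (vsub_mem_vectorSpan ℝ (mem_image_of_mem q hi) (mem_image_of_mem q hi0))
    rw [vsub_eq_sub, map_sub] at this; linarith
  have haS : ∀ i ∈ S, a (q i) = c := fun i hi => by rw [hSeq] at hi; exact hi.2
  have haS' : ∀ i ∈ T \ S, 0 < c - a (q i) := by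
    intro i hi
    have h1 := hac i hi.1
    rcases h1.eq_or_lt with h | h
    · exact absurd (by rw [hSeq]; exact ⟨hi.1, h⟩) hi.2
    · linarith
  have hne : (T \ S).Nonempty := by
    rw [sdiff_nonempty]; exact fun h => hST (subset_antisymm hsub h)
  obtain ⟨m, hm, hmmax⟩ := (T \ S).toFinite.exists_maximalFor
    (fun i => (b (q i) - b (q i0)) / (c - a (q i))) _ hne
  set L := (b (q m) - b (q i0)) / (c - a (q m)) with hL
  have hLm : ∀ i ∈ T \ S, (b (q i) - b (q i0)) / (c - a (q i)) ≤ L := fun i hi => by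
    rcases le_total ((b (q i) - b (q i0)) / (c - a (q i))) L with h | h
    · exact h
    · exact hmmax hi h
  -- new functional b + L a ≤ b(q i0) + L c
  have hval : ∀ i, (b + L • a) (q i) = b (q i) + L * a (q i) := fun i => by simp
  have hnew : ∀ i ∈ T, (b + L • a) (q i) ≤ b (q i0) + L * c := by
    intro i hi
    rw [hval]
    by_cases hiS : i ∈ S
    · rw [hbS i hiS, haS i hiS]
    · have h1 := hLm i ⟨hi, hiS⟩
      rw [div_le_iff₀ (haS' i ⟨hi, hiS⟩)] at h1
      linarith
  have hgood : good {j | j ∈ T ∧ (b + L • a) (q j) = b (q i0) + L * c} := by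
    refine ⟨⟨i0, hsub hi0, by rw [hval, haS i0 hi0]⟩, ?_, b + L • a, _, hnew, rfl⟩
    intro heq
    have hall : ∀ j ∈ T, (b + L • a) (q j) = b (q i0) + L * c := fun j hj => by
      rw [← heq] at hj; exact hj.2
    have hVz : V ≤ LinearMap.ker ((b + L • a : E →L[ℝ] ℝ) : E →ₗ[ℝ] ℝ) := by
      rw [hV, vectorSpan_def, Submodule.span_le]
      rintro w ⟨_, ⟨i, hi, rfl⟩, _, ⟨j, hj, rfl⟩, rfl⟩
      have : (b + L • a) (q i - q j) = 0 := by rw [map_sub, hall i hi, hall j hj, sub_self]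
      exact this
    have h1 : (b + L • a) v = 0 := hVz hvV
    simp [hav] at h1
    exact hbv h1
  have hle : S ⊆ {j | j ∈ T ∧ (b + L • a) (q j) = b (q i0) + L * c} := by
    intro i hi
    exact ⟨hsub hi, by rw [hval, hbS i hi, haS i hi]⟩
  have hmm : m ∈ {j | j ∈ T ∧ (b + L • a) (q j) = b (q i0) + L * c} := by
    refine ⟨hm.1, ?_⟩
    rw [hval]
    have := haS' m hm
    have h2 : L * (c - a (q m)) = b (q m) - b (q i0) := div_mul_cancel₀ _ this.ne'
    linarith
  exact hm.2 (hmax hgood hle hmm)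

theorem dim_le {p q : ι → E} (hqinj : Function.Injective q)
    (hVp : ∀ i, p i ∉ convexHull ℝ (p '' {i}ᶜ))
    (hcomb : ∀ S : Set ι, IsExtreme ℝ (convexHull ℝ (range p)) (convexHull ℝ (p '' S)) ↔
      IsExtreme ℝ (convexHull ℝ (range q)) (convexHull ℝ (q '' S))) :
    ∀ k : ℕ, ∀ T : Set ι, T.ncard = k → IsExtreme ℝ (convexHull ℝ (range q)) (convexHull ℝ (q '' T)) →
      Module.finrank ℝ (vectorSpan ℝ (q '' T)) ≤ Module.finrank ℝ (vectorSpan ℝ (p '' T)) := by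
  intro k
  induction k using Nat.strong_induction_on with
  | _ k ih =>
    intro T hk hT
    by_cases hnt : T.Nontrivial
    · obtain ⟨S, hST, hne, hSn, hext, hle⟩ := exists_facet q hqinj T hnt
      have hSq := hT.trans hext
      have h1 := ih S.ncard (by rw [← hk]; exact ncard_lt_ncard (hST.ssubset_of_ne hne)) S rfl hSq
      have hSp := (hcomb S).2 hSq
      have hlt : vectorSpan ℝ (p '' S) < vectorSpan ℝ (p '' T) := by
        refine lt_of_le_of_ne (vectorSpan_mono ℝ (image_mono hST)) ?_
        intro heq
        obtain ⟨i0, hi0⟩ := hSn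
        apply hne
        refine subset_antisymm hST fun j hj => ?_
        apply sub_of_vert_mem hVp
        refine extreme_aff hSp (convex_convexHull ℝ _) ⟨p i0, subset_convexHull _ _ (mem_image_of_mem p hi0)⟩
          (subset_convexHull _ _ (mem_range_self j)) ?_
        rw [affineSpan_convexHull]
        have hi : p i0 ∈ affineSpan ℝ (p '' S) := subset_affineSpan ℝ _ (mem_image_of_mem p hi0)
        rw [← AffineSubspace.vsub_right_mem_direction_iff_mem hi, direction_affineSpan, heq]
        exact vsub_mem_vectorSpan ℝ (mem_image_of_mem p hj) (mem_image_of_mem p (hST hi0))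
      have := Submodule.finrank_lt_finrank_of_lt hlt
      omega
    · have : (q '' T).Subsingleton := (not_nontrivial_iff.1 hnt).image q
      rw [vectorSpan_of_subsingleton ℝ this]
      simp

theorem interior_nonempty {p q : ι → E} (hqinj : Function.Injective q)
    (hVp : ∀ i, p i ∉ convexHull ℝ (p '' {i}ᶜ))
    (hcomb : ∀ S : Set ι, IsExtreme ℝ (convexHull ℝ (range p)) (convexHull ℝ (p '' S)) ↔
      IsExtreme ℝ (convexHull ℝ (range q)) (convexHull ℝ (q '' S)))
    (hq : (interior (convexHull ℝ (range q))).Nonempty) :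
    (interior (convexHull ℝ (range p))).Nonempty := by
  rw [interior_convexHull_nonempty_iff_affineSpan_eq_top] at hq ⊢
  have hne : (range q).Nonempty := by
    by_contra h
    rw [not_nonempty_iff_eq_empty] at h
    rw [h, AffineSubspace.span_empty] at hq
    exact AffineSubspace.bot_ne_top ℝ E E hq
  have hne' : (range p).Nonempty := by
    rw [range_nonempty_iff_nonempty] at hne ⊢; exact hne
  rw [AffineSubspace.affineSpan_eq_top_iff_vectorSpan_eq_top_of_nonempty ℝ E E hne] at hq
  rw [AffineSubspace.affineSpan_eq_top_iff_vectorSpan_eq_top_of_nonempty ℝ E E hne']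
  have h1 := dim_le hqinj hVp hcomb _ univ rfl (by rw [image_univ])
  rw [image_univ, image_univ, hq, finrank_top] at h1
  exact Submodule.eq_top_of_finrank_eq (le_antisymm (Submodule.finrank_le _) h1)
end Dim

end ModuleDim

section ModuleMain1
open MeasureTheory Set Filter Topology
set_option linter.unusedSectionVars false

universe u v

section Main1
variable {E : Type u} [NormedAddCommGroup E] [InnerProductSpace ℝ E] {ι : Type v} [Fintype ι]
  [DecidableEq ι] [FiniteDimensional ℝ E] [MeasurableSpace E] [BorelSpace E] [Nontrivial E]
  (μ : Measure E) [μ.IsAddHaarMeasure]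

theorem mem_hull_trans (p : ι → E) (x0 v : E) :
    v ∈ convexHull ℝ (range fun i => p i - x0) ↔ v + x0 ∈ convexHull ℝ (range p) := by
  rw [mem_hull_range_iff, mem_hull_range_iff]
  refine exists_congr fun w => and_congr_right fun _ => and_congr_right fun h1 => ?_
  simp_rw [smul_sub]
  rw [Finset.sum_sub_distrib, ← Finset.sum_smul, h1, one_smul, sub_eq_iff_eq_add]

theorem mem_int_trans (p : ι → E) (x0 v : E) :
    v ∈ interior (convexHull ℝ (range fun i => p i - x0)) ↔ v + x0 ∈ interior (convexHull ℝ (range p)) := by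
  have h1 : convexHull ℝ (range fun i => p i - x0) = (Homeomorph.addRight x0) ⁻¹' (convexHull ℝ (range p)) := by
    ext v; exact mem_hull_trans p x0 v
  rw [h1, ← Homeomorph.preimage_interior]
  rfl

theorem exists_balance {p q : ι → E} (hqinj : Function.Injective q)
    (hVp : ∀ i, p i ∉ convexHull ℝ (p '' {i}ᶜ))
    (hVq : ∀ i, q i ∉ convexHull ℝ (q '' {i}ᶜ))
    (hcomb : ∀ S : Set ι, IsExtreme ℝ (convexHull ℝ (range p)) (convexHull ℝ (p '' S)) ↔
      IsExtreme ℝ (convexHull ℝ (range q)) (convexHull ℝ (q '' S)))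
    (hq0 : (0 : E) ∈ interior (convexHull ℝ (range q))) :
    ∃ x ∈ interior (convexHull ℝ (range p)), ∑ i, alpha μ (Lf p x) i 1 • q i = 0 := by
  obtain ⟨x0, hx0⟩ := interior_nonempty hqinj hVp hcomb ⟨0, hq0⟩
  obtain ⟨hWc, hW0, hW1, hWx⟩ := Wt_spec μ hVp
  set p' : ι → E := fun i => p i - x0 with hp'
  have hInt : ∀ v, v ∈ interior (convexHull ℝ (range p')) ↔ v + x0 ∈ interior (convexHull ℝ (range p)) :=
    mem_int_trans p x0
  have hap : ∀ (a : E →L[ℝ] ℝ) j, a (p' j) = a (p j) - a x0 := fun a j => map_sub a _ _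
  obtain ⟨x, hx, hxq⟩ := topo (p := p') (q := q) ((hInt 0).2 (by rwa [zero_add])) hq0 hVq
    (fun a ha => by
      have h1 : ∀ j, a (p j) ≤ 1 + a x0 := fun j => by
        have := ha j; rw [hap] at this; linarith
      have h2 : {j | a (p' j) = 1} = {j | a (p j) = 1 + a x0} := by
        ext j; simp only [mem_ofPred_eq, hap]
        exact sub_eq_iff_eq_add
      rw [h2, ← hcomb]
      exact face_extreme h1)
    (fun b hb => by
      have hext := (hcomb _).2 (face_extreme hb)
      have hdis : Disjoint (interior (convexHull ℝ (range p))) (convexHull ℝ (p '' {j | b (q j) = 1})) := by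
        rw [disjoint_left]
        intro v hv hv'
        exact face_proper (interior_subset hq0) hVp hext hv' hv
      obtain ⟨f, c, hf, hf'⟩ := geometric_hahn_banach_open (convex_convexHull ℝ _).interior isOpen_interior
        (convex_convexHull ℝ _) hdis
      have hpos : 0 < c - f x0 := by linarith [hf x0 hx0]
      have hcl : ∀ j, f (p j) ≤ c := by
        intro j
        have h1 : p j ∈ closure (interior (convexHull ℝ (range p))) := by
          rw [(convex_convexHull ℝ _).closure_interior_eq_closure_of_nonempty_interior ⟨x0, hx0⟩]
          exact subset_closure (subset_convexHull _ _ (mem_range_self j))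
        have h2 : closure (interior (convexHull ℝ (range p))) ⊆ {v | f v ≤ c} :=
          closure_minimal (fun a ha => (hf a ha).le) (isClosed_le f.continuous continuous_const)
        exact h2 h1
      refine ⟨(c - f x0)⁻¹ • f, fun j => ?_, fun j hj => ?_⟩
      · rw [smul_apply, smul_eq_mul, inv_mul_le_iff₀ hpos, hap]
        linarith [hcl j]
      · have h3 := hf' _ (subset_convexHull _ _ (mem_image_of_mem p hj))
        have h4 : f (p j) = c := le_antisymm (hcl j) h3
        rw [smul_apply, smul_eq_mul, hap, h4, inv_mul_cancel₀ hpos.ne'])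
    (fun x => Wt μ p (x + x0))
    (fun i => (hWc i).comp (by fun_prop) (fun x hx => (hInt x).1 hx))
    (fun x hx => hW0 _ ((hInt x).1 hx)) (fun x hx => hW1 _ ((hInt x).1 hx))
    (fun x hx => by
      have h1 := hWx _ ((hInt x).1 hx)
      have h2 := hW1 _ ((hInt x).1 hx)
      simp only [hp', smul_sub]
      rw [Finset.sum_sub_distrib, h1, ← Finset.sum_smul, h2, one_smul, add_sub_cancel_right])
  exact ⟨x + x0, (hInt x).1 hx, Wt_zero μ hVp ((hInt x).1 hx) hxq⟩

end Main1

end ModuleMain1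

section ModuleMain2
open MeasureTheory Set Filter Topology
set_option linter.unusedSectionVars false

universe u v

section Main2
variable {E : Type u} [NormedAddCommGroup E] [InnerProductSpace ℝ E] {ι : Type v} [Fintype ι]
  [DecidableEq ι] [FiniteDimensional ℝ E]

theorem quad_id {m : ι → ι → ℝ} (hs : ∀ i j, m i j = m j i) {s : ι → ℝ} (hr : ∀ i, ∑ j, m i j = s i)
    (r : ι → E) : ∑ i, ∑ j, m i j * ‖r i - r j‖ ^ 2 =
      2 * ∑ i, s i * ‖r i‖ ^ 2 - 2 * ∑ i, ∑ j, m i j * inner ℝ (r i) (r j) := by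
  have h1 : ∑ i, ∑ j, m i j * ‖r i‖ ^ 2 = ∑ i, s i * ‖r i‖ ^ 2 := by
    refine Finset.sum_congr rfl fun i _ => ?_
    rw [← Finset.sum_mul, hr]
  have h2 : ∑ i, ∑ j, m i j * ‖r j‖ ^ 2 = ∑ i, s i * ‖r i‖ ^ 2 := by
    rw [Finset.sum_comm, ← h1]
    refine Finset.sum_congr rfl fun i _ => Finset.sum_congr rfl fun j _ => ?_
    rw [hs]
  have h3 : ∑ i, ∑ j, m i j * ‖r i - r j‖ ^ 2 = ∑ i, ∑ j, (m i j * ‖r i‖ ^ 2 + m i j * ‖r j‖ ^ 2 -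
      2 * (m i j * inner ℝ (r i) (r j))) := by
    refine Finset.sum_congr rfl fun i _ => Finset.sum_congr rfl fun j _ => ?_
    rw [norm_sub_sq_real]; ring
  rw [h3]
  simp only [Finset.sum_sub_distrib, Finset.sum_add_distrib, ← Finset.mul_sum]
  rw [h1, h2]; ring

variable [MeasurableSpace E] [BorelSpace E] [Nontrivial E]
  (μ : Measure E) [μ.IsAddHaarMeasure]

/-- From the balanced point: equality everywhere -/
theorem rigid_eq {p q : ι → E} (hd : 2 ≤ Module.finrank ℝ E)
    (hVp : ∀ i, p i ∉ convexHull ℝ (p '' {i}ᶜ))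
    (h1 : ∀ i j, i ≠ j → IsExtreme ℝ (convexHull ℝ (range p)) (segment ℝ (p i) (p j)) →
      ‖q i - q j‖ ≤ ‖p i - p j‖)
    (h2 : ∀ i, ‖p i‖ ≤ ‖q i‖) {x : E} (hx : x ∈ interior (convexHull ℝ (range p)))
    (hbal : ∑ i, alpha μ (Lf p x) i 1 • q i = 0) :
    x = 0 ∧ (∀ i, ‖p i‖ = ‖q i‖) ∧
    (∀ i j, 0 < beta μ (Lf p x) i j 1 → ‖q i - q j‖ = ‖p i - p j‖) ∧
    ∃ T : E →ₗ[ℝ] E, ∀ i, T (p i - x) = q i := by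
  have H := Lf_PS hx
  have EEl := Lf_EE hVp hx
  have H2 := G2_of_EE EEl
  set ℓ := Lf p x with hℓ
  set α : ι → ℝ := fun i => alpha μ ℓ i 1 with hα
  set m : ι → ι → ℝ := fun i j => Mm μ ℓ i j 1 with hm
  have hαp : ∀ i, 0 < α i := fun i => alpha_pos' μ hVp hx i
  have hsym : ∀ i j, m i j = m j i := fun i j => Mm_symm μ H H2 i j
  set D : ℝ := (Module.finrank ℝ E : ℝ) - 1 with hD
  have hDp : 0 < D := by
    have : (2 : ℝ) ≤ Module.finrank ℝ E := by exact_mod_cast hd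
    linarith
  have hrow : ∀ i, ∑ j, m i j = D * α i := fun i => by
    have := M_H μ H H2 i
    simpa using this
  have hV : 0 < Vol μ ℓ 1 := Vol_pos μ H ⟨0, fun j => by simp⟩
  -- the form vanishes on p - x
  have hNp : ∑ i, ∑ j, m i j * inner ℝ (p i - x) (p j - x) = 0 := by
    refine Finset.sum_eq_zero fun i _ => ?_
    have := M_T μ H H2 (p i - x) i
    rw [← this]
    refine Finset.sum_congr rfl fun j _ => ?_
    rw [hℓ, Lf_apply, real_inner_comm]
  -- the form on q coordinates
  set b := stdOrthonormalBasis ℝ E with hb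
  set k : Fin (Module.finrank ℝ E) → ι → ℝ := fun c i => inner ℝ (q i) (b c) with hk
  have hkα : ∀ c, ∑ i, α i * k c i = 0 := by
    intro c
    have := congrArg (fun v => inner ℝ v (b c)) hbal
    simp only [sum_inner, inner_zero_left, real_inner_smul_left] at this
    exact this
  have hNc : ∀ c, ∑ i, (∑ j, m i j * k c j) * k c i ≤ 0 := by
    intro c
    have := M_le μ H H2 (k c)
    rw [hkα c] at this
    by_contra hcon
    push Not at hcon
    have := mul_pos hcon hV
    linarith
  have hNq : ∑ i, ∑ j, m i j * inner ℝ (q i) (q j) = ∑ c, ∑ i, (∑ j, m i j * k c j) * k c i := by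
    symm
    rw [Finset.sum_comm]
    refine Finset.sum_congr rfl fun i _ => ?_
    simp_rw [Finset.sum_mul]
    rw [Finset.sum_comm]
    refine Finset.sum_congr rfl fun j _ => ?_
    rw [← b.sum_inner_mul_inner (q i) (q j), Finset.mul_sum]
    refine Finset.sum_congr rfl fun c _ => ?_
    rw [hk]; simp only
    rw [real_inner_comm (q j) (b c)]; ring
  have hqq := quad_id hsym hrow q
  have hpp := quad_id hsym hrow (fun i => p i - x)
  simp only [sub_sub_sub_cancel_right] at hpp
  rw [hNp, mul_zero, sub_zero] at hpp
  rw [hNq] at hqq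
  have hmne : ∀ i j, j ≠ i → m i j = beta μ ℓ i j 1 := fun i j hj => by
    simp only [hm, Mm, if_neg hj]
  have hedge : ∀ i j, 0 < beta μ ℓ i j 1 → ‖q i - q j‖ ≤ ‖p i - p j‖ := by
    intro i j hbp
    obtain ⟨hij, y, hy1, hy2, hy3⟩ := beta_pos_exists μ EEl hbp
    exact h1 i j hij (edge_extreme hy1 hy2 hy3)
  have hterm : ∀ i j, 0 ≤ m i j * (‖p i - p j‖ ^ 2 - ‖q i - q j‖ ^ 2) := by
    intro i j
    by_cases hij : j = i
    · subst hij; simp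
    · rw [hmne i j hij]
      rcases (beta_nonneg μ ℓ i j 1).eq_or_lt with h | h
      · rw [← h, zero_mul]
      · apply mul_nonneg h.le
        have := hedge i j h
        have h0 := norm_nonneg (q i - q j)
        nlinarith
  have hdiff : 0 ≤ ∑ i, ∑ j, m i j * (‖p i - p j‖ ^ 2 - ‖q i - q j‖ ^ 2) :=
    Finset.sum_nonneg fun i _ => Finset.sum_nonneg fun j _ => hterm i j
  have hdiff_eq : ∑ i, ∑ j, m i j * (‖p i - p j‖ ^ 2 - ‖q i - q j‖ ^ 2) =
      ∑ i, ∑ j, m i j * ‖p i - p j‖ ^ 2 - ∑ i, ∑ j, m i j * ‖q i - q j‖ ^ 2 := by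
    simp only [mul_sub, Finset.sum_sub_distrib]
  set A := ∑ i, α i with hA
  have hAp : 0 < A := sum_alpha_pos μ hVp hx
  have hpx : ∑ i, D * α i * ‖p i - x‖ ^ 2 = D * (∑ i, α i * ‖p i‖ ^ 2) - D * A * ‖x‖ ^ 2 := by
    have hsx : ∑ i, α i * inner ℝ (p i) x = A * ‖x‖ ^ 2 := by
      have := congrArg (fun v => inner ℝ v x) (alpha_sub μ hVp hx)
      simp only [sum_inner, real_inner_smul_left, real_inner_self_eq_norm_sq] at this
      exact this
    have : ∀ i, D * α i * ‖p i - x‖ ^ 2 = D * (α i * ‖p i‖ ^ 2) - 2 * D * (α i * inner ℝ (p i) x) +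
        D * ‖x‖ ^ 2 * α i := fun i => by rw [norm_sub_sq_real]; ring
    simp_rw [this]
    rw [Finset.sum_add_distrib, Finset.sum_sub_distrib, ← Finset.mul_sum, ← Finset.mul_sum, ← Finset.mul_sum,
      hsx, ← hA]
    ring
  have hqD : ∑ i, D * α i * ‖q i‖ ^ 2 = D * ∑ i, α i * ‖q i‖ ^ 2 := by
    rw [Finset.mul_sum]; exact Finset.sum_congr rfl fun i _ => by ring
  have hterm2 : ∀ i, 0 ≤ α i * (‖q i‖ ^ 2 - ‖p i‖ ^ 2) := fun i => by
    apply mul_nonneg (hαp i).le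
    have := h2 i
    have := norm_nonneg (p i)
    nlinarith
  have hd2 : 0 ≤ ∑ i, α i * (‖q i‖ ^ 2 - ‖p i‖ ^ 2) := Finset.sum_nonneg fun i _ => hterm2 i
  have hd2_eq : ∑ i, α i * (‖q i‖ ^ 2 - ‖p i‖ ^ 2) = ∑ i, α i * ‖q i‖ ^ 2 - ∑ i, α i * ‖p i‖ ^ 2 := by
    simp only [mul_sub, Finset.sum_sub_distrib]
  have hN0 : ∑ c, ∑ i, (∑ j, m i j * k c j) * k c i ≤ 0 := Finset.sum_nonpos fun c _ => hNc c
  set N := ∑ c, ∑ i, (∑ j, m i j * k c j) * k c i with hN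
  rw [hpx] at hpp
  rw [hqD] at hqq
  have hDx : 0 ≤ D * A * ‖x‖ ^ 2 := by positivity
  set SP := ∑ i, α i * ‖p i‖ ^ 2 with hSP
  set SQ := ∑ i, α i * ‖q i‖ ^ 2 with hSQ
  rw [hdiff_eq, hpp, hqq] at hdiff
  rw [hd2_eq] at hd2
  have hDd : 0 ≤ D * (SQ - SP) := mul_nonneg hDp.le hd2
  have hDd' : D * (SQ - SP) = D * SQ - D * SP := by ring
  have eN : N = 0 := by linarith
  have ex : D * A * ‖x‖ ^ 2 = 0 := by linarith
  have eD : D * (SQ - SP) = 0 := by linarith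
  have eM : ∑ i, ∑ j, m i j * (‖p i - p j‖ ^ 2 - ‖q i - q j‖ ^ 2) = 0 := by
    rw [hdiff_eq, hpp, hqq]; linarith
  have hx0 : x = 0 := by
    have := (mul_eq_zero.1 ex).resolve_left (by positivity)
    simpa using this
  refine ⟨hx0, ?_, ?_, ?_⟩
  · intro i
    have e1 : SQ - SP = 0 := (mul_eq_zero.1 eD).resolve_left hDp.ne'
    rw [← hd2_eq] at e1
    have := (Finset.sum_eq_zero_iff_of_nonneg fun i _ => hterm2 i).1 e1 i (Finset.mem_univ i)
    have := (mul_eq_zero.1 this).resolve_left (hαp i).ne'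
    have h3 : ‖p i‖ ^ 2 = ‖q i‖ ^ 2 := by linarith
    exact (pow_left_inj₀ (norm_nonneg _) (norm_nonneg _) two_ne_zero).1 h3
  · intro i j hbp
    obtain ⟨hij, -⟩ := beta_pos_exists μ EEl hbp
    have e1 := (Finset.sum_eq_zero_iff_of_nonneg
      fun i _ => Finset.sum_nonneg fun j _ => hterm i j).1 eM i (Finset.mem_univ i)
    have e2 := (Finset.sum_eq_zero_iff_of_nonneg fun j _ => hterm i j).1 e1 j (Finset.mem_univ j)
    rw [hmne i j hij.symm] at e2
    have e3 := (mul_eq_zero.1 e2).resolve_left hbp.ne'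
    have h3 : ‖q i - q j‖ ^ 2 = ‖p i - p j‖ ^ 2 := by linarith
    exact (pow_left_inj₀ (norm_nonneg _) (norm_nonneg _) two_ne_zero).1 h3
  · have hz : ∀ c, ∃ z, ∀ i, k c i = ℓ i z := by
      intro c
      have e1 := (Finset.sum_eq_zero_iff_of_nonpos fun c _ => hNc c).1 eN c (Finset.mem_univ c)
      exact kernel_lemma μ H EEl H2 (k c) (hkα c) e1
    choose z hz using hz
    refine ⟨∑ c, ((innerSL ℝ (z c) : E →L[ℝ] ℝ) : E →ₗ[ℝ] ℝ).smulRight (b c), fun i => ?_⟩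
    rw [LinearMap.sum_apply]
    have := b.sum_repr' (q i)
    rw [← this]
    refine Finset.sum_congr rfl fun c _ => ?_
    rw [LinearMap.smulRight_apply]
    congr 1
    have h4 := hz c i
    rw [hℓ, Lf_apply] at h4
    simp only [ContinuousLinearMap.coe_coe, innerSL_apply_apply]
    rw [real_inner_comm, ← h4, hk]; simp only
    rw [real_inner_comm]

theorem isometry_of {p q : ι → E} 
    (hVp : ∀ i, p i ∉ convexHull ℝ (p '' {i}ᶜ))
    (hx : (0 : E) ∈ interior (convexHull ℝ (range p)))
    (hn : ∀ i, ‖p i‖ = ‖q i‖)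
    (he : ∀ i j, 0 < beta μ (Lf p 0) i j 1 → ‖q i - q j‖ = ‖p i - p j‖)
    (T : E →ₗ[ℝ] E) (hT : ∀ i, T (p i) = q i) : ∃ T : E ≃ₗᵢ[ℝ] E, ∀ i, T (p i) = q i := by
  have H := Lf_PS hx
  have EEl := Lf_EE hVp hx
  have H2 := G2_of_EE EEl
  have hℓ : ∀ i z, Lf p 0 i z = inner ℝ (p i) z := fun i z => by rw [Lf_apply, sub_zero]
  have hw : ∀ i, LinearMap.adjoint T (T (p i)) - p i = 0 := by
    intro i
    set w := LinearMap.adjoint T (T (p i)) - p i with hwdef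
    have hi : inner ℝ (p i) w = 0 := by
      rw [hwdef, inner_sub_right, LinearMap.adjoint_inner_right, hT, real_inner_self_eq_norm_sq,
        real_inner_self_eq_norm_sq, hn, sub_self]
    have hj : ∀ j, 0 < beta μ (Lf p 0) i j 1 → inner ℝ (p j) w = 0 := by
      intro j hj
      have h1 := he i j hj
      have h2 := norm_sub_sq_real (q i) (q j)
      have h3 := norm_sub_sq_real (p i) (p j)
      rw [h1, ← hn i, ← hn j] at h2
      rw [hwdef, inner_sub_right, LinearMap.adjoint_inner_right, hT, hT, real_inner_comm,
        real_inner_comm (p i) (p j)]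
      linarith
    have hne := EEl.ne_zero i
    have hpos := alpha_pos' μ hVp hx i
    unfold alpha at hpos
    rw [if_neg hne] at hpos
    have hmem : w ∈ LinearMap.ker ((Lf p 0 i : E →L[ℝ] ℝ) : E →ₗ[ℝ] ℝ) := by
      rw [LinearMap.mem_ker]; exact (hℓ i w).trans hi
    have := span_lemma (nu μ (Lf p 0 i)) (H.res i) (H2.2 i hne) hpos ⟨w, hmem⟩ (by
      intro j hj'
      rw [res_apply, hℓ]
      apply hj
      unfold beta
      rw [if_neg hne]; exact hj')
    exact congrArg Subtype.val this
  have hall : ∀ z, LinearMap.adjoint T (T z) - z = 0 := by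
    intro z
    apply H
    intro i
    rw [hℓ, inner_sub_right, LinearMap.adjoint_inner_right]
    have := congrArg (fun v => inner ℝ v z) (hw i)
    simp only [inner_sub_left, LinearMap.adjoint_inner_left, inner_zero_left] at this
    exact this.le
  have hnorm : ∀ z, ‖T z‖ = ‖z‖ := by
    intro z
    have h1 : ‖T z‖ ^ 2 = ‖z‖ ^ 2 := by
      rw [← real_inner_self_eq_norm_sq, ← LinearMap.adjoint_inner_left, sub_eq_zero.1 (hall z),
        real_inner_self_eq_norm_sq]
    exact (pow_left_inj₀ (norm_nonneg _) (norm_nonneg _) two_ne_zero).1 h1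
  exact ⟨(⟨T, hnorm⟩ : E →ₗᵢ[ℝ] E).toLinearIsometryEquiv rfl, fun i => hT i⟩

theorem main_high {p q : ι → E} (hd : 2 ≤ Module.finrank ℝ E) (hqinj : Function.Injective q)
    (hVp : ∀ i, p i ∉ convexHull ℝ (p '' {i}ᶜ))
    (hVq : ∀ i, q i ∉ convexHull ℝ (q '' {i}ᶜ))
    (hcomb : ∀ S : Set ι, IsExtreme ℝ (convexHull ℝ (range p)) (convexHull ℝ (p '' S)) ↔
      IsExtreme ℝ (convexHull ℝ (range q)) (convexHull ℝ (q '' S)))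
    (hq0 : (0 : E) ∈ interior (convexHull ℝ (range q)))
    (h1 : ∀ i j, i ≠ j → IsExtreme ℝ (convexHull ℝ (range p)) (segment ℝ (p i) (p j)) →
      ‖q i - q j‖ ≤ ‖p i - p j‖)
    (h2 : ∀ i, ‖p i‖ ≤ ‖q i‖) : ∃ T : E ≃ₗᵢ[ℝ] E, ∀ i, T (p i) = q i := by
  obtain ⟨x, hx, hbal⟩ := exists_balance (Measure.addHaar : Measure E) hqinj hVp hVq hcomb hq0
  obtain ⟨rfl, hn, he, T, hT⟩ := rigid_eq _ hd hVp h1 h2 hx hbal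
  exact isometry_of _ hVp hx hn he T fun i => by rw [← hT, sub_zero]

end Main2

end ModuleMain2

section ModuleLow
open Set
set_option linter.unusedSectionVars false

section Low

theorem norm_one_dim (v : EuclideanSpace ℝ (Fin 1)) : ‖v‖ = |v 0| := by
  rw [EuclideanSpace.norm_eq]; simp [Real.sqrt_sq_eq_abs]

theorem seg_one_dim {u v w : EuclideanSpace ℝ (Fin 1)} (h1 : u 0 ≤ v 0) (h2 : v 0 ≤ w 0) :
    v ∈ segment ℝ u w := by
  have : v 0 ∈ segment ℝ (u 0) (w 0) := by rw [segment_eq_Icc (h1.trans h2)]; exact ⟨h1, h2⟩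
  obtain ⟨a, b, ha, hb, hab, h⟩ := this
  refine ⟨a, b, ha, hb, hab, ?_⟩
  ext i
  fin_cases i
  simpa using h

theorem main_one {n : ℕ} {p q : Fin n → EuclideanSpace ℝ (Fin 1)}
    (hVq : ∀ i, q i ∉ convexHull ℝ (q '' {i}ᶜ))
    (hq0 : 0 ∈ interior (convexHull ℝ (range q)))
    (h1 : ∀ i j, i ≠ j → IsExtreme ℝ (convexHull ℝ (range p)) (segment ℝ (p i) (p j)) →
      ‖q i - q j‖ ≤ ‖p i - p j‖)
    (h2 : ∀ i, ‖p i‖ ≤ ‖q i‖) :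
    ∃ T : EuclideanSpace ℝ (Fin 1) ≃ₗᵢ[ℝ] EuclideanSpace ℝ (Fin 1), ∀ i, T (p i) = q i := by
  have hin : ∀ u v : EuclideanSpace ℝ (Fin 1), inner ℝ u v = u 0 * v 0 := by
    intro u v; simp [PiLp.inner_apply, mul_comm]
  have hPS := Lf_PS hq0
  have hex : ∀ c : ℝ, c ≠ 0 → ∃ i, 0 < q i 0 * c := by
    intro c hc
    by_contra hno
    push Not at hno
    have := hPS (EuclideanSpace.single 0 c) (fun i => by
      rw [Lf_apply, sub_zero, hin]; simpa using hno i)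
    have := congrArg (fun v : EuclideanSpace ℝ (Fin 1) => v 0) this
    simp at this
    exact hc this
  obtain ⟨i, hi⟩ := hex 1 one_ne_zero
  obtain ⟨j, hj⟩ := hex (-1) (by norm_num)
  have hi : 0 < q i 0 := by linarith
  have hj : q j 0 < 0 := by linarith
  have hij : i ≠ j := by rintro rfl; linarith
  -- no vertex lies between two others
  have hbet : ∀ a b c : Fin n, a ≠ b → c ≠ b → q a 0 ≤ q b 0 → q b 0 ≤ q c 0 → False := by
    intro a b c hab hcb hl hr
    apply hVq b
    exact (convex_convexHull ℝ _).segment_subset (subset_convexHull _ _ (mem_image_of_mem q hab))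
      (subset_convexHull _ _ (mem_image_of_mem q hcb)) (seg_one_dim hl hr)
  have hall : ∀ l, l = i ∨ l = j := by
    intro l
    by_contra hl
    push Not at hl
    obtain ⟨hli, hlj⟩ := hl
    rcases le_total (q l 0) (q i 0) with h | h
    · rcases le_total (q j 0) (q l 0) with h' | h'
      · exact hbet j l i hlj.symm hli.symm h' h
      · exact hbet l j i hlj hij h' (by linarith)
    · exact hbet j i l hij.symm hli (by linarith) h
  have hrange : range p = {p i, p j} := by
    ext x
    constructor
    · rintro ⟨l, rfl⟩
      rcases hall l with rfl | rfl <;> simp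
    · rintro (rfl | rfl) <;> exact mem_range_self _
  have hext : IsExtreme ℝ (convexHull ℝ (range p)) (segment ℝ (p i) (p j)) := by
    rw [hrange, convexHull_pair]
  have he := h1 i j hij hext
  have hni := h2 i
  have hnj := h2 j
  rw [norm_one_dim, norm_one_dim] at he hni hnj
  simp only [PiLp.sub_apply] at he
  rw [abs_of_pos (by linarith : 0 < q i 0 - q j 0)] at he
  rw [abs_of_pos hi] at hni
  rw [abs_of_neg hj] at hnj
  have hni' := abs_le.1 hni
  have hnj' := abs_le.1 hnj
  rcases le_total 0 (p i 0 - p j 0) with h | h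
  · rw [abs_of_nonneg h] at he
    refine ⟨LinearIsometryEquiv.refl ℝ _, fun l => ?_⟩
    ext c
    fin_cases c
    rcases hall l with rfl | rfl
    · simp; linarith
    · simp; linarith
  · rw [abs_of_nonpos h] at he
    refine ⟨LinearIsometryEquiv.neg ℝ, fun l => ?_⟩
    ext c
    fin_cases c
    rcases hall l with rfl | rfl
    · simp; linarith
    · simp; linarith

end Low

end ModuleLow

theorem comb_equivalent_version {n d : ℕ}
    (p q : Fin n → EuclideanSpace ℝ (Fin d))
    (hpinj : Function.Injective p) (hqinj : Function.Injective q)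
    (hpvert : Set.range p = Set.extremePoints ℝ (convexHull ℝ (Set.range p)))
    (hqvert : Set.range q = Set.extremePoints ℝ (convexHull ℝ (Set.range q)))
    (hcomb : CombEquiv p q)
    (h0 : (0 : EuclideanSpace ℝ (Fin d)) ∈ interior (convexHull ℝ (Set.range q)))
    (h1 : ∀ i j, IsEdge p i j → ‖q i - q j‖ ≤ ‖p i - p j‖)
    (h2 : ∀ i, ‖p i‖ ≤ ‖q i‖) :
    ∃ T : EuclideanSpace ℝ (Fin d) ≃ₗᵢ[ℝ] EuclideanSpace ℝ (Fin d),
      ∀ i, T (p i) = q i := by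
  have hVp := vert_notMem hpinj hpvert
  have hVq := vert_notMem hqinj hqvert
  have h1' : ∀ i j, i ≠ j → IsExtreme ℝ (convexHull ℝ (Set.range p)) (segment ℝ (p i) (p j)) →
      ‖q i - q j‖ ≤ ‖p i - p j‖ := fun i j hij h => h1 i j ⟨hij, h⟩
  match d, p, q, hqinj, hcomb, h0, h2, hVp, hVq, h1' with
  | 0, p, q, _, _, _, _, _, _, _ =>
    exact ⟨LinearIsometryEquiv.refl ℝ _, fun i => Subsingleton.elim _ _⟩
  | 1, p, q, _, _, h0, h2, _, hVq, h1' => exact main_one hVq h0 h1' h2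
  | d + 2, p, q, hqinj, hcomb, h0, h2, hVp, hVq, h1' =>
    exact main_high (by simp) hqinj hVp hVq hcomb h0 h1' h2
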